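/- arXiv:math/9912143 — 3 statements merged into one kernel-verified Lean document; each statement's English description precedes it below -/
import Mathlib

section
/- Let n ≥ 1 and k ≥ 1 be integers and define the complex-valued function τ(x) := E_{U(n)}[ det(I + M)^k · exp( −x · conj(tr M) ) ] for x ∈ ℝ (τ is analytic in x). On the open set where τ(x) ≠ 0 define h(x) := (1/(n+k)) · ( x·τ′(x)/τ(x) − n·x ). Then for every x ≠ 0 such that τ(x) ≠ 0 and h′(x)·(h′(x)+1) ≠ 0, the third-order equation holds: h′′′ − (h′′²/2)·( 1/(h′+1) + 1/h′ ) + h′′/x + (2(n+k)/x)·h′·(h′+1) − (1/(2x²·h′·(h′+1)))·( (x−n)h′ − h − n )·( (2h + x + n)h′ + h + n ) = 0. -/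
/-!
The proof evaluates the integral as an explicit polynomial in `t = -x` and derives the equation from
a Toda chain.

**The integral is a determinant.** Put `N = n + k - 1`. Then
`∫ det (1 + M) ^ k * exp (t * tr Mᴴ)` equals `tauPol N k` at `t`, where `tauPol N k` is the
`k × k` determinant with entries `∑_{m ≤ N} C(m, i) t ^ (m - j) / (m - j)!` (`integral_det_pow`).
To see this without the Weyl integration formula, consider
`P(x₁, …, x_k) = Δ(x) ∫ ∏ᵢ det (1 + xᵢ M) exp (t * tr Mᴴ)`, with `Δ` the Vandermonde
determinant. Differentiating along the left translations `M ↦ exp(sX) M` and using the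
invariance of the measure gives the Schwinger–Dyson equations (`schwinger_dyson`). They say
exactly that the second order operator `opL` annihilates `P` (`integral_coeff_opL`). Read on
coefficients, `opL P = 0` is a recurrence on the total degree which, for an antisymmetric polynomial
of degree at most `N` in each variable, determines everything from the coefficient of
`x₁⁰ x₂¹ ⋯ x_kᵏ⁻¹` (`coeff_unique`). For `P` this coefficient is `∫ exp (t * tr Mᴴ) = 1`. The Slater
determinant of the polynomials `∑_{j ≤ m ≤ N} t ^ (m - j) / (m - j)! xᵐ` satisfies the same
recurrence with the same normalization (`slater_rec`, `slater_delta`), so it equals `P`. The confluent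
limit `xᵢ → 1` of `P / Δ` is taken by pairing the coefficients with products of binomial
coefficients (`det_one_add_pow`).

**The determinant satisfies the equation.** Up to a constant and a power of `t`, `tauPol N k` is the
Hankel determinant of `g_p = θᵖ g₀` (`tauPol_hankel`), where `θ = t d/dt` and `g₀` is the exponential
series truncated at degree `N`. Hence Sylvester's identity for bordered determinants makes the
logarithmic derivatives `y_k = θ log tauPol N k` a Toda chain (`hankel_toda`, `toda_of_hankel`).
The second order linear equation of `g₀` starts an induction along the chain
(`chain_relations`) whose outcome is a second degree and a third order equation for the single
function `y_k` (`chain_odes`, `tauPol_odes`). Substituting `t = -x` and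
`y_k = (n + k) h + n x`, the required identity is a combination of the two (`ode_algebra`).
-/

open MeasureTheory Matrix

noncomputable section

instance (n : ℕ) : MeasurableSpace (Matrix.unitaryGroup (Fin n) ℂ) := borel _

/-! ### Differential equations along a Toda chain -/

section Chain
variable {A : Type*} [CommRing A] [IsDomain A] [Algebra ℂ A]

/-- Three relations between consecutive members of a Toda chain, by induction from the equation
`hbase` for the first one. The inductive step uses the Toda equation of the new member and cancels
its derivative. -/
theorem chain_relations (θ : Derivation ℂ A A) (t : A) (ht : θ t = t) (N : ℕ) (y : ℕ → A)
    (hy0 : y 0 = 0)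
    (htoda : ∀ k, 1 ≤ k → k ≤ N →
      θ (θ (y k)) = θ (y k) * (y (k + 1) + y (k - 1) - 2 * y k + 1))
    (hne : ∀ k, 1 ≤ k → k ≤ N → θ (y k) ≠ 0)
    (hbase : θ (y 1) = y 1 * (t + (N + 1) - y 1) - N * t) (k : ℕ) (hk : k ≤ N) :
    θ (y k) * (y (k + 1) - y (k - 1) - t - (N + 1 - k)) = t * (y k - k * (N + 1 - k)) ∧
    (θ (y k) - k * t) * (θ (y k) + (N + 1 - k) * t) + t * (t + k) * y k =
      θ (y k) * ((y (k + 1) - y k) * (y k - y (k - 1)) + y k) ∧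
    θ (y (k + 1)) + θ (y k) = y k + (y (k + 1) - y k) * (t + (N + 1 - k) - (y (k + 1) - y k))
      - (N - 2 * k) * t := by
  induction k with
  | zero => simp [hy0, hbase]
  | succ k ih =>
    obtain ⟨hA, hB, hC⟩ := ih (by omega)
    have hT' := htoda (k + 1) (by omega) hk
    have hT : θ (θ (y k)) = θ (y k) * (y (k + 1) + y (k - 1) - 2 * y k + 1) := by
      rcases Nat.eq_zero_or_pos k with rfl | h
      · simp [hy0]
      · exact htoda k h (by omega)
    have hne' := hne (k + 1) (by omega) hk
    simp only [Nat.add_sub_cancel] at hT' ⊢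
    have hnat : ∀ m : ℕ, θ (m : A) = 0 := fun m => by simp
    have h1 : θ 1 = 0 := by simp
    have h2 : θ 2 = 0 := by exact_mod_cast hnat 2
    have dC := congrArg θ hC
    simp only [map_add, map_sub, Derivation.leibniz, smul_eq_mul, ht, hnat, h1, h2] at dC
    push_cast
    have hA' : θ (y (k + 1)) * (y (k + 1 + 1) - y k - t - (N + 1 - (k + 1))) =
        t * (y (k + 1) - (k + 1) * (N + 1 - (k + 1))) := by
      linear_combination dC - hT' - hT + hA
    have dA := congrArg θ hA'
    simp only [map_add, map_sub, Derivation.leibniz, smul_eq_mul, ht, hnat, h1] at dA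
    refine ⟨hA', ?_, ?_⟩
    · linear_combination hB + (y (k + 1) - y k) * hA - (y (k + 1) - y k) * hA' +
        (θ (y (k + 1)) - θ (y k) - t) * hC
    · apply mul_left_cancel₀ hne'
      linear_combination dA - (y (k + 1 + 1) - y k - t - (N + 1 - (k + 1))) * hT' - hA'
        + θ (y (k + 1)) * hC

end Chain
section Chain2
variable {A : Type*} [CommRing A] [IsDomain A] [Algebra ℂ A]
/-- Elimination of the neighbours of `y k` from the chain relations: an equation of second degree in
the second derivative, and a linear third order consequence. -/
theorem chain_odes (θ : Derivation ℂ A A) (t : A) (ht : θ t = t) (N : ℕ) (y : ℕ → A)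
    (hy0 : y 0 = 0)
    (htoda : ∀ k, 1 ≤ k → k ≤ N →
      θ (θ (y k)) = θ (y k) * (y (k + 1) + y (k - 1) - 2 * y k + 1))
    (hne : ∀ k, 1 ≤ k → k ≤ N → θ (y k) ≠ 0)
    (hbase : θ (y 1) = y 1 * (t + (N + 1) - y 1) - N * t) (n k : ℕ) (hk : 1 ≤ k)
    (hn : 1 ≤ n) (hN : N + 1 = n + k) :
    (θ (θ (y k)) - θ (y k)) ^ 2 =
      (θ (y k) * (t + n) + t * (y k - k * n)) ^ 2 -
        4 * θ (y k) * ((θ (y k) - k * t) * (θ (y k) + n * t) + t * (t + k) * y k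
          - θ (y k) * y k) ∧
    θ (θ (θ (y k))) = 2 * θ (θ (y k)) - θ (y k)
      + (t + n) * (θ (y k) * (t + n) + t * (y k - k * n))
      - 2 * (θ (y k) - k * t) * (θ (y k) + n * t) - 2 * t * (t + k) * y k
      + 4 * θ (y k) * y k - 2 * (n - k) * t * θ (y k) - 4 * θ (y k) ^ 2 := by
  obtain ⟨hA, hB, hC⟩ := chain_relations θ t ht N y hy0 htoda hne hbase k (by omega)
  obtain ⟨-, -, hC'⟩ := chain_relations θ t ht N y hy0 htoda hne hbase (k - 1) (by omega)
  have hT := htoda k hk (by omega)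
  have hNA : (N : A) = n + k - 1 := by
    have : ((N + 1 : ℕ) : A) = ((n + k : ℕ) : A) := by rw [hN]
    push_cast at this
    linear_combination this
  have hk1 : k - 1 + 1 = k := by omega
  rw [hk1, Nat.cast_sub hk] at hC'
  rw [hNA] at hA hB hC hC'
  push_cast at hC'
  have hnat : ∀ m : ℕ, θ (m : A) = 0 := fun m => by simp
  have h1 : θ 1 = 0 := by simp
  have h2 : θ 2 = 0 := by exact_mod_cast hnat 2
  have dT := congrArg θ hT
  simp only [map_add, map_sub, Derivation.leibniz, smul_eq_mul, h1, h2] at dT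
  generalize θ (θ (θ (y k))) = a2 at *
  generalize θ (y (k + 1)) = ap at *
  generalize θ (y (k - 1)) = am at *
  generalize θ (θ (y k)) = a1 at *
  generalize θ (y k) = a at *
  generalize y (k + 1) = yp at *
  generalize y (k - 1) = ym at *
  generalize y k = y0 at *
  constructor
  · linear_combination (a1 - a + a * (yp + ym - 2 * y0)) * hT +
      (a * (yp - ym) + (a * (t + n) + t * (y0 - k * n))) * hA + 4 * a * hB
  · linear_combination dT + (yp + ym - 2 * y0 - 1) * hT + a * hC + a * hC' +
      (t + n) * hA + 2 * hB
end Chain2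

/-! ### Hankel determinants and the Toda equation -/

section Hankel

theorem derivation_prod {A ι : Type*} [CommRing A] [Algebra ℂ A] [DecidableEq ι] (θ : Derivation ℂ A A)
    (s : Finset ι) (f : ι → A) :
    θ (∏ i ∈ s, f i) = ∑ i ∈ s, θ (f i) * ∏ j ∈ s.erase i, f j := by
  induction s using Finset.induction_on with
  | empty => simp
  | insert a s ha ih =>
    rw [Finset.prod_insert ha, Derivation.leibniz, ih, Finset.sum_insert ha,
      Finset.erase_insert ha, smul_eq_mul, smul_eq_mul, Finset.mul_sum, add_comm,
      mul_comm (∏ i ∈ s, f i)]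
    congr 1
    refine Finset.sum_congr rfl fun i hi => ?_
    have : i ≠ a := fun h => ha (h ▸ hi)
    rw [Finset.erase_insert_of_ne this.symm, Finset.prod_insert (by simp [ha])]
    ring

theorem derivation_det {A ι : Type*} [CommRing A] [Algebra ℂ A] [Fintype ι] [DecidableEq ι]
    (θ : Derivation ℂ A A) (M : Matrix ι ι A) :
    θ M.det = ∑ i, (M.updateCol i fun j => θ (M j i)).det := by
  simp only [det_apply, map_sum]
  rw [Finset.sum_comm]
  refine Finset.sum_congr rfl fun σ _ => ?_
  rw [Units.smul_def, map_zsmul, derivation_prod, Finset.smul_sum]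
  refine Finset.sum_congr rfl fun i _ => ?_
  rw [Units.smul_def, ← Finset.mul_prod_erase _ _ (Finset.mem_univ i)]
  congr 2
  · simp
  · refine Finset.prod_congr rfl fun j hj => ?_
    rw [updateCol_ne (Finset.ne_of_mem_erase hj)]

/-- The matrix `g (r i + s j)`. -/
def hmat {A ι : Type*} (g : ℕ → A) (r s : ι → ℕ) : Matrix ι ι A :=
  Matrix.of fun i j => g (r i + s j)

/-- The row exponents `0, 1, …, m - 1, p`. -/
def bidx (m p : ℕ) : Fin m ⊕ Unit → ℕ := Sum.elim (fun i => (i : ℕ)) fun _ => p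

theorem hmat_det_comm {A ι : Type*} [CommRing A] [Fintype ι] [DecidableEq ι] (g : ℕ → A)
    (r s : ι → ℕ) : (hmat g r s).det = (hmat g s r).det := by
  rw [← det_transpose]
  congr 1
  ext i j
  simp [hmat, add_comm]

/-- Differentiating a determinant whose columns are successive derivatives only affects the last
column, since all other terms have two equal columns. -/
theorem derivation_bordered {A : Type*} [CommRing A] [Algebra ℂ A] (θ : Derivation ℂ A A) (g : ℕ → A)
    (hg : ∀ p, θ (g p) = g (p + 1)) (m : ℕ) (r : Fin m ⊕ Unit → ℕ) :
    θ (hmat g r (bidx m m)).det = (hmat g r (bidx m (m + 1))).det := by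
  rw [derivation_det, Fintype.sum_sum_type, Finset.sum_eq_zero, zero_add]
  · simp only [Finset.univ_unique, Finset.sum_singleton]
    congr 1
    ext i j
    rcases j with j | j <;> simp [hmat, bidx, hg, add_assoc]
  · intro i _
    by_cases h : (i : ℕ) + 1 < m
    · apply det_zero_of_column_eq (i := Sum.inl i) (j := Sum.inl ⟨i + 1, h⟩)
      · simp [Fin.ext_iff]
      · intro l
        simp [hmat, bidx, hg, add_assoc, Fin.ext_iff]
    · apply det_zero_of_column_eq (i := Sum.inl i) (j := Sum.inr ())
      · simp
      · intro l
        have : (i : ℕ) + 1 = m := by omega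
        simp [hmat, bidx, hg, add_assoc, this]

/-- The Hankel determinant `det (g (i + j))` of size `k`. -/
def hankel {A : Type*} [CommRing A] (g : ℕ → A) (k : ℕ) : A :=
  (hmat g (fun i : Fin k => (i : ℕ)) fun i : Fin k => (i : ℕ)).det

theorem hankel_succ {A : Type*} [CommRing A] (g : ℕ → A) (m : ℕ) :
    hankel g (m + 1) = (hmat g (bidx m m) (bidx m m)).det := by
  let e : Fin m ⊕ Unit ≃ Fin (m + 1) :=
    (Equiv.sumCongr (Equiv.refl _) (Equiv.ofUnique Unit (Fin 1))).trans finSumFinEquiv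
  rw [hankel, ← det_submatrix_equiv_self e]
  congr 1
  ext i j
  rcases i with i | i <;> rcases j with j | j <;> simp [hmat, bidx, e]

/-- Sylvester's identity for a Hankel matrix bordered by two rows and columns, from Schur complements
with respect to the block of size `m`. -/
theorem desnanot {K : Type*} [Field K] (g : ℕ → K) (m : ℕ) (h : hankel g m ≠ 0) :
    hankel g (m + 2) * hankel g m =
      (hmat g (bidx m m) (bidx m m)).det * (hmat g (bidx m (m + 1)) (bidx m (m + 1))).det
      - (hmat g (bidx m m) (bidx m (m + 1))).det * (hmat g (bidx m (m + 1)) (bidx m m)).det := by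
  set A : Matrix (Fin m) (Fin m) K := hmat g (fun i : Fin m => (i : ℕ)) fun i : Fin m => (i : ℕ)
    with hA
  have hdet : A.det ≠ 0 := h
  let _ : Invertible A := A.invertibleOfIsUnitDet (isUnit_iff_ne_zero.2 hdet)
  have hb : ∀ p q, (hmat g (bidx m p) (bidx m q)).det = A.det *
      (g (p + q) - ∑ i : Fin m, ∑ j : Fin m, g (p + (i : ℕ)) * (⅟A : Matrix (Fin m) (Fin m) K) i j * g (j + q)) := by
    intro p q
    have : hmat g (bidx m p) (bidx m q) = fromBlocks A (Matrix.of fun i _ => g (i + q))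
        (Matrix.of fun _ j => g (p + j)) (Matrix.of fun _ _ => g (p + q)) := by
      ext i j
      rcases i with i | i <;> rcases j with j | j <;> simp [hmat, bidx, hA]
    rw [this, det_fromBlocks₁₁]
    congr 1
    rw [det_unique]
    simp only [Matrix.sub_apply, of_apply, mul_apply, Finset.sum_mul]
    rw [Finset.sum_comm]
  have h2 : hankel g (m + 2) = A.det *
      ((g (m + m) - ∑ i : Fin m, ∑ j : Fin m, g (m + (i : ℕ)) * (⅟A : Matrix (Fin m) (Fin m) K) i j * g (j + m)) *
        (g (m + 1 + (m + 1)) - ∑ i : Fin m, ∑ j : Fin m, g (m + 1 + (i : ℕ)) * (⅟A : Matrix (Fin m) (Fin m) K) i j * g (j + (m + 1)))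
      - (g (m + (m + 1)) - ∑ i : Fin m, ∑ j : Fin m, g (m + (i : ℕ)) * (⅟A : Matrix (Fin m) (Fin m) K) i j * g (j + (m + 1))) *
        (g (m + 1 + m) - ∑ i : Fin m, ∑ j : Fin m, g (m + 1 + (i : ℕ)) * (⅟A : Matrix (Fin m) (Fin m) K) i j * g (j + m))) := by
    rw [hankel, ← det_submatrix_equiv_self finSumFinEquiv]
    have : (hmat g (fun i : Fin (m + 2) => (i : ℕ)) fun i : Fin (m + 2) => (i : ℕ)).submatrix
        finSumFinEquiv finSumFinEquiv = fromBlocks A (Matrix.of fun i (q : Fin 2) => g (i + (m + q)))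
        (Matrix.of fun (p : Fin 2) j => g (m + p + j))
        (Matrix.of fun (p q : Fin 2) => g (m + p + (m + q))) := by
      ext i j
      rcases i with i | i <;> rcases j with j | j <;> simp [hmat, hA]
    rw [this, det_fromBlocks₁₁]
    congr 1
    rw [det_fin_two]
    have hs : ∀ p q : Fin 2, ((Matrix.of fun (p : Fin 2) (j : Fin m) => g (m + p + j)) * ⅟A *
        (Matrix.of fun (i : Fin m) (q : Fin 2) => g (i + (m + q)))) p q =
        ∑ i : Fin m, ∑ j : Fin m, g (m + p + (i : ℕ)) * (⅟A : Matrix (Fin m) (Fin m) K) i j * g (j + (m + q)) := by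
      intro p q
      simp only [of_apply, mul_apply, Finset.sum_mul]
      rw [Finset.sum_comm]
    simp only [Matrix.sub_apply, hs, of_apply]
    simp
  rw [h2, hb, hb, hb, hb, show hankel g m = A.det from rfl]
  ring

/-- The Toda equation in bilinear form, for Hankel determinants of successive derivatives. -/
theorem hankel_toda {A : Type*} [CommRing A] [Algebra ℂ A] [IsDomain A] (θ : Derivation ℂ A A) (g : ℕ → A)
    (hg : ∀ p, θ (g p) = g (p + 1)) (m : ℕ) (h : hankel g m ≠ 0) :
    hankel g (m + 1) * θ (θ (hankel g (m + 1))) - θ (hankel g (m + 1)) ^ 2 =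
      hankel g (m + 2) * hankel g m := by
  have hm : ∀ (ι : Type) [Fintype ι] [DecidableEq ι] (r s : ι → ℕ),
      algebraMap A (FractionRing A) (hmat g r s).det =
        (hmat (fun p => algebraMap A (FractionRing A) (g p)) r s).det := by
    intro ι _ _ r s
    rw [RingHom.map_det]
    rfl
  have h1 : θ (hankel g (m + 1)) = (hmat g (bidx m m) (bidx m (m + 1))).det := by
    rw [hankel_succ, derivation_bordered θ g hg]
  have h2 : θ (θ (hankel g (m + 1))) = (hmat g (bidx m (m + 1)) (bidx m (m + 1))).det := by
    rw [h1, hmat_det_comm, derivation_bordered θ g hg]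
  rw [h2, h1]
  apply IsFractionRing.injective A (FractionRing A)
  have hh : ∀ k, algebraMap A (FractionRing A) (hankel g k) =
      hankel (fun p => algebraMap A (FractionRing A) (g p)) k := fun k => hm _ _ _
  rw [map_mul, hh, hh, desnanot]
  · rw [hankel_succ, map_sub, map_mul, map_pow, hm, hm, hm,
      hmat_det_comm _ (bidx m (m + 1)) (bidx m m)]
    ring
  · rw [← hh]
    simpa using h
end Hankel

/-! ### The tau polynomial as a Hankel determinant -/

section Tau
open Polynomial

/-- The polynomial in `t` equal to the `k × k` determinant with entries
`∑_{m ≤ N} C(m, i) t ^ (m - j) / (m - j)!`, where terms with `m < j` are zero. With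
`N = n + k - 1` it is the value of the matrix integral. -/
def tauPol (N k : ℕ) : ℂ[X] :=
  (Matrix.of fun i j : Fin k => ∑ m ∈ Finset.range (N + 1),
    if (j : ℕ) ≤ m then C ((m.choose i : ℂ) / ((m - j).factorial : ℂ)) * X ^ (m - (j : ℕ))
    else 0).det

/-- `∑_{m ≤ N} mᵖ tᵐ / m!`, the result of applying `t d/dt` `p` times to the exponential series
truncated at degree `N`. -/
def gPol (N p : ℕ) : ℂ[X] :=
  ∑ m ∈ Finset.range (N + 1), C ((m : ℂ) ^ p / (m.factorial : ℂ)) * X ^ m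

/-- The unitriangular matrix expressing the falling factorials `m (m - 1) ⋯ (m - i + 1)` in powers
of `m` (signed Stirling numbers of the first kind). -/
def stirlingMat (k : ℕ) : Matrix (Fin k) (Fin k) ℂ[X] :=
  Matrix.of fun a i => C ((descPochhammer ℂ (i : ℕ)).coeff a)

theorem stirlingMat_det (k : ℕ) : (stirlingMat k).det = 1 := by
  rw [det_of_isUpperTriangular]
  · apply Finset.prod_eq_one
    intro i _
    have := (monic_descPochhammer ℂ (i : ℕ)).coeff_natDegree
    rw [descPochhammer_natDegree] at this
    simp [stirlingMat, this]
  · intro i j hij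
    have hij : (j : ℕ) < i := hij
    simp only [stirlingMat, of_apply]
    rw [coeff_eq_zero_of_natDegree_lt, C_0]
    rw [descPochhammer_natDegree]
    exact hij

theorem descFactorial_eq_sum (k m : ℕ) (i : Fin k) :
    (m.descFactorial i : ℂ) =
      ∑ a : Fin k, (descPochhammer ℂ (i : ℕ)).coeff a * (m : ℂ) ^ (a : ℕ) := by
  rw [← descPochhammer_eval_eq_descFactorial ℂ, eval_eq_sum_range' (n := k),
    ← Fin.sum_univ_eq_sum_range (fun a => (descPochhammer ℂ (i : ℕ)).coeff a * (m : ℂ) ^ a)]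
  rw [descPochhammer_natDegree]
  exact i.2

theorem descFactorial_mat (N k : ℕ) :
    (Matrix.of fun i j : Fin k => ∑ m ∈ Finset.range (N + 1),
      C ((m.descFactorial i : ℂ) * (m.descFactorial j : ℂ) / (m.factorial : ℂ)) * X ^ m) =
    (stirlingMat k)ᵀ * hmat (gPol N) (fun i : Fin k => (i : ℕ)) (fun i : Fin k => (i : ℕ)) *
      stirlingMat k := by
  ext1 i j
  simp only [of_apply, mul_apply, stirlingMat, transpose_apply, hmat, gPol, Finset.mul_sum,
    Finset.sum_mul, descFactorial_eq_sum k, Finset.sum_div, map_sum]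
  rw [Finset.sum_comm]
  refine Finset.sum_congr rfl fun b _ => ?_
  rw [Finset.sum_comm]
  refine Finset.sum_congr rfl fun a _ => ?_
  refine Finset.sum_congr rfl fun m _ => ?_
  simp only [div_eq_mul_inv, C_mul, pow_add]
  ring

theorem tauPol_hankel (N k : ℕ) :
    C (∏ i : Fin k, ((i : ℕ).factorial : ℂ)) * X ^ (∑ j : Fin k, (j : ℕ)) * tauPol N k =
      hankel (gPol N) k := by
  have h := congrArg det (descFactorial_mat N k)
  rw [det_mul, det_mul, det_transpose, stirlingMat_det, one_mul, mul_one] at h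
  rw [hankel, ← h, tauPol, map_prod, ← Finset.prod_pow_eq_pow_sum, mul_assoc,
    ← det_mul_row (fun j : Fin k => (X : ℂ[X]) ^ (j : ℕ)),
    ← det_mul_column (fun i : Fin k => C ((i : ℕ).factorial : ℂ))]
  congr 1
  ext1 i j
  simp only [of_apply, Finset.mul_sum]
  refine Finset.sum_congr rfl fun m _ => ?_
  split_ifs with hjm
  · obtain ⟨r, rfl⟩ := Nat.exists_eq_add_of_le' hjm
    rw [Nat.add_sub_cancel, pow_add, Nat.descFactorial_eq_factorial_mul_choose (r + j) i,
      ← Nat.factorial_mul_descFactorial (Nat.le_add_left (j : ℕ) r), Nat.add_sub_cancel]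
    have h0 : (r.factorial : ℂ) ≠ 0 := by exact_mod_cast r.factorial_ne_zero
    have h1 : ((r + (j : ℕ)).descFactorial j : ℂ) ≠ 0 := by
      have : (r + (j : ℕ)).descFactorial j ≠ 0 := by
        rw [Ne, Nat.descFactorial_eq_zero_iff_lt]; omega
      exact_mod_cast this
    have : (((i : ℕ).factorial * (r + j).choose i : ℕ) : ℂ) * ((r + (j : ℕ)).descFactorial j : ℂ) /
        ((r.factorial * (r + (j : ℕ)).descFactorial j : ℕ) : ℂ) =
        ((i : ℕ).factorial : ℂ) * (((r + j).choose i : ℂ) / (r.factorial : ℂ)) := by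
      push_cast
      field_simp
    rw [this, C_mul]
    ring
  · rw [Nat.descFactorial_of_lt (by omega : m < (j : ℕ))]
    simp

theorem tauPol_eval_zero (N k : ℕ) (hk : k ≤ N + 1) : (tauPol N k).coeff 0 = 1 := by
  rw [coeff_zero_eq_eval_zero, tauPol, ← coe_evalRingHom, RingHom.map_det, det_of_isUpperTriangular]
  · apply Finset.prod_eq_one
    intro i _
    have := i.2
    simp only [RingHom.mapMatrix_apply, map_apply, of_apply, map_sum]
    rw [Finset.sum_eq_single (i : ℕ)]
    · simp
    · intro m _ hm
      split_ifs with h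
      · simp [Nat.sub_eq_zero_iff_le]; omega
      · simp
    · simp; omega
  · intro i j hij
    have hij : (j : ℕ) < i := hij
    simp only [RingHom.mapMatrix_apply, map_apply, of_apply, map_sum]
    apply Finset.sum_eq_zero
    intro m _
    split_ifs with h
    · rcases Nat.eq_or_lt_of_le h with rfl | h'
      · simp [Nat.choose_eq_zero_of_lt hij]
      · simp [Nat.sub_eq_zero_iff_le, h']
    · simp

end Tau

/-! ### Differential equations of the tau polynomial -/

section TodaChain

/-- The Toda equation for the logarithmic derivatives `y` of the factors `u` of the Hankel
determinants; the powers of `t` in the factorization produce the additional summand `1`. -/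
theorem toda_of_hankel {A : Type*} [CommRing A] [Algebra ℂ A] [IsDomain A] (θ : Derivation ℂ A A) (t : A)
    (ht : θ t = t) (g : ℕ → A) (hg : ∀ p, θ (g p) = g (p + 1)) (N : ℕ) (c u y : ℕ → A)
    (e : ℕ → ℕ) (hc : ∀ j, θ (c j) = 0) (hu : ∀ j, j ≤ N + 1 → θ (u j) = u j * y j)
    (hT : ∀ j, hankel g j = c j * t ^ e j * u j) (h0 : ∀ j, j ≤ N + 1 → hankel g j ≠ 0)
    (he : ∀ j, e (j + 2) + e j = 2 * e (j + 1) + 1) (k : ℕ) (hk : 1 ≤ k) (hkN : k ≤ N) :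
    θ (θ (y k)) = θ (y k) * (y (k + 1) + y (k - 1) - 2 * y k + 1) ∧ θ (y k) ≠ 0 := by
  obtain ⟨k, rfl⟩ := Nat.exists_eq_add_of_le' hk
  have hTd : ∀ j, j ≤ N + 1 → θ (hankel g j) = hankel g j * (e j + y j) := by
    intro j hj
    rw [hT j, Derivation.leibniz, Derivation.leibniz, Derivation.leibniz_pow, hc, hu j hj, ht]
    rcases Nat.eq_zero_or_pos (e j) with h | h
    · simp [h]; ring
    · obtain ⟨m, hm⟩ := Nat.exists_eq_add_of_le' h
      rw [hm]
      simp
      ring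
  have hnat : ∀ m : ℕ, θ (m : A) = 0 := fun m => by simp
  have key := hankel_toda θ g hg k (h0 k (by omega))
  have d1 := hTd (k + 1) (by omega)
  have d2 := hTd (k + 2) (by omega)
  have d0 := hTd k (by omega)
  have key1 : hankel g (k + 1) ^ 2 * θ (y (k + 1)) = hankel g (k + 2) * hankel g k := by
    rw [← key, d1, Derivation.leibniz, d1, map_add, hnat]
    simp only [smul_eq_mul]
    ring
  have key2 := congrArg θ key1
  simp only [Derivation.leibniz, Derivation.leibniz_pow, smul_eq_mul, d1, d2, d0] at key2
  have hec : (e (k + 2) : A) + e k = 2 * e (k + 1) + 1 := by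
    have := congrArg (Nat.cast (R := A)) (he k)
    push_cast at this
    exact this
  constructor
  · apply mul_left_cancel₀ (pow_ne_zero 2 (h0 (k + 1) (by omega)))
    simp only [Nat.add_sub_cancel, Nat.add_assoc, Nat.reduceAdd, pow_one, Nat.reduceSub,
      nsmul_eq_mul, Nat.cast_ofNat] at key2 ⊢
    linear_combination key2 - (e (k + 2) + e k + y (k + 2) + y k) * key1 +
      hankel g (k + 1) ^ 2 * θ (y (k + 1)) * hec
  · intro h
    rw [h, mul_zero] at key1
    exact mul_ne_zero (h0 (k + 2) (by omega)) (h0 k (by omega)) key1.symm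

open Polynomial

/-- The Euler derivation `t d/dt` of polynomials. -/
def polEuler : Derivation ℂ ℂ[X] ℂ[X] := (X : ℂ[X]) • (Polynomial.derivative' (R := ℂ))

/-- The Euler derivation `t d/dt` of power series; there the tau polynomials are invertible, so that
logarithmic derivatives make sense. -/
def serEuler : Derivation ℂ (PowerSeries ℂ) (PowerSeries ℂ) :=
  (PowerSeries.X : PowerSeries ℂ) • PowerSeries.derivative ℂ

theorem polEuler_apply (p : ℂ[X]) : polEuler p = X * derivative p := rfl

theorem serEuler_coe (p : ℂ[X]) : serEuler (p : PowerSeries ℂ) = (polEuler p : ℂ[X]) := by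
  rw [polEuler_apply, Polynomial.coe_mul, Polynomial.coe_X, ← PowerSeries.derivative_coe]
  rfl

theorem polEuler_C (a : ℂ) : polEuler (C a) = 0 := by simp

theorem polEuler_gPol (N p : ℕ) : polEuler (gPol N p) = gPol N (p + 1) := by
  simp only [gPol, map_sum]
  refine Finset.sum_congr rfl fun m _ => ?_
  rw [polEuler_apply, derivative_C_mul_X_pow, pow_succ, mul_div_right_comm]
  rcases m with _ | m
  · simp
  · simp only [C_mul, Nat.add_sub_cancel]
    ring

theorem tauPol_zero (N : ℕ) : tauPol N 0 = 1 := by simp [tauPol]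

theorem tauPol_one (N : ℕ) : tauPol N 1 = gPol N 0 := by simp [tauPol, gPol]

theorem gPol_one (N : ℕ) :
    gPol N 1 = X * gPol N 0 - C (1 / (N.factorial : ℂ)) * X ^ (N + 1) := by
  induction N with
  | zero => simp [gPol]
  | succ N ih =>
    have h : ∀ p, gPol (N + 1) p =
        gPol N p + C (((N + 1 : ℕ) : ℂ) ^ p / ((N + 1).factorial : ℂ)) * X ^ (N + 1) :=
      fun p => by rw [gPol, Finset.sum_range_succ]; rfl
    have h0 : ((N + 1 : ℕ) : ℂ) ≠ 0 := by exact_mod_cast N.succ_ne_zero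
    have h1 : (((N + 1 : ℕ) : ℂ) ^ 1 / ((N + 1).factorial : ℂ)) = 1 / (N.factorial : ℂ) := by
      rw [Nat.factorial_succ, pow_one, Nat.cast_mul]
      field_simp
    rw [h 1, h 0, ih, h1, pow_zero]
    ring

/-- The second order linear equation of the truncated exponential series. -/
theorem gPol_base (N : ℕ) : gPol N 2 = ((X : ℂ[X]) + (N + 1)) * gPol N 1 - N * (X : ℂ[X]) * gPol N 0 := by
  have h := congrArg polEuler (gPol_one N)
  have h1 : polEuler (X : ℂ[X]) = X := by simp [polEuler_apply]
  have h2 : polEuler ((X : ℂ[X]) ^ (N + 1)) = ((N : ℂ[X]) + 1) * X ^ (N + 1) := by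
    rw [polEuler_apply, derivative_X_pow]
    simp
    ring
  rw [polEuler_gPol, map_sub, Derivation.leibniz, Derivation.leibniz, h1, h2, polEuler_C,
    polEuler_gPol] at h
  simp only [smul_eq_mul, mul_zero, add_zero, zero_add, Nat.reduceAdd] at h
  linear_combination h - ((N : ℂ[X]) + 1) * gPol_one N

/-- The equations of `chain_odes` for `tauPol N k`, cleared of denominators: with `U = tauPol N k` and
`θ` the Euler derivation, `Y / U`, `A / U ^ 2`, `A1 / U ^ 3`, `A2 / U ^ 4` are `θ log U` and its
successive `θ`-derivatives. -/
theorem tauPol_odes (n k N : ℕ) (hn : 1 ≤ n) (hk : 1 ≤ k) (hN : N + 1 = n + k)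
    (t U Y A A1 A2 : ℂ[X]) (htX : t = X)
    (hU : U = tauPol N k) (hY : Y = polEuler U) (hA : A = U * polEuler Y - Y ^ 2)
    (hA1 : A1 = U * polEuler A - 2 * A * Y) (hA2 : A2 = U * polEuler A1 - 3 * A1 * Y) :
    (A1 - U * A) ^ 2 = (U * A * (t + n) + U ^ 2 * t * (Y - k * n * U)) ^ 2 -
      4 * A * ((A - k * t * U ^ 2) * (A + n * t * U ^ 2) + t * (t + k) * Y * U ^ 3
        - A * Y * U) ∧
    A2 = 2 * U * A1 - U ^ 2 * A + (t + n) * (A * (t + n) * U ^ 2 + t * U ^ 3 * (Y - k * n * U))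
      - 2 * (A - k * t * U ^ 2) * (A + n * t * U ^ 2) - 2 * t * (t + k) * Y * U ^ 3
      + 4 * A * Y * U - 2 * (n - k) * t * A * U ^ 2 - 4 * A ^ 2 := by
  rw [htX]
  set θ := serEuler with hθ
  let u : ℕ → PowerSeries ℂ := fun j => (tauPol N j : ℂ[X])
  let y : ℕ → PowerSeries ℂ := fun j => (u j)⁻¹ * θ (u j)
  let g : ℕ → PowerSeries ℂ := fun p => (gPol N p : ℂ[X])
  have hcc : ∀ j, j ≤ N + 1 → PowerSeries.constantCoeff (u j) ≠ 0 := by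
    intro j hj
    simp [u, tauPol_eval_zero N j hj]
  have hu : ∀ j, j ≤ N + 1 → θ (u j) = u j * y j := by
    intro j hj
    simp only [y]
    rw [← mul_assoc, PowerSeries.mul_inv_cancel _ (hcc j hj), one_mul]
  have hune : ∀ j, j ≤ N + 1 → u j ≠ 0 := by
    intro j hj h
    apply hcc j hj
    rw [h, map_zero]
  have ht : θ PowerSeries.X = PowerSeries.X := by
    have := serEuler_coe X
    rwa [polEuler_apply, derivative_X, mul_one, Polynomial.coe_X] at this
  have hg : ∀ p, θ (g p) = g (p + 1) := by
    intro p
    simp only [g, θ]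
    rw [serEuler_coe, polEuler_gPol]
  have hT : ∀ j, hankel g j = ((C (∏ i : Fin j, ((i : ℕ).factorial : ℂ)) : ℂ[X]) : PowerSeries ℂ) *
      PowerSeries.X ^ (∑ i : Fin j, (i : ℕ)) * u j := by
    intro j
    simp only [u]
    rw [← Polynomial.coe_X, ← Polynomial.coe_pow, ← Polynomial.coe_mul, ← Polynomial.coe_mul,
      tauPol_hankel, hankel, hankel]
    exact (RingHom.map_det Polynomial.coeToPowerSeries.ringHom
      (hmat (gPol N) (fun i : Fin j => (i : ℕ)) fun i : Fin j => (i : ℕ))).symm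
  have h0 : ∀ j, j ≤ N + 1 → hankel g j ≠ 0 := by
    intro j hj
    rw [hT]
    refine mul_ne_zero (mul_ne_zero ?_ (pow_ne_zero _ PowerSeries.X_ne_zero)) (hune j hj)
    rw [Polynomial.coe_C]
    have : ∏ i : Fin j, ((i : ℕ).factorial : ℂ) ≠ 0 :=
      Finset.prod_ne_zero_iff.2 fun i _ => by exact_mod_cast (i : ℕ).factorial_ne_zero
    intro h
    apply this
    simpa using congrArg PowerSeries.constantCoeff h
  have htoda := toda_of_hankel θ PowerSeries.X ht g hg N
    (fun j => ((C (∏ i : Fin j, ((i : ℕ).factorial : ℂ)) : ℂ[X]) : PowerSeries ℂ)) u y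
    (fun j => ∑ i : Fin j, (i : ℕ)) (fun j => by rw [hθ, serEuler_coe, polEuler_C, Polynomial.coe_zero]) hu hT h0
    (fun j => by simp [Fin.sum_univ_castSucc]; ring)
  have hy0 : y 0 = 0 := by
    simp only [y, u]
    rw [hθ, serEuler_coe, tauPol_zero]
    simp
  have hbase : θ (y 1) =
      y 1 * ((PowerSeries.X : PowerSeries ℂ) + (N + 1) - y 1) -
        N * (PowerSeries.X : PowerSeries ℂ) := by
    have h1 := hu 1 (by omega)
    have hu1 : u 1 = g 0 := by simp only [u, g, tauPol_one]
    have h2 := congrArg θ h1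
    rw [Derivation.leibniz, h1] at h2
    have h3 : θ (u 1) = g 1 := by rw [hu1, hg]
    have h4 : θ (u 1 * y 1) = g 2 := by rw [← h1, h3, hg]
    have h5 : g 2 = ((PowerSeries.X : PowerSeries ℂ) + (N + 1)) * g 1 -
        N * (PowerSeries.X : PowerSeries ℂ) * g 0 := by
      have := congrArg (fun p : ℂ[X] => (p : PowerSeries ℂ)) (gPol_base N)
      have hNc : ((N : ℂ[X]) : PowerSeries ℂ) = N :=
        map_natCast Polynomial.coeToPowerSeries.ringHom N
      simpa only [Polynomial.coe_mul, Polynomial.coe_add, Polynomial.coe_sub, Polynomial.coe_X,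
        Polynomial.coe_one, hNc] using this
    rw [← h3, ← hu1, h1, ← h4, h2] at h5
    apply mul_left_cancel₀ (hune 1 (by omega))
    simp only [smul_eq_mul] at h5
    linear_combination h5
  obtain ⟨e2, e3⟩ := chain_odes θ PowerSeries.X ht N y hy0 (fun j h h' => (htoda j h h').1)
    (fun j h h' => (htoda j h h').2) hbase n k hk hn hN
  have hUc : (U : PowerSeries ℂ) = u k := by rw [hU]
  have hYc : (Y : PowerSeries ℂ) = u k * y k := by
    rw [hY, ← serEuler_coe, hUc, hu k (by omega)]
  have hAc : (A : PowerSeries ℂ) = u k ^ 2 * θ (y k) := by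
    rw [hA, Polynomial.coe_sub, Polynomial.coe_mul, Polynomial.coe_pow, ← serEuler_coe, hUc, hYc,
      Derivation.leibniz, ← hθ, hu k (by omega)]
    simp only [smul_eq_mul]
    ring
  have h2c : ((2 : ℂ[X]) : PowerSeries ℂ) = 2 :=
    map_ofNat Polynomial.coeToPowerSeries.ringHom 2
  have h3c : ((3 : ℂ[X]) : PowerSeries ℂ) = 3 :=
    map_ofNat Polynomial.coeToPowerSeries.ringHom 3
  have h4c : ((4 : ℂ[X]) : PowerSeries ℂ) = 4 :=
    map_ofNat Polynomial.coeToPowerSeries.ringHom 4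
  have hnc : ∀ m : ℕ, ((m : ℂ[X]) : PowerSeries ℂ) = m :=
    fun m => map_natCast Polynomial.coeToPowerSeries.ringHom m
  have hA1c : (A1 : PowerSeries ℂ) = u k ^ 3 * θ (θ (y k)) := by
    rw [hA1]
    simp only [Polynomial.coe_sub, Polynomial.coe_mul, h2c, ← serEuler_coe, hUc, hYc, hAc]
    rw [Derivation.leibniz, Derivation.leibniz_pow, ← hθ, hu k (by omega)]
    simp
    ring
  have hA2c : (A2 : PowerSeries ℂ) = u k ^ 4 * θ (θ (θ (y k))) := by
    rw [hA2]
    simp only [Polynomial.coe_sub, Polynomial.coe_mul, h3c, ← serEuler_coe, hUc, hYc, hA1c]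
    rw [Derivation.leibniz, Derivation.leibniz_pow, ← hθ, hu k (by omega)]
    simp
    ring
  constructor
  · apply Polynomial.coe_injective ℂ
    simp only [Polynomial.coe_sub, Polynomial.coe_add, Polynomial.coe_mul, Polynomial.coe_pow,
      h4c, hnc, Polynomial.coe_X, hUc, hYc, hAc, hA1c]
    linear_combination u k ^ 6 * e2
  · apply Polynomial.coe_injective ℂ
    simp only [Polynomial.coe_sub, Polynomial.coe_add, Polynomial.coe_mul, Polynomial.coe_pow,
      h2c, h4c, hnc, Polynomial.coe_X, hUc, hYc, hAc, hA1c, hA2c]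
    linear_combination u k ^ 4 * e3

end TodaChain

/-! ### Uniqueness for the coefficient recurrence -/

section Uniqueness

theorem strictMono_fin_gap {k : ℕ} (m : Fin k → ℕ) (hm : StrictMono m) (i j : Fin k)
    (hij : i ≤ j) : m i + ((j : ℕ) - i) ≤ m j := by
  have key : ∀ d : ℕ, ∀ j : Fin k, (j : ℕ) = i + d → m i + d ≤ m j := by
    intro d
    induction d with
    | zero =>
      intro j hj
      have : j = i := Fin.ext (by omega)
      simp [this]
    | succ d ih =>
      intro j hj
      have h1 := ih ⟨i + d, by omega⟩ rfl
      have h2 : m ⟨i + d, by omega⟩ < m j := hm (Fin.mk_lt_of_lt_val (by omega))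
      omega
  have hij' : (i : ℕ) ≤ j := hij
  exact key _ j (by omega)

theorem eigenvalue_ne_zero {k N : ℕ} (m : Fin k → ℕ) (hm : StrictMono m) (hN : ∀ i, m i ≤ N)
    (hδ : m ≠ fun i : Fin k => (i : ℕ)) :
    (∑ c, ((m c : ℂ) ^ 2 - (N + k) * m c) - ∑ c : Fin k, (((c : ℕ) : ℂ) ^ 2 - (N + k) * (c : ℕ))) ≠ 0 := by
  have hlow : ∀ j : Fin k, (j : ℕ) ≤ m j := by
    intro j
    have := strictMono_fin_gap m hm ⟨0, by have := j.2; omega⟩ j (Fin.mk_le_of_le_val (by simp))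
    simp only at this
    omega
  have hup : ∀ j : Fin k, m j + k ≤ N + 1 + j := by
    intro j
    have hj := j.2
    have := strictMono_fin_gap m hm j ⟨k - 1, by omega⟩ (Fin.le_def.2 (by simp; omega))
    have h2 := hN ⟨k - 1, by omega⟩
    simp only at this
    omega
  have hneg : ∑ j : Fin k, ((m j : ℤ) - (j : ℕ)) * ((m j : ℤ) + (j : ℕ) - N - k) < 0 := by
    obtain ⟨j0, hj0⟩ := Function.ne_iff.1 hδ
    apply Finset.sum_neg'
    · intro j _
      have h1 := hlow j
      have h2 := hup j
      have h3 := j.2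
      exact mul_nonpos_of_nonneg_of_nonpos (by omega) (by omega)
    · refine ⟨j0, Finset.mem_univ _, ?_⟩
      have h1 := hlow j0
      have h2 := hup j0
      have h3 := j0.2
      exact mul_neg_of_pos_of_neg (by omega) (by omega)
  intro h
  apply hneg.ne
  have : ((∑ j : Fin k, ((m j : ℤ) - (j : ℕ)) * ((m j : ℤ) + (j : ℕ) - N - k) : ℤ) : ℂ) = 0 := by
    rw [← h, ← Finset.sum_sub_distrib]
    push_cast
    refine Finset.sum_congr rfl fun j _ => ?_
    ring
  exact_mod_cast this

/-- An antisymmetric solution of the recurrence, of degree at most `N` in each index, that vanishes at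
`(0, 1, …, k - 1)` vanishes identically. The recurrence lowers the total degree by one, and the
factor of `p m` is nonzero for strictly increasing `m` with entries at most `N` other than
`(0, 1, …, k - 1)`. -/
theorem coeff_unique {k N : ℕ} (t : ℂ) (p : (Fin k → ℕ) → ℂ)
    (hanti : ∀ (m : Fin k → ℕ) (σ : Equiv.Perm (Fin k)), p (m ∘ σ) = (Equiv.Perm.sign σ : ℤ) * p m)
    (hdeg : ∀ m i, N < m i → p m = 0)
    (hrec : ∀ m : Fin k → ℕ, (∑ c, ((m c : ℂ) ^ 2 - (N + k) * m c) -
        ∑ c : Fin k, (((c : ℕ) : ℂ) ^ 2 - (N + k) * (c : ℕ))) * p m +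
      t * ∑ c, (if m c = 0 then 0 else
        ((N : ℂ) + 1 - m c) * p (Function.update m c (m c - 1))) = 0)
    (h0 : p (fun i : Fin k => (i : ℕ)) = 0) (m : Fin k → ℕ) : p m = 0 := by
  induction hs : ∑ i, m i using Nat.strong_induction_on generalizing m with
  | _ s ih =>
  by_cases hinj : Function.Injective m
  · set σ := Tuple.sort m with hσ
    have hmono : StrictMono (m ∘ σ) :=
      (Tuple.monotone_sort m).strictMono_of_injective (hinj.comp σ.injective)
    suffices h : p (m ∘ σ) = 0 by
      rw [hanti] at h
      rcases mul_eq_zero.1 h with h | h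
      · exfalso
        rcases Int.units_eq_one_or (Equiv.Perm.sign σ) with h' | h' <;> simp [h'] at h
      · exact h
    have hs' : ∑ i, (m ∘ σ) i = s := by
      rw [← hs]
      exact Equiv.sum_comp σ m
    clear_value σ
    generalize m ∘ σ = m' at *
    by_cases hN : ∀ i, m' i ≤ N
    · by_cases hδ : m' = fun i : Fin k => (i : ℕ)
      · rw [hδ, h0]
      · have := hrec m'
        rw [Finset.sum_eq_zero (s := Finset.univ) (f := fun c => if m' c = 0 then (0 : ℂ) else
          ((N : ℂ) + 1 - m' c) * p (Function.update m' c (m' c - 1))), mul_zero, add_zero] at this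
        · exact (mul_eq_zero.1 this).resolve_left (eigenvalue_ne_zero m' hmono hN hδ)
        · intro c _
          split_ifs with hc
          · rfl
          · rw [ih (∑ i, Function.update m' c (m' c - 1) i) ?_ _ rfl, mul_zero]
            rw [← hs']
            apply Finset.sum_lt_sum
            · intro i _
              by_cases hi : i = c
              · subst hi; simp
              · simp [hi]
            · exact ⟨c, Finset.mem_univ _, by simp; omega⟩
    · push Not at hN
      obtain ⟨i, hi⟩ := hN
      exact hdeg _ i hi
  · rw [Function.not_injective_iff] at hinj
    obtain ⟨i, j, hij, hne⟩ := hinj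
    have := hanti m (Equiv.swap i j)
    rw [Equiv.Perm.sign_swap hne] at this
    have h2 : m ∘ (Equiv.swap i j) = m := by
      funext l
      simp only [Function.comp, Equiv.swap_apply_def]
      split_ifs with h h' <;> simp_all
    rw [h2] at this
    simp at this
    linear_combination this / 2
end Uniqueness

/-! ### A Slater determinant solving the recurrence -/

section Candidate

/-- Both sides are the derivative of the determinant at `A` in the direction `E`, expanded along
rows and along columns. -/
theorem sum_det_updateRow {ι R : Type*} [Fintype ι] [DecidableEq ι] [CommRing R]
    (A E : Matrix ι ι R) :
    ∑ c, (A.updateRow c (E c)).det = ∑ p, (A.updateCol p fun i => E i p).det := by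
  have h1 : ∀ c, (A.updateRow c (E c)).det = ∑ j, A.adjugate j c * E c j := by
    intro c
    rw [← cramer_transpose_apply, cramer_eq_adjugate_mulVec, ← adjugate_transpose]
    rfl
  have h2 : ∀ p, (A.updateCol p fun i => E i p).det = ∑ j, A.adjugate p j * E j p := by
    intro c
    rw [← cramer_apply, cramer_eq_adjugate_mulVec]
    rfl
  simp only [h1, h2]
  rw [Finset.sum_comm]

/-- The coefficient of `xᵐ` in `∑_{j ≤ m ≤ N} t ^ (m - j) / (m - j)! xᵐ`, the series of
`xʲ exp (t x)` truncated at degree `N`. -/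
def fCoeff (N : ℕ) (t : ℂ) (j m : ℕ) : ℂ :=
  if j ≤ m ∧ m ≤ N then t ^ (m - j) / ((m - j).factorial : ℂ) else 0

theorem fCoeff_rec (N k : ℕ) (t : ℂ) (j m : ℕ) :
    ((m : ℂ) ^ 2 - (N + k) * m) * fCoeff N t j m +
      t * (if m = 0 then 0 else ((N : ℂ) + 1 - m) * fCoeff N t j (m - 1)) =
    ((j : ℂ) ^ 2 - (N + k) * j) * fCoeff N t j m +
      ((j : ℂ) - k + 1) * t * fCoeff N t (j + 1) m := by
  have hf : ∀ r : ℕ, t * (t ^ r / (r.factorial : ℂ)) = (r + 1) * (t ^ (r + 1) / ((r + 1).factorial : ℂ)) := by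
    intro r
    have h0 : ((r + 1 : ℕ) : ℂ) ≠ 0 := by exact_mod_cast r.succ_ne_zero
    have h1 : (r.factorial : ℂ) ≠ 0 := by exact_mod_cast r.factorial_ne_zero
    rw [Nat.factorial_succ]
    push_cast at h0 ⊢
    field_simp
    ring
  by_cases h : j ≤ m ∧ m ≤ N
  · obtain ⟨r, rfl⟩ := Nat.exists_eq_add_of_le h.1
    rcases r with _ | r
    · have h1 : fCoeff N t j (j + 0 - 1) = 0 ∨ j = 0 := by
        rcases Nat.eq_zero_or_pos j with h | h
        · exact Or.inr h
        · left; rw [fCoeff, if_neg]; omega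
      have h2 : fCoeff N t (j + 1) (j + 0) = 0 := by rw [fCoeff, if_neg]; omega
      rw [h2]
      rcases h1 with h1 | h1
      · rw [h1]; simp
      · simp [h1]
    · have e1 : j + (r + 1) - j = r + 1 := by omega
      have e2 : j + (r + 1) - 1 - j = r := by omega
      have e3 : j + (r + 1) - (j + 1) = r := by omega
      rw [if_neg (by omega), fCoeff, fCoeff, fCoeff, if_pos h, if_pos (by omega),
        if_pos (by omega), e1, e2, e3]
      push_cast
      linear_combination ((N : ℂ) + 1 - (j + (r + 1)) - (j - k + 1)) * hf r
  · have h1 : fCoeff N t j m = 0 := by rw [fCoeff, if_neg h]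
    have h2 : fCoeff N t (j + 1) m = 0 := by rw [fCoeff, if_neg]; omega
    have h3 : (if m = 0 then 0 else ((N : ℂ) + 1 - m) * fCoeff N t j (m - 1)) = 0 := by
      split_ifs with hm
      · rfl
      · by_cases hm' : m = N + 1
        · subst hm'; simp
        · rw [fCoeff, if_neg, mul_zero]; omega
    rw [h1, h2, h3]
    ring

/-- The coefficient of `x ^ m` in the Slater determinant of the truncations at degree `N` of
`xʲ exp (t x)`, `j < k`. -/
def slater (N k : ℕ) (t : ℂ) (m : Fin k → ℕ) : ℂ :=
  (Matrix.of fun i j : Fin k => fCoeff N t j (m i)).det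

theorem slater_anti (N k : ℕ) (t : ℂ) (m : Fin k → ℕ) (σ : Equiv.Perm (Fin k)) :
    slater N k t (m ∘ σ) = (Equiv.Perm.sign σ : ℤ) * slater N k t m :=
  Matrix.det_permute σ (Matrix.of fun i j : Fin k => fCoeff N t j (m i))

theorem slater_deg (N k : ℕ) (t : ℂ) (m : Fin k → ℕ) (i : Fin k) (h : N < m i) :
    slater N k t m = 0 := by
  apply det_eq_zero_of_row_eq_zero i
  intro j
  simp only [of_apply, fCoeff]
  rw [if_neg]
  omega

theorem slater_delta (N k : ℕ) (t : ℂ) (hk : k ≤ N + 1) :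
    slater N k t (fun i : Fin k => (i : ℕ)) = 1 := by
  rw [slater, det_of_isLowerTriangular]
  · apply Finset.prod_eq_one
    intro i _
    have := i.2
    simp only [of_apply, fCoeff]
    rw [if_pos (by omega)]
    simp
  · intro i j hij
    have : (i : ℕ) < j := hij
    simp only [of_apply, fCoeff]
    rw [if_neg]
    omega

/-- The recurrence holds row by row up to a multiple of column `j + 1` in column `j`, by `fCoeff_rec`;
such multiples do not contribute, and for the last column the factor is zero. -/
theorem slater_rec (N k : ℕ) (t : ℂ) (m : Fin k → ℕ) :
    (∑ c, ((m c : ℂ) ^ 2 - (N + k) * m c) -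
        ∑ c : Fin k, (((c : ℕ) : ℂ) ^ 2 - (N + k) * (c : ℕ))) * slater N k t m +
      t * ∑ c, (if m c = 0 then 0 else
        ((N : ℂ) + 1 - m c) * slater N k t (Function.update m c (m c - 1))) = 0 := by
  set A : Matrix (Fin k) (Fin k) ℂ := Matrix.of fun i j : Fin k => fCoeff N t j (m i) with hA
  set E : Matrix (Fin k) (Fin k) ℂ := Matrix.of fun i j : Fin k =>
    ((m i : ℂ) ^ 2 - (N + k) * m i) * fCoeff N t j (m i) +
      t * (if m i = 0 then 0 else ((N : ℂ) + 1 - m i) * fCoeff N t j (m i - 1)) with hE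
  have hrow : ∀ c, (A.updateRow c (E c)).det = ((m c : ℂ) ^ 2 - (N + k) * m c) * slater N k t m +
      t * (if m c = 0 then 0 else
        ((N : ℂ) + 1 - m c) * slater N k t (Function.update m c (m c - 1))) := by
    intro c
    have hEc : E c = ((m c : ℂ) ^ 2 - (N + k) * m c) • A c +
        (t * (if m c = 0 then 0 else ((N : ℂ) + 1 - m c))) •
          (fun j : Fin k => fCoeff N t j (m c - 1)) := by
      funext j
      simp only [hE, hA, of_apply, Pi.add_apply, Pi.smul_apply, smul_eq_mul]
      split_ifs <;> ring
    rw [hEc, det_updateRow_add, det_updateRow_smul, det_updateRow_smul, updateRow_eq_self]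
    have : A.updateRow c (fun j : Fin k => fCoeff N t j (m c - 1)) =
        Matrix.of fun i j : Fin k => fCoeff N t j (Function.update m c (m c - 1) i) := by
      ext i j
      by_cases h : i = c
      · subst h; simp
      · simp [h, hA]
    rw [this]
    simp only [slater]
    split_ifs <;> ring
  have hcol : ∀ p : Fin k, (A.updateCol p fun i => E i p).det =
      (((p : ℕ) : ℂ) ^ 2 - (N + k) * (p : ℕ)) * slater N k t m := by
    intro p
    have hEp : (fun i => E i p) = (((p : ℕ) : ℂ) ^ 2 - (N + k) * (p : ℕ)) • (fun i => A i p) +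
        ((((p : ℕ) : ℂ) - k + 1) * t) • (fun i => fCoeff N t (p + 1) (m i)) := by
      funext i
      simp only [hE, hA, of_apply, Pi.add_apply, Pi.smul_apply, smul_eq_mul]
      rw [fCoeff_rec]
    rw [hEp, det_updateCol_add, det_updateCol_smul, det_updateCol_smul, updateCol_eq_self]
    rw [show A.det = slater N k t m from rfl]
    by_cases hp : (p : ℕ) + 1 < k
    · rw [det_zero_of_column_eq (i := p) (j := ⟨p + 1, hp⟩), mul_zero, add_zero]
      · simp [Fin.ext_iff]
      · intro i
        have : (⟨p + 1, hp⟩ : Fin k) ≠ p := by simp [Fin.ext_iff]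
        rw [updateCol_self, updateCol_ne this]
        rfl
    · have h1 : (p : ℕ) + 1 = k := by have := p.2; omega
      have h2 : (((p : ℕ) : ℂ) - k + 1) = 0 := by
        have h3 : (k : ℂ) = ((p : ℕ) : ℂ) + 1 := by exact_mod_cast h1.symm
        rw [h3]; ring
      rw [h2]
      ring
  have key := sum_det_updateRow A E
  simp only [hrow, hcol] at key
  rw [Finset.sum_add_distrib, ← Finset.sum_mul, ← Finset.sum_mul, ← Finset.mul_sum] at key
  linear_combination key

end Candidate

/-! ### The second order operator on polynomials -/

section Operator
open MvPolynomial

/-- The Euler derivation `x_c ∂/∂x_c`. -/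
def theta {k : ℕ} (c : Fin k) : Derivation ℂ (MvPolynomial (Fin k) ℂ) (MvPolynomial (Fin k) ℂ) :=
  (X c : MvPolynomial (Fin k) ℂ) • pderiv c

theorem theta_monomial {k : ℕ} (c : Fin k) (s : Fin k →₀ ℕ) (a : ℂ) :
    theta c (monomial s a) = monomial s ((s c : ℂ) * a) := by
  rw [theta, Derivation.smul_apply, pderiv_monomial, smul_eq_mul, X, monomial_mul]
  by_cases h : s c = 0
  · simp [h]
  · have h1 : Finsupp.single c 1 + (s - Finsupp.single c 1) = s :=
      add_tsub_cancel_of_le (Finsupp.single_le_iff.2 (Nat.one_le_iff_ne_zero.2 h))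
    rw [h1, one_mul, mul_comm]

theorem coeff_theta {k : ℕ} (c : Fin k) (m : Fin k →₀ ℕ) (Q : MvPolynomial (Fin k) ℂ) :
    coeff m (theta c Q) = (m c : ℂ) * coeff m Q := by
  induction Q using MvPolynomial.induction_on' with
  | monomial s a =>
    rw [theta_monomial, coeff_monomial, coeff_monomial]
    split_ifs with h
    · rw [h]
    · simp
  | add p q hp hq => rw [map_add, coeff_add, coeff_add, hp, hq, mul_add]

theorem theta_X {k : ℕ} (c i : Fin k) :
    theta c (X i) = if i = c then X c else 0 := by
  rw [theta, Derivation.smul_apply, pderiv_X, smul_eq_mul, Pi.single_apply]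
  split_ifs with h <;> simp_all

theorem theta_aeval {k : ℕ} (c i : Fin k) (d : Polynomial ℂ) :
    theta c (Polynomial.aeval (X i) d) =
      if i = c then X c * Polynomial.aeval (X c) (Polynomial.derivative d) else 0 := by
  rw [Derivation.map_aeval, theta_X]
  split_ifs with h
  · subst h; rw [smul_eq_mul, mul_comm]
  · simp

/-- The operator `∑_c (θ_c² - (N + k) θ_c + t x_c (N - θ_c))` minus the constant by which its part of
degree zero acts on the Vandermonde determinant. -/
def opL (N k : ℕ) (t : ℂ) (Q : MvPolynomial (Fin k) ℂ) : MvPolynomial (Fin k) ℂ :=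
  ∑ c, (theta c (theta c Q) - C ((N : ℂ) + k) * theta c Q +
      X c * (C (t * N) * Q - C t * theta c Q)) -
    C (∑ c : Fin k, (((c : ℕ) : ℂ) ^ 2 - (N + k) * (c : ℕ))) * Q

theorem coeff_opL (N k : ℕ) (t : ℂ) (Q : MvPolynomial (Fin k) ℂ) (m : Fin k →₀ ℕ) :
    coeff m (opL N k t Q) =
      (∑ c, ((m c : ℂ) ^ 2 - (N + k) * m c) -
        ∑ c : Fin k, (((c : ℕ) : ℂ) ^ 2 - (N + k) * (c : ℕ))) * coeff m Q +
      t * ∑ c, (if m c = 0 then 0 else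
        ((N : ℂ) + 1 - m c) * coeff (m - Finsupp.single c 1) Q) := by
  rw [opL, coeff_sub, coeff_sum, coeff_C_mul, sub_mul, Finset.sum_mul Finset.univ (fun c => (m c : ℂ) ^ 2 - _),
    Finset.mul_sum, sub_add_eq_add_sub, ← Finset.sum_add_distrib]
  congr 1
  apply Finset.sum_congr rfl
  intro c _
  rw [coeff_add, coeff_sub, coeff_C_mul, coeff_theta, coeff_theta, coeff_X_mul', coeff_sub,
    coeff_C_mul, coeff_C_mul, coeff_theta]
  by_cases h : m c = 0
  · simp [h]
  · rw [if_pos (by simpa using h), if_neg h]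
    have : (((m - Finsupp.single c 1 : Fin k →₀ ℕ) c : ℕ) : ℂ) = m c - 1 := by
      rw [Finsupp.tsub_apply, Finsupp.single_eq_same, Nat.cast_sub (by omega)]; simp
    rw [this]
    ring

theorem coeff_prod_aeval {k : ℕ} (F : Fin k → Polynomial ℂ) (m : Fin k →₀ ℕ) :
    coeff m (∏ i, Polynomial.aeval (X i : MvPolynomial (Fin k) ℂ) (F i)) =
      ∏ i, (F i).coeff (m i) := by
  have h1 : ∀ i, Polynomial.aeval (X i : MvPolynomial (Fin k) ℂ) (F i) =
      ∑ a ∈ (F i).support, monomial (Finsupp.single i a) ((F i).coeff a) := by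
    intro i
    rw [Polynomial.aeval_def, Polynomial.eval₂_eq_sum, Polynomial.sum]
    apply Finset.sum_congr rfl
    intro a _
    rw [algebraMap_eq, X_pow_eq_monomial, C_mul_monomial, mul_one]
  simp only [h1]
  rw [Finset.prod_univ_sum, coeff_sum]
  have h2 : ∀ p : Fin k → ℕ, coeff m (∏ i, monomial (Finsupp.single i (p i)) ((F i).coeff (p i))) =
      if p = m then ∏ i, (F i).coeff (m i) else 0 := by
    intro p
    have h3 : ∏ i, monomial (Finsupp.single i (p i)) ((F i).coeff (p i)) =
        monomial (∑ i, Finsupp.single i (p i)) (∏ i, (F i).coeff (p i)) := by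
      rw [monomial_sum_index, map_prod, ← Finset.prod_mul_distrib]
      simp only [C_mul_monomial, mul_one]
    have h4 : ∑ i, Finsupp.single i (p i) = Finsupp.equivFunOnFinite.symm p := by
      rw [Finsupp.equivFunOnFinite_symm_eq_sum]
    rw [h3, h4, coeff_monomial]
    by_cases h : p = m
    · subst h; simp
    · rw [if_neg h, if_neg]
      rintro rfl
      exact h rfl
  simp only [h2]
  rw [Finset.sum_ite_eq']
  split_ifs with h
  · rfl
  · symm
    simp only [Fintype.mem_piFinset, Polynomial.mem_support_iff, not_forall, not_not] at h
    obtain ⟨i, hi⟩ := h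
    exact Finset.prod_eq_zero (Finset.mem_univ i) hi

/-- The Slater determinant `det (F_j (x_i))` of univariate polynomials. -/
def slaterPoly {k : ℕ} (F : Fin k → Polynomial ℂ) : MvPolynomial (Fin k) ℂ :=
  (Matrix.of fun i j : Fin k => Polynomial.aeval (X i : MvPolynomial (Fin k) ℂ) (F j)).det

theorem coeff_slaterPoly {k : ℕ} (F : Fin k → Polynomial ℂ) (m : Fin k →₀ ℕ) :
    coeff m (slaterPoly F) = (Matrix.of fun i j : Fin k => (F j).coeff (m i)).det := by
  rw [slaterPoly, ← det_transpose, det_apply, coeff_sum, ← det_transpose, det_apply]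
  apply Finset.sum_congr rfl
  intro σ _
  rw [coeff_smul]
  simp only [transpose_apply, of_apply]
  rw [coeff_prod_aeval (fun i => F (σ i))]

/-- The Vandermonde determinant `Δ(x) = det (x_i ^ j)`. -/
def vdm (k : ℕ) : MvPolynomial (Fin k) ℂ :=
  slaterPoly fun j : Fin k => (Polynomial.X : Polynomial ℂ) ^ (j : ℕ)

theorem vdm_eq (k : ℕ) : vdm k = (vandermonde (X : Fin k → MvPolynomial (Fin k) ℂ)).det := by
  rw [vdm, slaterPoly]
  congr 1
  ext1 i j
  simp [vandermonde_apply]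

theorem slaterPoly_mul {k : ℕ} (F : Fin k → Polynomial ℂ) (d : Polynomial ℂ) :
    slaterPoly (fun j => F j * d) = slaterPoly F * ∏ i, Polynomial.aeval (X i) d := by
  rw [mul_comm, slaterPoly, slaterPoly, ← det_mul_column]
  congr 1
  ext1 i j
  simp [mul_comm]

theorem eval_vdm_ne_zero {k : ℕ} (x : Fin k → ℂ) (hx : Function.Injective x) :
    eval x (vdm k) ≠ 0 := by
  rw [vdm_eq, RingHom.map_det]
  have : (eval x).mapMatrix (vandermonde (X : Fin k → MvPolynomial (Fin k) ℂ)) = vandermonde x := by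
    ext i j; simp [vandermonde_apply]
  rw [this]
  exact det_vandermonde_ne_zero_iff.2 hx

/-- Monomials occurring in the Vandermonde determinant have exponents a permutation of
`0, …, k - 1`. -/
theorem coeff_vdm_support {k : ℕ} (m : Fin k →₀ ℕ) (f : ℕ → ℂ) :
    (∑ c, f (m c)) * coeff m (vdm k) = (∑ c : Fin k, f c) * coeff m (vdm k) := by
  rw [vdm, coeff_slaterPoly, det_apply, Finset.mul_sum, Finset.mul_sum]
  apply Finset.sum_congr rfl
  intro σ _
  by_cases h : ∀ i, m (σ i) = i
  · congr 1
    rw [← Equiv.sum_comp σ]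
    simp only [h]
  · push Not at h
    obtain ⟨i, hi⟩ := h
    rw [Finset.prod_eq_zero (Finset.mem_univ i), smul_zero, mul_zero, mul_zero]
    simp [Polynomial.coeff_X_pow, hi]

theorem sum_theta_vdm (k : ℕ) :
    ∑ c, theta c (vdm k) = C (∑ c : Fin k, ((c : ℕ) : ℂ)) * vdm k := by
  ext m
  simp only [coeff_sum, coeff_theta, coeff_C_mul]
  rw [← Finset.sum_mul]
  exact coeff_vdm_support m (fun a => (a : ℂ))

theorem sum_theta_theta_vdm (k : ℕ) :
    ∑ c, theta c (theta c (vdm k)) = C (∑ c : Fin k, ((c : ℕ) : ℂ) ^ 2) * vdm k := by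
  ext m
  simp only [coeff_sum, coeff_theta, coeff_C_mul, ← mul_assoc]
  rw [← Finset.sum_mul]
  have := coeff_vdm_support m (fun a => (a : ℂ) ^ 2)
  simp only [sq] at this ⊢
  exact this

theorem eval_derivation_prod {k : ℕ} {ι : Type*} [DecidableEq ι] (s : Finset ι)
    (D : Derivation ℂ (MvPolynomial (Fin k) ℂ) (MvPolynomial (Fin k) ℂ))
    (f : ι → MvPolynomial (Fin k) ℂ) (x : Fin k → ℂ) (h : ∀ i ∈ s, eval x (f i) ≠ 0) :
    eval x (D (∏ i ∈ s, f i)) = eval x (∏ i ∈ s, f i) * ∑ i ∈ s, eval x (D (f i)) / eval x (f i) := by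
  induction s using Finset.induction_on with
  | empty => simp
  | insert a s ha ih =>
    have h0 := h a (Finset.mem_insert_self a s)
    rw [Finset.prod_insert ha, Derivation.leibniz, Finset.sum_insert ha, map_add, smul_eq_mul,
      smul_eq_mul, map_mul, map_mul, map_mul, ih fun i hi => h i (Finset.mem_insert_of_mem hi)]
    field_simp
    ring

theorem eval_theta_vdm {k : ℕ} (x : Fin k → ℂ) (hx : Function.Injective x) (c : Fin k) :
    eval x (theta c (vdm k)) =
      eval x (vdm k) * ∑ i ∈ Finset.univ.erase c, x c / (x c - x i) := by
  have hne : ∀ i j, i ≠ j → x j - x i ≠ 0 := fun i j h h' => h (hx (sub_eq_zero.1 h').symm)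
  rw [vdm_eq, det_vandermonde, Finset.prod_sigma', eval_derivation_prod]
  · congr 1
    rw [Finset.sum_sigma]
    have : ∀ i j : Fin k, eval x (theta c (X j - X i)) / eval x (X j - X i) =
        (if j = c then x c / (x c - x i) else 0) + (if i = c then x c / (x c - x j) else 0) := by
      intro i j
      rw [map_sub, theta_X, theta_X]
      by_cases h1 : j = c <;> by_cases h2 : i = c
      · subst h1; subst h2; simp
      · subst h1; simp [h2]
      · subst h2; simp [h1]; rw [← neg_sub, neg_div_neg_eq]
      · simp [h1, h2]
    simp only [this]
    have h2 : ∀ i : Fin k, ∀ f : Fin k → ℂ, ∑ j ∈ Finset.Ioi i, f j = ∑ j, if i < j then f j else 0 := by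
      intro i f
      rw [← Finset.sum_filter]
      congr 1
      ext; simp
    have h3 : ∑ i ∈ Finset.univ.erase c, x c / (x c - x i) =
        ∑ i, if i ≠ c then x c / (x c - x i) else 0 := by
      rw [← Finset.sum_filter]
      congr 1
      ext; simp
    have h4 : ∀ i j : Fin k, (if i < j then
        ((if j = c then x c / (x c - x i) else 0) + (if i = c then x c / (x c - x j) else 0)) else 0) =
        (if j = c then (if i < c then x c / (x c - x i) else 0) else 0) +
        (if i = c then (if c < j then x c / (x c - x j) else 0) else 0) := by
      intro i j
      split_ifs <;> simp_all
    simp only [h2, h3, h4, Finset.sum_add_distrib, Finset.sum_ite_eq', Finset.mem_univ, if_true]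
    rw [Finset.sum_comm (f := fun i j => if i = c then (if c < j then x c / (x c - x j) else 0) else 0)]
    simp only [Finset.sum_ite_eq', Finset.mem_univ, if_true]
    rw [← Finset.sum_add_distrib]
    apply Finset.sum_congr rfl
    intro i _
    rcases lt_trichotomy i c with h | h | h
    · rw [if_pos h, if_neg h.not_gt, if_pos h.ne, add_zero]
    · simp [h]
    · rw [if_neg h.not_gt, if_pos h, if_pos h.ne', zero_add]
  · rintro ⟨i, j⟩ h
    simp only [Finset.mem_sigma, Finset.mem_univ, true_and, Finset.mem_Ioi] at h
    simpa using hne i j h.ne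

end Operator

/-! ### The operator on multiples of the Vandermonde determinant -/

section OperatorEval
open MvPolynomial

theorem sum_erase_swap {k : ℕ} (g : Fin k → Fin k → ℂ) :
    ∑ c, ∑ i ∈ Finset.univ.erase c, g c i = ∑ c, ∑ i ∈ Finset.univ.erase c, g i c := by
  have : ∀ g : Fin k → Fin k → ℂ, ∑ c, ∑ i ∈ Finset.univ.erase c, g c i =
      ∑ c, ∑ i, if i ≠ c then g c i else 0 := by
    intro g
    apply Finset.sum_congr rfl
    intro c _
    rw [← Finset.sum_filter]
    congr 1
    ext; simp
  rw [this, this, Finset.sum_comm]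
  simp only [ne_comm]

theorem sum_pair {k : ℕ} (x f : Fin k → ℂ) (hx : Function.Injective x) :
    ∑ c, ∑ i ∈ Finset.univ.erase c, x i * (f c - f i) / (x c - x i) =
      ∑ c, (2 * (∑ i ∈ Finset.univ.erase c, x c / (x c - x i)) - ((k : ℂ) - 1)) * f c := by
  have h1 : ∑ c, ∑ i ∈ Finset.univ.erase c, x i * (f c - f i) / (x c - x i) =
      ∑ c, ∑ i ∈ Finset.univ.erase c, (x i + x c) / (x c - x i) * f c := by
    have h2 : ∀ c i, x i * (f c - f i) / (x c - x i) =
      x i / (x c - x i) * f c - x i / (x c - x i) * f i := by intros; ring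
    simp only [h2, Finset.sum_sub_distrib]
    rw [sum_erase_swap (fun c i => x i / (x c - x i) * f i), ← Finset.sum_sub_distrib]
    apply Finset.sum_congr rfl
    intro c _
    rw [← Finset.sum_sub_distrib]
    apply Finset.sum_congr rfl
    intro i _
    rw [← neg_sub (x c) (x i), div_neg]
    ring
  rw [h1]
  apply Finset.sum_congr rfl
  intro c _
  rw [← Finset.sum_mul]
  congr 1
  have h3 : ∀ i ∈ Finset.univ.erase c, (x i + x c) / (x c - x i) = 2 * (x c / (x c - x i)) - 1 := by
    intro i hi
    have : x c - x i ≠ 0 := fun h => (Finset.ne_of_mem_erase hi) (hx (sub_eq_zero.1 h).symm)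
    field_simp
    ring
  rw [Finset.sum_congr rfl h3, Finset.sum_sub_distrib, ← Finset.mul_sum]
  congr 1
  rw [Finset.sum_const, Finset.card_erase_of_mem (Finset.mem_univ c), Finset.card_univ, Fintype.card_fin]
  have := c.2
  rw [nsmul_eq_mul, Nat.cast_sub (by omega)]
  simp

theorem sum_x_v {k : ℕ} (x : Fin k → ℂ) (hx : Function.Injective x) :
    ∑ c, x c * (∑ i ∈ Finset.univ.erase c, x c / (x c - x i)) = ((k : ℂ) - 1) * ∑ c, x c := by
  have h := sum_pair x x hx
  have h1 : ∑ c, ∑ i ∈ Finset.univ.erase c, x i * (x c - x i) / (x c - x i) =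
      ∑ c, ∑ i ∈ Finset.univ.erase c, x i := by
    refine Finset.sum_congr rfl fun c _ => Finset.sum_congr rfl fun i hi => ?_
    have : x c - x i ≠ 0 := fun h => (Finset.ne_of_mem_erase hi) (hx (sub_eq_zero.1 h).symm)
    field_simp
  have h2 : ∑ c, ∑ i ∈ Finset.univ.erase c, x i = ((k : ℂ) - 1) * ∑ c, x c := by
    rw [sum_erase_swap fun c i => x i, Finset.mul_sum]
    apply Finset.sum_congr rfl
    intro c _
    rw [Finset.sum_const, Finset.card_erase_of_mem (Finset.mem_univ c), Finset.card_univ, Fintype.card_fin]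
    have := c.2
    rw [nsmul_eq_mul, Nat.cast_sub (by omega)]
    simp
  rw [h1, h2] at h
  have h3 : ∑ c, (2 * (∑ i ∈ Finset.univ.erase c, x c / (x c - x i)) - ((k : ℂ) - 1)) * x c =
      2 * (∑ c, x c * (∑ i ∈ Finset.univ.erase c, x c / (x c - x i))) - ((k : ℂ) - 1) * ∑ c, x c := by
    rw [Finset.mul_sum, Finset.mul_sum, ← Finset.sum_sub_distrib]
    apply Finset.sum_congr rfl
    intros; ring
  rw [h3] at h
  linear_combination -h / 2

/-- The operator conjugated by the Vandermonde determinant: a sum over `c` of second order operators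
with two-body terms. -/
theorem eval_opL_vdm_mul (n N k : ℕ) (hN : N + 1 = n + k) (t : ℂ) (x : Fin k → ℂ)
    (hx : Function.Injective x) (W : MvPolynomial (Fin k) ℂ) :
    eval x (opL N k t (vdm k * W)) = eval x (vdm k) *
      ∑ c, (eval x (theta c (theta c W)) +
        ∑ i ∈ Finset.univ.erase c,
          x i * (eval x (theta c W) - eval x (theta i W)) / (x c - x i) +
        t * x c * (n * eval x W - eval x (theta c W)) -
        ∑ i, eval x (theta i W) - n * eval x (theta c W)) := by
  have hNc : (N : ℂ) = n + k - 1 := by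
    have : ((N + 1 : ℕ) : ℂ) = ((n + k : ℕ) : ℂ) := by rw [hN]
    push_cast at this
    linear_combination this
  have e1 := congrArg (eval x) (sum_theta_vdm k)
  have e2 := congrArg (eval x) (sum_theta_theta_vdm k)
  have hpair := sum_pair x (fun c => eval x (theta c W)) hx
  have hxv := sum_x_v x hx
  simp only [map_sum, map_mul, eval_C, eval_theta_vdm x hx] at e1 e2
  simp only [opL, map_sub, map_sum, map_add, map_mul, eval_C, eval_X, Derivation.leibniz,
    smul_eq_mul, eval_theta_vdm x hx]
  obtain ⟨v, hv⟩ : ∃ v : Fin k → ℂ, v = fun c => ∑ i ∈ Finset.univ.erase c, x c / (x c - x i) := ⟨_, rfl⟩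
  obtain ⟨f, hf⟩ : ∃ f : Fin k → ℂ, f = fun c => eval x (theta c W) := ⟨_, rfl⟩
  have hv' : ∀ c, ∑ i ∈ Finset.univ.erase c, x c / (x c - x i) = v c := fun c => by rw [hv]
  have hf' : ∀ c, eval x (theta c W) = f c := fun c => by rw [hf]
  simp only [hv', hf'] at *
  generalize eval x W = w at *
  generalize eval x (vdm k) = D at *
  generalize hu : (fun c => eval x (theta c (theta c (vdm k)))) = u at *
  have hu' : ∀ c, eval x (theta c (theta c (vdm k))) = u c := fun c => by rw [← hu]
  generalize hg : (fun c => eval x (theta c (theta c W))) = g at *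
  have hg' : ∀ c, eval x (theta c (theta c W)) = g c := fun c => by rw [← hg]
  simp only [hu', hg'] at *
  have hL : ∑ c, (D * g c + f c * (D * v c) + (w * u c + D * v c * f c) -
        ((N : ℂ) + k) * (D * f c + w * (D * v c)) +
        x c * (t * N * (D * w) - t * (D * f c + w * (D * v c)))) =
      D * ∑ c, g c + D * ∑ c, (2 * v c - ((k : ℂ) - 1)) * f c + w * ∑ c, u c -
        w * ((N : ℂ) + k) * ∑ c, D * v c + (k - 1 - (N + k)) * D * ∑ c, f c +
        t * N * D * w * ∑ c, x c - t * D * ∑ c, x c * f c - t * D * w * ∑ c, x c * v c := by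
    simp only [Finset.mul_sum, ← Finset.sum_add_distrib, ← Finset.sum_sub_distrib]
    apply Finset.sum_congr rfl
    intros
    ring
  have hR : ∑ c, (g c + ∑ i ∈ Finset.univ.erase c, x i * (f c - f i) / (x c - x i) +
        t * x c * (n * w - f c) - ∑ i, f i - n * f c) =
      ∑ c, g c + ∑ c, (2 * v c - ((k : ℂ) - 1)) * f c + t * n * w * ∑ c, x c -
        t * ∑ c, x c * f c - (k + n) * ∑ c, f c := by
    have hk : (k : ℂ) * ∑ c, f c = ∑ _c : Fin k, ∑ i, f i := by
      rw [Finset.sum_const, Finset.card_univ, Fintype.card_fin, nsmul_eq_mul]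
    rw [← hpair, add_mul, hk]
    rw [Finset.mul_sum, Finset.mul_sum, Finset.mul_sum, ← Finset.sum_add_distrib,
      ← Finset.sum_add_distrib, ← Finset.sum_sub_distrib, ← Finset.sum_add_distrib,
      ← Finset.sum_sub_distrib]
    apply Finset.sum_congr rfl
    intros
    ring
  have hE : ∑ c : Fin k, (((c : ℕ) : ℂ) ^ 2 - ((N : ℂ) + k) * (c : ℕ)) =
      ∑ c : Fin k, ((c : ℕ) : ℂ) ^ 2 - (N + k) * ∑ c : Fin k, ((c : ℕ) : ℂ) := by
    rw [Finset.mul_sum, ← Finset.sum_sub_distrib]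
  rw [hL, hR, hE, hxv, e1, e2, hNc]
  ring

theorem eval_aeval_X {k : ℕ} (x : Fin k → ℂ) (c : Fin k) (g : Polynomial ℂ) :
    eval x (Polynomial.aeval (X c : MvPolynomial (Fin k) ℂ) g) = g.eval (x c) := by
  rw [Polynomial.aeval_def, Polynomial.hom_eval₂, eval_X, algebraMap_eq,
    Polynomial.eval, show (eval x).comp C = RingHom.id ℂ from by ext; simp]

theorem theta_prod_mul_aeval {k : ℕ} (c : Fin k) (d g : Polynomial ℂ) :
    theta c ((∏ i ∈ Finset.univ.erase c, Polynomial.aeval (X i) d) * Polynomial.aeval (X c) g) =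
      (∏ i ∈ Finset.univ.erase c, Polynomial.aeval (X i) d) *
        Polynomial.aeval (X c) (Polynomial.X * Polynomial.derivative g) := by
  have h : ∀ s : Finset (Fin k), c ∉ s → theta c (∏ i ∈ s, Polynomial.aeval (X i) d) = 0 := by
    intro s
    induction s using Finset.induction_on with
    | empty => simp
    | insert a s ha ih =>
      intro hc
      rw [Finset.mem_insert, not_or] at hc
      rw [Finset.prod_insert ha, Derivation.leibniz, ih hc.2, theta_aeval, if_neg (Ne.symm hc.1)]
      simp
  rw [Derivation.leibniz, h _ (Finset.notMem_erase c _), theta_aeval, if_pos rfl, map_mul,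
    Polynomial.aeval_X]
  simp

theorem prod_aeval_eq {k : ℕ} (c : Fin k) (d : Polynomial ℂ) :
    ∏ i, Polynomial.aeval (X i : MvPolynomial (Fin k) ℂ) d =
      (∏ i ∈ Finset.univ.erase c, Polynomial.aeval (X i) d) * Polynomial.aeval (X c) d :=
  (Finset.prod_erase_mul _ _ (Finset.mem_univ c)).symm

theorem eval_theta_prod {k : ℕ} (x : Fin k → ℂ) (c : Fin k) (d : Polynomial ℂ) (q : ℂ)
    (hq : x c * d.derivative.eval (x c) = d.eval (x c) * q) :
    eval x (theta c (∏ i, Polynomial.aeval (X i) d)) = (∏ i, d.eval (x i)) * q := by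
  rw [prod_aeval_eq c, theta_prod_mul_aeval, map_mul, eval_aeval_X, map_prod,
    ← Finset.prod_erase_mul _ _ (Finset.mem_univ c)]
  simp only [eval_aeval_X]
  rw [Polynomial.eval_mul, Polynomial.eval_X, hq]
  ring

theorem eval_theta_theta_prod {k : ℕ} (x : Fin k → ℂ) (c : Fin k) (d : Polynomial ℂ) (q : ℂ)
    (hq : x c * (Polynomial.X * d.derivative).derivative.eval (x c) = d.eval (x c) * q) :
    eval x (theta c (theta c (∏ i, Polynomial.aeval (X i) d))) = (∏ i, d.eval (x i)) * q := by
  rw [prod_aeval_eq c, theta_prod_mul_aeval, theta_prod_mul_aeval, map_mul, eval_aeval_X, map_prod,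
    ← Finset.prod_erase_mul _ _ (Finset.mem_univ c)]
  simp only [eval_aeval_X]
  rw [Polynomial.eval_mul, Polynomial.eval_X, hq]
  ring

end OperatorEval

/-! ### The unitary group and invariant integration -/

section Haar
open scoped Matrix.Norms.L2Operator

instance (n : ℕ) : BorelSpace (Matrix.unitaryGroup (Fin n) ℂ) := ⟨rfl⟩

theorem norm_le_one_of_unitary {n : ℕ} {U : Matrix (Fin n) (Fin n) ℂ}
    (hU : U ∈ unitaryGroup (Fin n) ℂ) : ‖U‖ ≤ 1 := by
  rcases subsingleton_or_nontrivial (Matrix (Fin n) (Fin n) ℂ) with h | h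
  · rw [Subsingleton.elim U 0, norm_zero]; exact zero_le_one
  · exact (CStarRing.norm_of_mem_unitary hU).le

instance (n : ℕ) : CompactSpace (Matrix.unitaryGroup (Fin n) ℂ) := by
  apply isCompact_iff_compactSpace.1
  apply Metric.isCompact_of_isClosed_isBounded
  · exact isClosed_unitary
  · rw [Metric.isBounded_iff_subset_closedBall 0]
    refine ⟨1, fun U hU => ?_⟩
    rw [mem_closedBall_zero_iff]
    exact norm_le_one_of_unitary hU

theorem isUnit_one_add_smul {n : ℕ} (M : unitaryGroup (Fin n) ℂ) (z : ℂ) (hz : ‖z‖ < 1) :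
    IsUnit ((1 : Matrix (Fin n) (Fin n) ℂ) + z • (M : Matrix (Fin n) (Fin n) ℂ)).det := by
  rw [← Matrix.isUnit_iff_isUnit_det]
  have : ‖-(z • (M : Matrix (Fin n) (Fin n) ℂ))‖ < 1 := by
    rw [norm_neg, norm_smul]
    have := norm_le_one_of_unitary M.2
    nlinarith [norm_nonneg z]
  have h := isUnit_one_sub_of_norm_lt_one this
  rwa [sub_neg_eq_add] at h

theorem HasDerivAt.matrix_det {n : ℕ} {C : ℝ → Matrix (Fin n) (Fin n) ℂ} {C' : Matrix (Fin n) (Fin n) ℂ}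
    {s : ℝ} (h : HasDerivAt C C' s) (hu : IsUnit (C s).det) :
    HasDerivAt (fun s => (C s).det) ((C s).det * ((C s)⁻¹ * C').trace) s := by
  have he : ∀ i j, HasDerivAt (fun s => C s i j) (C' i j) s := fun i j =>
    (entryLinearMap ℝ ℂ i j : Matrix (Fin n) (Fin n) ℂ →ₗ[ℝ] ℂ).toContinuousLinearMap.hasFDerivAt.comp_hasDerivAt s h
  have h1 : HasDerivAt (fun s => (C s).det) (∑ σ : Equiv.Perm (Fin n), (Equiv.Perm.sign σ : ℂ) *
      ∑ i, (∏ j ∈ Finset.univ.erase i, C s (σ j) j) • C' (σ i) i) s := by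
    simp only [det_apply']
    exact HasDerivAt.fun_sum fun σ _ => (HasDerivAt.fun_finsetProd fun i _ => he (σ i) i).const_mul _
  convert! h1 using 1
  have h2 : (C s).det * ((C s)⁻¹ * C').trace = ∑ p, ((C s).updateCol p fun i => C' i p).det := by
    have h3 : ∀ p, ((C s).updateCol p fun i => C' i p).det = ∑ j, (C s).adjugate p j * C' j p := by
      intro c
      rw [← cramer_apply, cramer_eq_adjugate_mulVec]
      rfl
    have h4 : (C s).det • (C s)⁻¹ = (C s).adjugate := by
      rw [inv_def, smul_smul, Ring.mul_inverse_cancel _ hu, one_smul]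
    rw [← smul_eq_mul, ← trace_smul, ← smul_mul_assoc, h4, trace]
    simp only [h3, diag_apply, mul_apply]
  rw [h2]
  simp only [det_apply', Finset.mul_sum]
  rw [Finset.sum_comm]
  refine Finset.sum_congr rfl fun σ _ => Finset.sum_congr rfl fun p _ => ?_
  rw [← Finset.mul_prod_erase _ _ (Finset.mem_univ p), updateCol_self, smul_eq_mul, mul_comm (C' _ _)]
  congr 2
  refine Finset.prod_congr rfl fun j hj => ?_
  rw [updateCol_ne (Finset.ne_of_mem_erase hj)]

theorem HasDerivAt.matrix_inv {n : ℕ} {C : ℝ → Matrix (Fin n) (Fin n) ℂ} {C' : Matrix (Fin n) (Fin n) ℂ}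
    {s : ℝ} (h : HasDerivAt C C' s) (hu : IsUnit (C s).det) :
    HasDerivAt (fun s => (C s)⁻¹) (-((C s)⁻¹ * C' * (C s)⁻¹)) s := by
  obtain ⟨u, hu'⟩ := (Matrix.isUnit_iff_isUnit_det _).2 hu
  have h1 := hasFDerivAt_ringInverse (𝕜 := ℝ) u
  rw [hu'] at h1
  have h2 := h1.comp_hasDerivAt s h
  simp only [nonsing_inv_eq_ringInverse]
  convert! h2 using 1
  simp [← hu']

/-- The one-parameter subgroup `exp (s X)` of the unitary group, for `X` skew-Hermitian. -/
def expCurve {n : ℕ} (X : Matrix (Fin n) (Fin n) ℂ) (hX : X ∈ skewAdjoint (Matrix (Fin n) (Fin n) ℂ))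
    (s : ℝ) : unitaryGroup (Fin n) ℂ :=
  ⟨NormedSpace.exp (s • X),
    letI := NormedAlgebra.restrictScalars ℚ ℂ (Matrix (Fin n) (Fin n) ℂ)
    NormedSpace.exp_mem_unitary_of_mem_skewAdjoint (skewAdjoint.smul_mem s hX)⟩

theorem expCurve_add {n : ℕ} (X : Matrix (Fin n) (Fin n) ℂ)
    (hX : X ∈ skewAdjoint (Matrix (Fin n) (Fin n) ℂ)) (r s : ℝ) :
    expCurve X hX (r + s) = expCurve X hX r * expCurve X hX s := by
  apply Subtype.ext
  change NormedSpace.exp ((r + s) • X) = NormedSpace.exp (r • X) * NormedSpace.exp (s • X)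
  rw [add_smul, Matrix.exp_add_of_commute]
  exact ((Commute.refl X).smul_left r).smul_right s

theorem expCurve_zero {n : ℕ} (X : Matrix (Fin n) (Fin n) ℂ)
    (hX : X ∈ skewAdjoint (Matrix (Fin n) (Fin n) ℂ)) : expCurve X hX 0 = 1 := by
  apply Subtype.ext
  change NormedSpace.exp ((0 : ℝ) • X) = 1
  rw [zero_smul, NormedSpace.exp_zero]

theorem hasDerivAt_expCurve {n : ℕ} (X : Matrix (Fin n) (Fin n) ℂ)
    (hX : X ∈ skewAdjoint (Matrix (Fin n) (Fin n) ℂ)) :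
    HasDerivAt (fun s : ℝ => (expCurve X hX s : Matrix (Fin n) (Fin n) ℂ)) X 0 := by
  have := hasDerivAt_exp_smul_const (𝕂 := ℝ) X (0 : ℝ)
  rw [zero_smul, NormedSpace.exp_zero, one_mul] at this
  exact this

/-- Left invariance of the measure: derivatives along left translations integrate to zero. -/
theorem integral_deriv_eq_zero {n : ℕ} (μ : Measure (unitaryGroup (Fin n) ℂ)) [IsProbabilityMeasure μ]
    [μ.IsMulLeftInvariant] (X : Matrix (Fin n) (Fin n) ℂ)
    (hX : X ∈ skewAdjoint (Matrix (Fin n) (Fin n) ℂ)) (F F' : unitaryGroup (Fin n) ℂ → ℂ)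
    (hF : Continuous F) (hF' : Continuous F')
    (hd : ∀ M, HasDerivAt (fun s : ℝ => F (expCurve X hX s * M)) (F' M) 0) :
    ∫ M, F' M ∂μ = 0 := by
  obtain ⟨B, hB⟩ := isCompact_univ.exists_bound_of_continuousOn hF'.continuousOn
  have hd' : ∀ M, ∀ s : ℝ, HasDerivAt (fun s : ℝ => F (expCurve X hX s * M))
      (F' (expCurve X hX s * M)) s := by
    intro M s
    have h1 := hd (expCurve X hX s * M)
    rw [← sub_self s] at h1
    have h3 := h1.comp_sub_const s s
    convert! h3 using 1
    funext r
    rw [← mul_assoc, ← expCurve_add, sub_add_cancel]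
  have hcont : ∀ G : unitaryGroup (Fin n) ℂ → ℂ, Continuous G → AEStronglyMeasurable G μ :=
    fun G hG => hG.aestronglyMeasurable
  have key := hasDerivAt_integral_of_dominated_loc_of_deriv_le (μ := μ) (𝕜 := ℝ)
    (F := fun s M => F (expCurve X hX s * M)) (F' := fun s M => F' (expCurve X hX s * M))
    (x₀ := 0) (s := Set.univ) (bound := fun _ => B) Filter.univ_mem
    (Filter.Eventually.of_forall fun s => hcont _ (hF.comp (continuous_const.mul continuous_id)))
    ?_ (hcont _ (hF'.comp (continuous_const.mul continuous_id)))
    (Filter.Eventually.of_forall fun M s _ => hB _ (Set.mem_univ _)) (integrable_const B)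
    (Filter.Eventually.of_forall fun M s _ => hd' M s)
  · have h1 := key.2
    simp only [integral_mul_left_eq_self] at h1
    exact h1.unique (hasDerivAt_const 0 _)
  · simp only [expCurve_zero, one_mul]
    exact hF.integrable_of_hasCompactSupport (HasCompactSupport.of_compactSpace F)

end Haar

/-! ### Derivatives of the weight and of the resolvent -/

section SD
open scoped Matrix.Norms.L2Operator

/-- The resolvent `(1 + z M)⁻¹`. It is a genuine inverse for `M` unitary and `‖z‖ < 1`. -/
def res {n : ℕ} (z : ℂ) (M : Matrix (Fin n) (Fin n) ℂ) : Matrix (Fin n) (Fin n) ℂ :=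
  (1 + z • M)⁻¹

/-- The integrand `∏ᵢ det (1 + xᵢ M) · exp (t * tr Mᴴ)`. -/
def wt {n k : ℕ} (x : Fin k → ℂ) (t : ℂ) (M : Matrix (Fin n) (Fin n) ℂ) : ℂ :=
  (∏ i, (1 + x i • M).det) * Complex.exp (t * (Mᴴ).trace)

/-- The logarithmic gradient of `wt`: along `M ↦ exp(sX) M` the logarithmic derivative of `wt x t`
is `tr (lgrad x t M * X)`. -/
def lgrad {n k : ℕ} (x : Fin k → ℂ) (t : ℂ) (M : Matrix (Fin n) (Fin n) ℂ) :
    Matrix (Fin n) (Fin n) ℂ :=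
  ∑ i, (1 - res (x i) M) - t • Mᴴ

theorem continuous_coe_unitary (n : ℕ) :
    Continuous fun M : unitaryGroup (Fin n) ℂ => (M : Matrix (Fin n) (Fin n) ℂ) :=
  continuous_subtype_val

theorem continuous_res {n : ℕ} (z : ℂ) (hz : ‖z‖ < 1) :
    Continuous fun M : unitaryGroup (Fin n) ℂ => res z (M : Matrix (Fin n) (Fin n) ℂ) := by
  have h := continuous_coe_unitary n
  have hc : Continuous fun M : unitaryGroup (Fin n) ℂ =>
      (1 : Matrix (Fin n) (Fin n) ℂ) + z • (M : Matrix (Fin n) (Fin n) ℂ) :=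
    continuous_const.add (h.const_smul z)
  simp only [res, inv_def, Ring.inverse_eq_inv']
  exact (hc.matrix_det.inv₀ fun M => (isUnit_one_add_smul M z hz).ne_zero).smul hc.matrix_adjugate

theorem continuous_wt {n k : ℕ} (x : Fin k → ℂ) (t : ℂ) :
    Continuous fun M : unitaryGroup (Fin n) ℂ => wt x t (M : Matrix (Fin n) (Fin n) ℂ) := by
  have h := continuous_coe_unitary n
  refine Continuous.mul (continuous_finsetProd _ fun i _ => ?_) ?_
  · exact (continuous_const.add (h.const_smul (x i))).matrix_det
  · exact Complex.continuous_exp.comp (continuous_const.mul h.matrix_conjTranspose.matrix_trace)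

theorem continuous_lgrad {n k : ℕ} (x : Fin k → ℂ) (hx : ∀ i, ‖x i‖ < 1) (t : ℂ) :
    Continuous fun M : unitaryGroup (Fin n) ℂ => lgrad x t (M : Matrix (Fin n) (Fin n) ℂ) := by
  have h := continuous_coe_unitary n
  exact (continuous_finsetSum _ fun i _ => continuous_const.sub (continuous_res (x i) (hx i))).sub
    (h.matrix_conjTranspose.const_smul t)

theorem smul_mul_res {n : ℕ} (z : ℂ) (hz : ‖z‖ < 1) (M : unitaryGroup (Fin n) ℂ) :
    z • ((M : Matrix (Fin n) (Fin n) ℂ) * res z M) = 1 - res z M := by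
  have h := mul_nonsing_inv _ (isUnit_one_add_smul M z hz)
  rw [add_mul, one_mul, smul_mul_assoc] at h
  rw [res, eq_sub_iff_add_eq, add_comm]
  exact h

theorem smul_res_mul {n : ℕ} (z : ℂ) (hz : ‖z‖ < 1) (M : unitaryGroup (Fin n) ℂ) :
    z • (res z M * (M : Matrix (Fin n) (Fin n) ℂ)) = 1 - res z M := by
  have h := nonsing_inv_mul _ (isUnit_one_add_smul M z hz)
  rw [mul_add, mul_one, mul_smul_comm] at h
  rw [res, eq_sub_iff_add_eq, add_comm]
  exact h

theorem hasDerivAt_curve {n : ℕ} (X : Matrix (Fin n) (Fin n) ℂ)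
    (hX : X ∈ skewAdjoint (Matrix (Fin n) (Fin n) ℂ)) (M : unitaryGroup (Fin n) ℂ) (z : ℂ) :
    HasDerivAt (fun s : ℝ => 1 + z • ((expCurve X hX s * M : unitaryGroup (Fin n) ℂ) :
      Matrix (Fin n) (Fin n) ℂ)) (z • (X * M)) 0 :=
  (((hasDerivAt_expCurve X hX).mul_const (M : Matrix (Fin n) (Fin n) ℂ)).const_smul z).const_add 1

theorem curve_zero {n : ℕ} (X : Matrix (Fin n) (Fin n) ℂ)
    (hX : X ∈ skewAdjoint (Matrix (Fin n) (Fin n) ℂ)) (M : unitaryGroup (Fin n) ℂ) :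
    expCurve X hX 0 * M = M := by rw [expCurve_zero, one_mul]

theorem hasDerivAt_res {n : ℕ} (X : Matrix (Fin n) (Fin n) ℂ)
    (hX : X ∈ skewAdjoint (Matrix (Fin n) (Fin n) ℂ)) (M : unitaryGroup (Fin n) ℂ) (z : ℂ)
    (hz : ‖z‖ < 1) :
    HasDerivAt (fun s : ℝ => res z ((expCurve X hX s * M : unitaryGroup (Fin n) ℂ) :
      Matrix (Fin n) (Fin n) ℂ)) (-(z • (res z (M : Matrix (Fin n) (Fin n) ℂ) * X *
        ((M : Matrix (Fin n) (Fin n) ℂ) * res z M)))) 0 := by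
  have h := (hasDerivAt_curve X hX M z).matrix_inv (isUnit_one_add_smul _ z hz)
  simp only [curve_zero] at h
  convert! h using 1
  simp only [res, mul_assoc, smul_mul_assoc, mul_smul_comm]

theorem hasDerivAt_wt {n k : ℕ} (X : Matrix (Fin n) (Fin n) ℂ)
    (hX : X ∈ skewAdjoint (Matrix (Fin n) (Fin n) ℂ)) (M : unitaryGroup (Fin n) ℂ)
    (x : Fin k → ℂ) (hx : ∀ i, ‖x i‖ < 1) (t : ℂ) :
    HasDerivAt (fun s : ℝ => wt x t ((expCurve X hX s * M : unitaryGroup (Fin n) ℂ) :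
      Matrix (Fin n) (Fin n) ℂ)) (wt x t (M : Matrix (Fin n) (Fin n) ℂ) * (lgrad x t M * X).trace) 0 := by
  have h1 : ∀ i, HasDerivAt (fun s : ℝ => (1 + x i • ((expCurve X hX s * M : unitaryGroup (Fin n) ℂ) :
      Matrix (Fin n) (Fin n) ℂ)).det)
      ((1 + x i • (M : Matrix (Fin n) (Fin n) ℂ)).det * ((1 - res (x i) M) * X).trace) 0 := by
    intro i
    have h := (hasDerivAt_curve X hX M (x i)).matrix_det (isUnit_one_add_smul _ (x i) (hx i))
    simp only [curve_zero] at h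
    convert! h using 2
    rw [← smul_mul_res (x i) (hx i), mul_smul_comm, trace_smul, smul_mul_assoc, trace_smul, res,
      mul_assoc, Matrix.trace_mul_cycle', Matrix.trace_mul_cycle']
  have h2 : HasDerivAt (fun s : ℝ => (((expCurve X hX s * M : unitaryGroup (Fin n) ℂ) :
      Matrix (Fin n) (Fin n) ℂ)ᴴ).trace) (-((M : Matrix (Fin n) (Fin n) ℂ)ᴴ * X).trace) 0 := by
    have h3 := (hasDerivAt_expCurve X hX).mul_const (M : Matrix (Fin n) (Fin n) ℂ)
    have h4 := (traceLinearMap (Fin n) ℝ ℂ).toContinuousLinearMap.hasFDerivAt.comp_hasDerivAt 0 h3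
    have h5 := h4.star
    convert! h5 using 1
    · funext s
      exact trace_conjTranspose _
    · rw [← trace_neg, ← mul_neg]
      change _ = star (X * (M : Matrix (Fin n) (Fin n) ℂ)).trace
      rw [← trace_conjTranspose, conjTranspose_mul]
      congr 2
      exact (skewAdjoint.mem_iff.1 hX).symm
  have h6 := (HasDerivAt.fun_finsetProd (u := Finset.univ) fun i _ => h1 i).mul
    ((h2.const_mul t).cexp)
  simp only [curve_zero] at h6
  convert! h6 using 1
  have h7 : ∑ i, (∏ j ∈ Finset.univ.erase i, (1 + x j • (M : Matrix (Fin n) (Fin n) ℂ)).det) •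
      ((1 + x i • (M : Matrix (Fin n) (Fin n) ℂ)).det * ((1 - res (x i) M) * X).trace) =
      (∏ i, (1 + x i • (M : Matrix (Fin n) (Fin n) ℂ)).det) *
        ∑ i, ((1 - res (x i) M) * X).trace := by
    rw [Finset.mul_sum]
    refine Finset.sum_congr rfl fun i _ => ?_
    rw [smul_eq_mul, ← mul_assoc, Finset.prod_erase_mul _ _ (Finset.mem_univ i)]
  rw [h7, wt, lgrad, sub_mul, trace_sub, smul_mul_assoc, trace_smul, Finset.sum_mul, trace_sum,
    smul_eq_mul]
  ring

end SD

/-! ### Schwinger–Dyson equations -/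

section SD2
open scoped Matrix.Norms.L2Operator

theorem integrable_unitary {n : ℕ} (μ : Measure (unitaryGroup (Fin n) ℂ)) [IsProbabilityMeasure μ]
    {F : unitaryGroup (Fin n) ℂ → ℂ} (hF : Continuous F) : Integrable F μ :=
  hF.integrable_of_hasCompactSupport (HasCompactSupport.of_compactSpace F)

/-- The derivative of `wt x t M * (res y M) a b` along `M ↦ exp(sX) M` at `s = 0`. The formula is
complex linear in `X`, which extends its vanishing mean from skew-Hermitian to arbitrary `X`. -/
def vari {n k : ℕ} (x : Fin k → ℂ) (t y : ℂ) (a b : Fin n) (X M : Matrix (Fin n) (Fin n) ℂ) : ℂ :=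
  wt x t M * ((lgrad x t M * X).trace * res y M a b - y * (res y M * X * (M * res y M)) a b)

theorem continuous_vari {n k : ℕ} (x : Fin k → ℂ) (hx : ∀ i, ‖x i‖ < 1) (t y : ℂ) (hy : ‖y‖ < 1)
    (a b : Fin n) (X : Matrix (Fin n) (Fin n) ℂ) :
    Continuous fun M : unitaryGroup (Fin n) ℂ => vari x t y a b X M := by
  have h := continuous_coe_unitary n
  have hR := continuous_res (n := n) y hy
  refine (continuous_wt x t).mul (Continuous.sub (Continuous.mul ?_ (hR.matrix_elem a b))
    (continuous_const.mul (Continuous.matrix_elem ?_ a b)))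
  · exact ((continuous_lgrad x hx t).mul continuous_const).matrix_trace
  · exact (hR.mul continuous_const).mul (h.mul hR)

theorem integral_vari_skew {n k : ℕ} (μ : Measure (unitaryGroup (Fin n) ℂ)) [IsProbabilityMeasure μ]
    [μ.IsMulLeftInvariant] (x : Fin k → ℂ) (hx : ∀ i, ‖x i‖ < 1) (t y : ℂ) (hy : ‖y‖ < 1)
    (a b : Fin n) (X : Matrix (Fin n) (Fin n) ℂ)
    (hX : X ∈ skewAdjoint (Matrix (Fin n) (Fin n) ℂ)) :
    ∫ M : unitaryGroup (Fin n) ℂ, vari x t y a b X M ∂μ = 0 := by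
  refine integral_deriv_eq_zero μ X hX (fun M => wt x t M.1 *
    res y M.1 a b) _
    ((continuous_wt x t).mul ((continuous_res y hy).matrix_elem a b))
    (continuous_vari x hx t y hy a b X) fun M => ?_
  have h1 := hasDerivAt_wt X hX M x hx t
  have h2 := hasDerivAt_res X hX M y hy
  have h3 := (entryLinearMap ℝ ℂ a b :
    Matrix (Fin n) (Fin n) ℂ →ₗ[ℝ] ℂ).toContinuousLinearMap.hasFDerivAt.comp_hasDerivAt 0 h2
  have h4 := h1.mul h3
  simp only [curve_zero, Function.comp] at h4
  convert! h4 using 1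
  rw [vari]
  change _ = _ * res y M.1 a b + _ * (-(y • (res y M.1 * X *
        (M.1 * res y M.1)))) a b
  rw [Matrix.neg_apply, Matrix.smul_apply, smul_eq_mul]
  ring

theorem vari_add {n k : ℕ} (x : Fin k → ℂ) (t y : ℂ) (a b : Fin n)
    (X Y M : Matrix (Fin n) (Fin n) ℂ) (z : ℂ) :
    vari x t y a b (X + z • Y) M = vari x t y a b X M + z * vari x t y a b Y M := by
  simp only [vari, mul_add, add_mul, trace_add, Matrix.add_apply, mul_smul_comm, smul_mul_assoc,
    trace_smul, Matrix.smul_apply, smul_eq_mul]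
  ring

theorem integral_vari {n k : ℕ} (μ : Measure (unitaryGroup (Fin n) ℂ)) [IsProbabilityMeasure μ]
    [μ.IsMulLeftInvariant] (x : Fin k → ℂ) (hx : ∀ i, ‖x i‖ < 1) (t y : ℂ) (hy : ‖y‖ < 1)
    (a b : Fin n) (X : Matrix (Fin n) (Fin n) ℂ) :
    ∫ M : unitaryGroup (Fin n) ℂ, vari x t y a b X M ∂μ = 0 := by
  obtain ⟨A, hA⟩ : ∃ A : Matrix (Fin n) (Fin n) ℂ, A = (1 / 2 : ℂ) • (X - Xᴴ) := ⟨_, rfl⟩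
  obtain ⟨B, hB⟩ : ∃ B : Matrix (Fin n) (Fin n) ℂ, B = (-Complex.I / 2) • (X + Xᴴ) := ⟨_, rfl⟩
  have hX : X = A + Complex.I • B := by
    rw [hA, hB, smul_smul, show Complex.I * (-Complex.I / 2) = 1 / 2 by
      linear_combination (-1 / 2) * Complex.I_mul_I, ← smul_add, sub_add_add_cancel, ← two_smul ℂ,
      smul_smul]
    norm_num
  have hAs : A ∈ skewAdjoint (Matrix (Fin n) (Fin n) ℂ) := by
    rw [skewAdjoint.mem_iff, hA, star_smul, star_eq_conjTranspose, conjTranspose_sub,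
      conjTranspose_conjTranspose, ← smul_neg, neg_sub]
    congr 1
    simp
  have hBs : B ∈ skewAdjoint (Matrix (Fin n) (Fin n) ℂ) := by
    rw [skewAdjoint.mem_iff, hB, star_smul, star_eq_conjTranspose, conjTranspose_add,
      conjTranspose_conjTranspose, ← neg_smul, add_comm]
    congr 1
    simp
    ring
  simp only [hX, vari_add]
  rw [integral_add (integrable_unitary μ (continuous_vari x hx t y hy a b A))
    ((integrable_unitary μ (continuous_vari x hx t y hy a b B)).const_mul _), integral_const_mul,
    integral_vari_skew μ x hx t y hy a b A hAs, integral_vari_skew μ x hx t y hy a b B hBs]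
  simp

theorem sum_vari {n k : ℕ} (x : Fin k → ℂ) (t y : ℂ) (hy : ‖y‖ < 1) (M : unitaryGroup (Fin n) ℂ) :
    ∑ a, ∑ b, vari x t y a b (Matrix.single a b 1) M.1 =
      wt x t M.1 * ((lgrad x t M.1 * res y M.1).trace -
        (res y M.1).trace * ((n : ℂ) - (res y M.1).trace)) := by
  have h1 : ∀ a b : Fin n, (lgrad x t M.1 * Matrix.single a b 1).trace =
      lgrad x t M.1 b a := by
    intro a b
    rw [trace_mul_single]; simp
  have h2 : ∀ (a b : Fin n) (A B : Matrix (Fin n) (Fin n) ℂ),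
      (A * Matrix.single a b (1 : ℂ) * B) a b = A a a * B b b := by
    intro a b A B
    rw [mul_apply, Finset.sum_eq_single b]
    · rw [mul_single_apply_same, mul_one]
    · intro j _ hj
      rw [mul_single_apply_of_ne _ _ _ _ _ hj, zero_mul]
    · simp
  have h3 : y * (M.1 * res y M.1).trace =
      n - (res y M.1).trace := by
    rw [← smul_eq_mul, ← trace_smul, smul_mul_res y hy, trace_sub, trace_one, Fintype.card_fin]
  simp only [vari, h1, h2, ← Finset.mul_sum, Finset.sum_sub_distrib]
  congr 2
  · rw [Finset.sum_comm, trace]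
    simp only [diag_apply, mul_apply]
  · rw [← h3]
    simp only [trace, diag_apply, Finset.mul_sum, Finset.sum_mul]
    rw [Finset.sum_comm]
    refine Finset.sum_congr rfl fun a _ => Finset.sum_congr rfl fun b _ => ?_
    ring

/-- The Schwinger–Dyson equation, from summing `integral_vari` over the matrix units. -/
theorem schwinger_dyson {n k : ℕ} (μ : Measure (unitaryGroup (Fin n) ℂ)) [IsProbabilityMeasure μ]
    [μ.IsMulLeftInvariant] (x : Fin k → ℂ) (hx : ∀ i, ‖x i‖ < 1) (t y : ℂ) (hy : ‖y‖ < 1) :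
    ∫ M : unitaryGroup (Fin n) ℂ, wt x t M.1 * ((lgrad x t M.1 * res y M.1).trace -
        (res y M.1).trace * ((n : ℂ) - (res y M.1).trace)) ∂μ = 0 := by
  simp only [← sum_vari x t y hy]
  rw [integral_finsetSum _ fun a _ => integrable_unitary μ (continuous_finsetSum _ fun b _ =>
    continuous_vari x hx t y hy a b _)]
  refine Finset.sum_eq_zero fun a _ => ?_
  rw [integral_finsetSum _ fun b _ => integrable_unitary μ (continuous_vari x hx t y hy a b _)]
  exact Finset.sum_eq_zero fun b _ => integral_vari μ x hx t y hy a b _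

theorem schwinger_dyson_trace {n k : ℕ} (μ : Measure (unitaryGroup (Fin n) ℂ)) [IsProbabilityMeasure μ]
    [μ.IsMulLeftInvariant] (x : Fin k → ℂ) (hx : ∀ i, ‖x i‖ < 1) (t : ℂ) :
    ∫ M : unitaryGroup (Fin n) ℂ, wt x t M.1 * (lgrad x t M.1).trace ∂μ = 0 := by
  have h := schwinger_dyson μ x hx t 0 (by simp)
  simpa [res] using h

/-- The `c`-th summand of `opL N k t` applied to `Δ(x) ∏ᵢ det (1 + xᵢ M)`, divided by that product.
The logarithmic derivative `x d/dx` of `det (1 + x M)` is `n - tr (res x M)`. -/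
def bracket {n k : ℕ} (x : Fin k → ℂ) (t : ℂ) (c : Fin k) (M : Matrix (Fin n) (Fin n) ℂ) : ℂ :=
  (((n : ℂ) - (res (x c) M).trace) ^ 2 + (res (x c) M - res (x c) M * res (x c) M).trace) +
    ∑ i ∈ Finset.univ.erase c,
      x i * (((n : ℂ) - (res (x c) M).trace) - ((n : ℂ) - (res (x i) M).trace)) / (x c - x i) +
    t * x c * (n - ((n : ℂ) - (res (x c) M).trace)) -
    ∑ i, ((n : ℂ) - (res (x i) M).trace) - n * ((n : ℂ) - (res (x c) M).trace)

theorem bracket_eq {n k : ℕ} (x : Fin k → ℂ) (hx : ∀ i, ‖x i‖ < 1) (hinj : Function.Injective x)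
    (t : ℂ) (c : Fin k) (M : unitaryGroup (Fin n) ℂ) :
    bracket x t c M.1 = ((lgrad x t M.1 * res (x c) M.1).trace -
        (res (x c) M.1).trace *
          ((n : ℂ) - (res (x c) M.1).trace)) -
      (lgrad x t M.1).trace := by
  have hstar : (M.1ᴴ * res (x c) M.1).trace =
      (M.1ᴴ).trace - x c * (res (x c) M.1).trace := by
    have h1 : M.1ᴴ * M.1 = 1 :=
      mem_unitaryGroup_iff'.1 M.2
    have h2 := congrArg (fun A => M.1ᴴ * A) (smul_mul_res (x c) (hx c) M)
    simp only [mul_smul_comm, ← mul_assoc, h1, one_mul, mul_sub, mul_one] at h2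
    rw [← smul_eq_mul (x c), ← trace_smul, h2, trace_sub]
    ring
  have hpair : ∀ i ∈ Finset.univ.erase c, ((1 - res (x i) M.1) * res (x c) M.1).trace =
      x i * (((n : ℂ) - (res (x c) M.1).trace) -
        ((n : ℂ) - (res (x i) M.1).trace)) / (x c - x i) := by
    intro i hi
    have hne : x c - x i ≠ 0 := fun h => (Finset.ne_of_mem_erase hi) (hinj (sub_eq_zero.1 h).symm)
    have h1 : x c • ((1 - res (x i) M.1) * res (x c) M.1) = x i • (res (x i) M.1 * (1 - res (x c) M.1)) := by
      rw [← smul_res_mul (x i) (hx i), ← smul_mul_res (x c) (hx c)]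
      simp only [smul_mul_assoc, mul_smul_comm, mul_assoc]
      rw [smul_comm]
    have h2 := congrArg trace h1
    simp only [sub_mul, mul_sub, one_mul, mul_one, trace_smul, trace_sub, smul_eq_mul] at h2 ⊢
    rw [eq_div_iff hne]
    linear_combination h2
  have hlg : (lgrad x t M.1 * res (x c) M.1).trace =
      ∑ i, ((1 - res (x i) M.1) * res (x c) M.1).trace -
        t * ((M.1ᴴ).trace - x c * (res (x c) M.1).trace) := by
    rw [lgrad, sub_mul, trace_sub, Finset.sum_mul, trace_sum, smul_mul_assoc, trace_smul, hstar,
      smul_eq_mul]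
  have hl : (lgrad x t M.1).trace =
      ∑ i, ((n : ℂ) - (res (x i) M.1).trace) -
        t * (M.1ᴴ).trace := by
    rw [lgrad, trace_sub, trace_sum, trace_smul, smul_eq_mul]
    simp only [trace_sub, trace_one, Fintype.card_fin]
  rw [bracket, hlg, hl, ← Finset.add_sum_erase _ (fun i => trace ((1 - res (x i) M.1) * _)) (Finset.mem_univ c), Finset.sum_congr rfl hpair,
    sub_mul, one_mul]
  ring

theorem integral_bracket {n k : ℕ} (μ : Measure (unitaryGroup (Fin n) ℂ)) [IsProbabilityMeasure μ]
    [μ.IsMulLeftInvariant] (x : Fin k → ℂ) (hx : ∀ i, ‖x i‖ < 1) (hinj : Function.Injective x)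
    (t : ℂ) (c : Fin k) :
    Integrable (fun M : unitaryGroup (Fin n) ℂ =>
      wt x t M.1 * bracket x t c M.1) μ ∧
    ∫ M : unitaryGroup (Fin n) ℂ, wt x t M.1 *
      bracket x t c M.1 ∂μ = 0 := by
  have hR := continuous_res (n := n) (x c) (hx c)
  have hL := continuous_lgrad (n := n) x hx t
  have hw := continuous_wt (n := n) x t
  have hc1 : Continuous fun M : unitaryGroup (Fin n) ℂ => wt x t M.1 *
      ((lgrad x t M.1 * res (x c) M.1).trace -
        (res (x c) M.1).trace *
          ((n : ℂ) - (res (x c) M.1).trace)) :=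
    hw.mul ((hL.mul hR).matrix_trace.sub (hR.matrix_trace.mul (continuous_const.sub hR.matrix_trace)))
  have hc2 : Continuous fun M : unitaryGroup (Fin n) ℂ => wt x t M.1 *
      (lgrad x t M.1).trace := hw.mul hL.matrix_trace
  simp only [bracket_eq x hx hinj, mul_sub (wt x t _) (_ - _) (trace _)]
  refine ⟨(integrable_unitary μ hc1).sub (integrable_unitary μ hc2), ?_⟩
  rw [integral_sub (integrable_unitary μ hc1) (integrable_unitary μ hc2),
    schwinger_dyson μ x hx t (x c) (hx c), schwinger_dyson_trace μ x hx t, sub_zero]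

end SD2

/-! ### Normalization, and the polynomial `det (1 + z M)` -/

section Norm
open scoped Matrix.Norms.L2Operator

theorem integral_trace_conj {n : ℕ} (μ : Measure (unitaryGroup (Fin n) ℂ)) [IsProbabilityMeasure μ]
    [μ.IsMulLeftInvariant] :
    ∫ M : unitaryGroup (Fin n) ℂ, (M.1ᴴ).trace ∂μ = 0 := by
  have h := integral_mul_left_eq_self (μ := μ) (fun M : unitaryGroup (Fin n) ℂ => (M.1ᴴ).trace) (-1)
  have h1 : ∀ M : unitaryGroup (Fin n) ℂ, (((-1 : unitaryGroup (Fin n) ℂ) * M).1ᴴ).trace =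
      -(M.1ᴴ).trace := by
    intro M
    rw [neg_one_mul, ← trace_neg, ← conjTranspose_neg]
    rfl
  simp only [h1, integral_neg] at h
  linear_combination (-1 / 2 : ℂ) * h

theorem continuous_trace_conj (n : ℕ) :
    Continuous fun M : unitaryGroup (Fin n) ℂ => (M.1ᴴ).trace :=
  (continuous_coe_unitary n).matrix_conjTranspose.matrix_trace

/-- For `t ≠ 0` this is the Schwinger–Dyson equation with no determinant factors. -/
theorem integral_trace_conj_mul_exp {n : ℕ} (μ : Measure (unitaryGroup (Fin n) ℂ))
    [IsProbabilityMeasure μ] [μ.IsMulLeftInvariant] (t : ℂ) :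
    ∫ M : unitaryGroup (Fin n) ℂ, (M.1ᴴ).trace * Complex.exp (t * (M.1ᴴ).trace) ∂μ = 0 := by
  by_cases ht : t = 0
  · simpa [ht] using integral_trace_conj μ
  · have h := schwinger_dyson_trace μ (Fin.elim0 : Fin 0 → ℂ) (fun i => i.elim0) t
    have h1 : ∀ M : unitaryGroup (Fin n) ℂ, wt (Fin.elim0 : Fin 0 → ℂ) t M.1 *
        (lgrad (Fin.elim0 : Fin 0 → ℂ) t M.1).trace =
        (-t) * ((M.1ᴴ).trace * Complex.exp (t * (M.1ᴴ).trace)) := by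
      intro M
      simp [wt, lgrad]
      ring
    simp only [h1] at h
    rw [integral_const_mul] at h
    exact (mul_eq_zero.1 h).resolve_left (neg_ne_zero.2 ht)

/-- The integral does not depend on `t`, because its derivative vanishes by
`integral_trace_conj_mul_exp`. -/
theorem integral_exp_trace {n : ℕ} (μ : Measure (unitaryGroup (Fin n) ℂ))
    [IsProbabilityMeasure μ] [μ.IsMulLeftInvariant] (t : ℂ) :
    ∫ M : unitaryGroup (Fin n) ℂ, Complex.exp (t * (M.1ᴴ).trace) ∂μ = 1 := by
  have hc := continuous_trace_conj n
  have hcE : ∀ s : ℂ, Continuous fun M : unitaryGroup (Fin n) ℂ => Complex.exp (s * (M.1ᴴ).trace) :=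
    fun s => Complex.continuous_exp.comp (continuous_const.mul hc)
  have hd : ∀ s : ℂ, HasDerivAt (fun s : ℂ => ∫ M : unitaryGroup (Fin n) ℂ,
      Complex.exp (s * (M.1ᴴ).trace) ∂μ) 0 s := by
    intro s
    obtain ⟨B, hB⟩ := isCompact_univ.exists_bound_of_continuousOn hc.continuousOn
    have key := hasDerivAt_integral_of_dominated_loc_of_deriv_le (μ := μ) (𝕜 := ℂ)
      (F := fun s (M : unitaryGroup (Fin n) ℂ) => Complex.exp (s * (M.1ᴴ).trace))
      (F' := fun s (M : unitaryGroup (Fin n) ℂ) => (M.1ᴴ).trace * Complex.exp (s * (M.1ᴴ).trace))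
      (x₀ := s) (s := Metric.ball s 1) (bound := fun _ => B * Real.exp ((‖s‖ + 1) * B))
      (Metric.ball_mem_nhds s one_pos)
      (Filter.Eventually.of_forall fun s => (hcE s).aestronglyMeasurable)
      (integrable_unitary μ (hcE s)) ((hc.mul (hcE s)).aestronglyMeasurable)
      (Filter.Eventually.of_forall fun M s' hs' => ?_) (integrable_const _)
      (Filter.Eventually.of_forall fun M s' _ => ?_)
    · rw [integral_trace_conj_mul_exp] at key
      exact key.2
    · have hB' := hB M (Set.mem_univ _)
      have h1 : ‖s'‖ ≤ ‖s‖ + 1 := by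
        have h2 : ‖s' - s‖ < 1 := by simpa [dist_eq_norm] using hs'
        have := norm_sub_norm_le s' s
        linarith
      rw [norm_mul]
      refine mul_le_mul hB' ?_ (norm_nonneg _) ((norm_nonneg _).trans hB')
      rw [Complex.norm_exp, Real.exp_le_exp]
      refine (Complex.re_le_norm _).trans ?_
      rw [norm_mul]
      exact mul_le_mul h1 hB' (norm_nonneg _) (by positivity)
    · have := ((hasDerivAt_id s').mul_const ((M.1ᴴ).trace)).cexp
      simpa [mul_comm] using this
  have hconst := is_const_of_deriv_eq_zero (fun s => (hd s).differentiableAt) (fun s => (hd s).deriv) t 0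
  rw [hconst]
  simp

end Norm

section DPol
open scoped Matrix.Norms.L2Operator

/-- The polynomial `det (1 + X M)` in the variable `X`. -/
def dpol {n : ℕ} (M : Matrix (Fin n) (Fin n) ℂ) : Polynomial ℂ :=
  ((Polynomial.X : Polynomial ℂ) • M.map Polynomial.C + (1 : Matrix (Fin n) (Fin n) ℂ).map Polynomial.C).det

theorem natDegree_dpol {n : ℕ} (M : Matrix (Fin n) (Fin n) ℂ) : (dpol M).natDegree ≤ n := by
  exact (Polynomial.natDegree_det_X_add_C_le M 1).trans (by simp)

theorem eval_dpol {n : ℕ} (M : Matrix (Fin n) (Fin n) ℂ) (z : ℂ) :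
    (dpol M).eval z = (1 + z • M).det := by
  rw [dpol, ← Polynomial.coe_evalRingHom, RingHom.map_det]
  congr 1
  ext i j
  simp [add_comm, Matrix.one_apply]
  split_ifs <;> simp [mul_comm]

theorem coeff_zero_dpol {n : ℕ} (M : Matrix (Fin n) (Fin n) ℂ) : (dpol M).coeff 0 = 1 := by
  rw [Polynomial.coeff_zero_eq_eval_zero, eval_dpol]
  simp

/-- All coefficients of a polynomial depending on a parameter are continuous in the parameter. -/
def CoeffCont {T : Type*} [TopologicalSpace T] (f : T → Polynomial ℂ) : Prop :=
  ∀ m, Continuous fun M => (f M).coeff m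

theorem CoeffCont.mul {T : Type*} [TopologicalSpace T] {f g : T → Polynomial ℂ} (hf : CoeffCont f)
    (hg : CoeffCont g) : CoeffCont fun M => f M * g M := by
  intro m
  simp only [Polynomial.coeff_mul]
  exact continuous_finsetSum _ fun p _ => (hf p.1).mul (hg p.2)

theorem CoeffCont.prod {T ι : Type*} [TopologicalSpace T] (s : Finset ι) {f : ι → T → Polynomial ℂ}
    (hf : ∀ i, CoeffCont (f i)) : CoeffCont fun M => ∏ i ∈ s, f i M := by
  classical
  induction s using Finset.induction_on with
  | empty => intro m; simpa using continuous_const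
  | insert a s ha ih =>
    simp only [Finset.prod_insert ha]
    exact (hf a).mul ih

theorem coeffCont_dpol {n : ℕ} :
    CoeffCont fun M : Matrix (Fin n) (Fin n) ℂ => dpol M := by
  intro m
  simp only [dpol, det_apply, Polynomial.finsetSum_coeff, Polynomial.coeff_smul]
  refine continuous_finsetSum _ fun σ _ => Continuous.const_smul ?_ _
  refine CoeffCont.prod Finset.univ (fun i m => ?_) m
  have : Continuous fun M : Matrix (Fin n) (Fin n) ℂ => M (σ i) i :=
    continuous_id.matrix_elem _ _
  simp only [Matrix.add_apply, Matrix.smul_apply, Polynomial.coeff_add, Matrix.map_apply,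
    smul_eq_mul]
  refine Continuous.add ?_ continuous_const
  rcases m with _ | m
  · simpa using continuous_const
  · simp only [Polynomial.coeff_X_mul, Polynomial.coeff_C]
    split_ifs
    · exact this
    · exact continuous_const

theorem hasDerivAt_line (z : ℂ) : HasDerivAt (fun s : ℝ => z + (s : ℂ)) 1 0 := by
  simpa using (Complex.ofRealCLM.hasDerivAt (x := (0 : ℝ))).const_add z

theorem hasDerivAt_eval_line (p : Polynomial ℂ) (z : ℂ) :
    HasDerivAt (fun s : ℝ => p.eval (z + (s : ℂ))) (p.derivative.eval z) 0 := by
  have h1 := p.hasDerivAt (z + ((0 : ℝ) : ℂ))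
  have := h1.scomp (0 : ℝ) (hasDerivAt_line z)
  simpa [Function.comp_def] using this

theorem hasDerivAt_line_matrix {n : ℕ} (M : Matrix (Fin n) (Fin n) ℂ) (z : ℂ) :
    HasDerivAt (fun s : ℝ => 1 + (z + (s : ℂ)) • M) M 0 := by
  simpa using ((hasDerivAt_line z).smul_const M).const_add 1

theorem dpol_derivative {n : ℕ} (M : unitaryGroup (Fin n) ℂ) (z : ℂ) (hz : ‖z‖ < 1) :
    z * (dpol M.1).derivative.eval z = (dpol M.1).eval z * ((n : ℂ) - (res z M.1).trace) := by
  have h1 := hasDerivAt_eval_line (dpol M.1) z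
  have h2 := (hasDerivAt_line_matrix M.1 z).matrix_det (by simpa using isUnit_one_add_smul M z hz)
  simp only [eval_dpol] at h1 ⊢
  rw [h1.unique h2]
  have h3 := congrArg trace (smul_res_mul z hz M)
  rw [trace_smul, trace_sub, trace_one, Fintype.card_fin, smul_eq_mul] at h3
  rw [← h3, res]
  simp
  ring

theorem dpol_derivative2 {n : ℕ} (M : unitaryGroup (Fin n) ℂ) (z : ℂ) (hz : ‖z‖ < 1) :
    z * (Polynomial.X * (dpol M.1).derivative).derivative.eval z = (dpol M.1).eval z *
      (((n : ℂ) - (res z M.1).trace) ^ 2 + (res z M.1 - res z M.1 * res z M.1).trace) := by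
  have h1 := hasDerivAt_eval_line (Polynomial.X * (dpol M.1).derivative) z
  have h0 := hasDerivAt_eval_line (dpol M.1) z
  have hr := (hasDerivAt_line_matrix M.1 z).matrix_inv (by simpa using isUnit_one_add_smul M z hz)
  have htr := (traceLinearMap (Fin n) ℝ ℂ).toContinuousLinearMap.hasFDerivAt.comp_hasDerivAt 0 hr
  have h2 := h0.mul (htr.const_sub (n : ℂ))
  have hev : (fun s : ℝ => (Polynomial.X * (dpol M.1).derivative).eval (z + (s : ℂ))) =ᶠ[nhds 0]
      (fun s : ℝ => (dpol M.1).eval (z + (s : ℂ)) * ((n : ℂ) - (res (z + (s : ℂ)) M.1).trace)) := by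
    have hcont : Continuous fun s : ℝ => ‖z + (s : ℂ)‖ := by fun_prop
    have := hcont.continuousAt.eventually_lt (x₀ := 0) continuousAt_const (show ‖z + ((0 : ℝ) : ℂ)‖ < 1 by simpa using hz)
    filter_upwards [this] with s hs
    rw [Polynomial.eval_mul, Polynomial.eval_X, dpol_derivative M _ hs]
  have h3 := h1.congr_of_eventuallyEq hev.symm
  have h4 := h3.unique h2
  rw [h4]
  have h5 := dpol_derivative M z hz
  have h6 : z * (res z M.1 * M.1 * res z M.1).trace = (res z M.1 - res z M.1 * res z M.1).trace := by
    rw [← smul_eq_mul, ← trace_smul, ← Matrix.smul_mul, smul_res_mul z hz M, sub_mul, one_mul]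
  simp only [Function.comp_def, Complex.ofReal_zero, add_zero, LinearMap.coe_toContinuousLinearMap',
    traceLinearMap_apply] at *
  simp only [res] at *
  simp only [trace_neg, neg_neg]
  linear_combination ((n : ℂ) - ((1 + z • M.1)⁻¹).trace) * h5 + (dpol M.1).eval z * h6

end DPol

/-! ### Coefficients of the averaged product -/

section Moments
open MvPolynomial

theorem vdm_ne_zero (k : ℕ) : vdm k ≠ 0 := by
  intro h
  have := eval_vdm_ne_zero (fun i : Fin k => ((i : ℕ) : ℂ)) (fun i j hij => by
    exact Fin.ext (Nat.cast_injective hij))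
  rw [h] at this
  simp at this

/-- A polynomial vanishing at all points of the unit polydisc with distinct coordinates is zero:
multiplied by the Vandermonde determinant it vanishes on the whole polydisc. -/
theorem eq_zero_of_eval_ball {k : ℕ} (Z : MvPolynomial (Fin k) ℂ)
    (h : ∀ x : Fin k → ℂ, (∀ i, ‖x i‖ < 1) → Function.Injective x → eval x Z = 0) : Z = 0 := by
  have h1 : Z * vdm k = 0 := by
    refine funext_set (fun _ => Metric.ball (0 : ℂ) 1) (fun _ => ?_) fun x hx => ?_
    · exact infinite_of_mem_nhds 0 (Metric.ball_mem_nhds 0 one_pos)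
    · rw [map_mul, map_zero]
      by_cases hinj : Function.Injective x
      · rw [h x (fun i => by simpa using hx i (Set.mem_univ i)) hinj, zero_mul]
      · have : eval x (vdm k) = 0 := by
          rw [vdm_eq, RingHom.map_det]
          have : (eval x).mapMatrix (vandermonde (X : Fin k → MvPolynomial (Fin k) ℂ)) =
              vandermonde x := by
            ext i j; simp [vandermonde_apply]
          rw [this]
          by_contra h0
          exact hinj (det_vandermonde_ne_zero_iff.1 h0)
        rw [this, mul_zero]
  exact (mul_eq_zero.1 h1).resolve_right (vdm_ne_zero k)

/-- `Δ(x) ∏ᵢ det (1 + xᵢ M)` as a polynomial in `x`, written as a Slater determinant. -/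
def qPol {n : ℕ} (k : ℕ) (M : Matrix (Fin n) (Fin n) ℂ) : MvPolynomial (Fin k) ℂ :=
  slaterPoly fun j : Fin k => Polynomial.X ^ (j : ℕ) * dpol M

theorem qPol_eq {n : ℕ} (k : ℕ) (M : Matrix (Fin n) (Fin n) ℂ) :
    qPol k M = vdm k * ∏ i, Polynomial.aeval (X i) (dpol M) := by
  rw [qPol, slaterPoly_mul, vdm]

theorem coeff_factor_eq_zero {n N k : ℕ} (hN : N + 1 = n + k) (M : Matrix (Fin n) (Fin n) ℂ)
    (j : Fin k) (m : ℕ) (hm : N < m) : (Polynomial.X ^ (j : ℕ) * dpol M).coeff m = 0 := by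
  apply Polynomial.coeff_eq_zero_of_natDegree_lt
  refine lt_of_le_of_lt (Polynomial.natDegree_mul_le) ?_
  rw [Polynomial.natDegree_X_pow]
  have := natDegree_dpol M
  omega

theorem coeff_qPol_eq_zero {n N k : ℕ} (hN : N + 1 = n + k) (M : Matrix (Fin n) (Fin n) ℂ)
    (m : Fin k →₀ ℕ) (i : Fin k) (hm : N < m i) : coeff m (qPol k M) = 0 := by
  rw [qPol, coeff_slaterPoly]
  exact det_eq_zero_of_row_eq_zero i fun j => coeff_factor_eq_zero hN M j _ hm

theorem continuous_coeff_qPol {n k : ℕ} (m : Fin k →₀ ℕ) :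
    Continuous fun M : unitaryGroup (Fin n) ℂ => coeff m (qPol k M.1) := by
  simp only [qPol, coeff_slaterPoly]
  refine Continuous.matrix_det (continuous_matrix fun i j => ?_)
  have h1 : CoeffCont fun M : Matrix (Fin n) (Fin n) ℂ => Polynomial.X ^ (j : ℕ) * dpol M :=
    CoeffCont.mul (fun _ => continuous_const) coeffCont_dpol
  exact (h1 (m i)).comp (continuous_coe_unitary n)

theorem continuous_exp_trace (n : ℕ) (t : ℂ) :
    Continuous fun M : unitaryGroup (Fin n) ℂ => Complex.exp (t * (M.1ᴴ).trace) :=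
  Complex.continuous_exp.comp (continuous_const.mul (continuous_trace_conj n))

theorem eval_opL_qPol {n N k : ℕ} (hN : N + 1 = n + k) (t : ℂ) (x : Fin k → ℂ)
    (hx : ∀ i, ‖x i‖ < 1) (hinj : Function.Injective x) (M : unitaryGroup (Fin n) ℂ) :
    eval x (opL N k t (qPol k M.1)) * Complex.exp (t * (M.1ᴴ).trace) =
      ∑ c, eval x (vdm k) * (wt x t M.1 * bracket x t c M.1) := by
  rw [qPol_eq, eval_opL_vdm_mul n N k hN t x hinj, mul_assoc, Finset.sum_mul, Finset.mul_sum]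
  refine Finset.sum_congr rfl fun c _ => ?_
  congr 1
  have hW : eval x (∏ i, Polynomial.aeval (X i) (dpol M.1)) = ∏ i, (dpol M.1).eval (x i) := by
    rw [map_prod]
    simp only [eval_aeval_X]
  have h1 : ∀ i, eval x (theta i (∏ i, Polynomial.aeval (X i) (dpol M.1))) =
      (∏ i, (dpol M.1).eval (x i)) * ((n : ℂ) - (res (x i) M.1).trace) :=
    fun i => eval_theta_prod x i _ _ (dpol_derivative M (x i) (hx i))
  rw [eval_theta_theta_prod x c _ _ (dpol_derivative2 M (x c) (hx c)), hW]
  simp only [h1, ← Finset.mul_sum]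
  have h2 : ∑ i ∈ Finset.univ.erase c, x i *
      ((∏ i, (dpol M.1).eval (x i)) * ((n : ℂ) - (res (x c) M.1).trace) -
        (∏ i, (dpol M.1).eval (x i)) * ((n : ℂ) - (res (x i) M.1).trace)) / (x c - x i) =
      (∏ i, (dpol M.1).eval (x i)) * ∑ i ∈ Finset.univ.erase c, x i *
      (((n : ℂ) - (res (x c) M.1).trace) - ((n : ℂ) - (res (x i) M.1).trace)) / (x c - x i) := by
    rw [Finset.mul_sum]
    exact Finset.sum_congr rfl fun i _ => by ring
  rw [h2, wt, bracket]
  simp only [eval_dpol]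
  ring

theorem continuous_coeff_opL_qPol {n k : ℕ} (N : ℕ) (t : ℂ) (m : Fin k →₀ ℕ) :
    Continuous fun M : unitaryGroup (Fin n) ℂ => coeff m (opL N k t (qPol k M.1)) := by
  simp only [coeff_opL]
  refine (continuous_const.mul (continuous_coeff_qPol m)).add (continuous_const.mul
    (continuous_finsetSum _ fun c _ => ?_))
  split_ifs
  · exact continuous_const
  · exact continuous_const.mul (continuous_coeff_qPol _)

/-- The operator annihilates the averaged product, coefficient by coefficient. -/
theorem integral_coeff_opL {n N k : ℕ} (hN : N + 1 = n + k)
    (μ : Measure (unitaryGroup (Fin n) ℂ)) [IsProbabilityMeasure μ] [μ.IsMulLeftInvariant]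
    (t : ℂ) (m : Fin k →₀ ℕ) :
    ∫ M : unitaryGroup (Fin n) ℂ, coeff m (opL N k t (qPol k M.1)) *
      Complex.exp (t * (M.1ᴴ).trace) ∂μ = 0 := by
  classical
  have hdeg : ∀ (M : unitaryGroup (Fin n) ℂ) (m : Fin k →₀ ℕ) (i : Fin k), N + 1 < m i →
      coeff m (opL N k t (qPol k M.1)) = 0 := by
    intro M m i hm
    rw [coeff_opL, coeff_qPol_eq_zero hN M.1 m i (by omega), mul_zero, zero_add,
      Finset.sum_eq_zero, mul_zero]
    intro c _
    split_ifs
    · rfl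
    · rw [coeff_qPol_eq_zero hN M.1 _ i, mul_zero]
      rw [Finsupp.tsub_apply, Finsupp.single_apply]
      split_ifs <;> omega
  set S : Finset (Fin k →₀ ℕ) :=
    (Fintype.piFinset fun _ : Fin k => Finset.range (N + 2)).map
      (Finsupp.equivFunOnFinite.symm.toEmbedding) with hS
  have hmem : ∀ m : Fin k →₀ ℕ, m ∉ S → ∃ i, N + 1 < m i := by
    intro m hm
    by_contra! h
    apply hm
    rw [hS, Finset.mem_map]
    refine ⟨m, Fintype.mem_piFinset.2 fun i => Finset.mem_range.2 (by have := h i; omega), ?_⟩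
    ext i; simp
  have hZ : ∑ m ∈ S, monomial m (∫ M : unitaryGroup (Fin n) ℂ,
      coeff m (opL N k t (qPol k M.1)) * Complex.exp (t * (M.1ᴴ).trace) ∂μ) = 0 := by
    apply eq_zero_of_eval_ball
    intro x hx hinj
    have hG : ∀ M : unitaryGroup (Fin n) ℂ, eval x (opL N k t (qPol k M.1)) =
        ∑ m ∈ S, coeff m (opL N k t (qPol k M.1)) * ∏ i, x i ^ m i := by
      intro M
      rw [eval_eq']
      refine Finset.sum_subset (fun m hm => ?_) fun m _ hm => ?_
      · by_contra hm'
        obtain ⟨i, hi⟩ := hmem m hm'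
        exact (mem_support_iff.1 hm) (hdeg M m i hi)
      · rw [notMem_support_iff.1 hm, zero_mul]
    rw [map_sum]
    have h1 : ∀ m ∈ S, eval x (monomial m (∫ M : unitaryGroup (Fin n) ℂ,
        coeff m (opL N k t (qPol k M.1)) * Complex.exp (t * (M.1ᴴ).trace) ∂μ)) =
        ∫ M : unitaryGroup (Fin n) ℂ, (coeff m (opL N k t (qPol k M.1)) * ∏ i, x i ^ m i) *
          Complex.exp (t * (M.1ᴴ).trace) ∂μ := by
      intro m _
      rw [eval_monomial, ← integral_mul_const, Finsupp.prod_fintype _ _ (by simp)]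
      refine integral_congr_ae (Filter.Eventually.of_forall fun M => ?_)
      simp only
      ring
    rw [Finset.sum_congr rfl h1, ← integral_finsetSum]
    · simp only [← Finset.sum_mul, ← hG, eval_opL_qPol hN t x hx hinj]
      rw [integral_finsetSum]
      · refine Finset.sum_eq_zero fun c _ => ?_
        rw [integral_const_mul, (integral_bracket μ x hx hinj t c).2, mul_zero]
      · exact fun c _ => (integral_bracket μ x hx hinj t c).1.const_mul _
    · exact fun m _ => integrable_unitary μ
        (((continuous_coeff_opL_qPol N t m).mul continuous_const).mul (continuous_exp_trace n t))
  by_cases hm : m ∈ S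
  · have h2 := congrArg (coeff m) hZ
    rw [coeff_sum, coeff_zero] at h2
    simp only [coeff_monomial] at h2
    rwa [Finset.sum_ite_eq' S m, if_pos hm] at h2
  · obtain ⟨i, hi⟩ := hmem m hm
    simp [hdeg _ m i hi]

/-- The coefficient of `x ^ m` in `Δ(x) ∫ ∏ᵢ det (1 + xᵢ M) exp (t * tr Mᴴ)`. -/
def pMom {n : ℕ} (k : ℕ) (μ : Measure (unitaryGroup (Fin n) ℂ)) (t : ℂ) (m : Fin k → ℕ) : ℂ :=
  ∫ M : unitaryGroup (Fin n) ℂ, coeff (Finsupp.equivFunOnFinite.symm m) (qPol k M.1) *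
    Complex.exp (t * (M.1ᴴ).trace) ∂μ

theorem pMom_rec {n N k : ℕ} (hN : N + 1 = n + k)
    (μ : Measure (unitaryGroup (Fin n) ℂ)) [IsProbabilityMeasure μ] [μ.IsMulLeftInvariant]
    (t : ℂ) (m : Fin k → ℕ) :
    (∑ c, ((m c : ℂ) ^ 2 - (N + k) * m c) -
        ∑ c : Fin k, (((c : ℕ) : ℂ) ^ 2 - (N + k) * (c : ℕ))) * pMom k μ t m +
      t * ∑ c, (if m c = 0 then 0 else
        ((N : ℂ) + 1 - m c) * pMom k μ t (Function.update m c (m c - 1))) = 0 := by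
  have h := integral_coeff_opL hN μ t (Finsupp.equivFunOnFinite.symm m)
  have hI : ∀ m : Fin k →₀ ℕ, Integrable (fun M : unitaryGroup (Fin n) ℂ =>
      coeff m (qPol k M.1) * Complex.exp (t * (M.1ᴴ).trace)) μ := fun m =>
    integrable_unitary μ ((continuous_coeff_qPol m).mul (continuous_exp_trace n t))
  have hs : ∀ c, Finsupp.equivFunOnFinite.symm m - Finsupp.single c 1 =
      Finsupp.equivFunOnFinite.symm (Function.update m c (m c - 1)) := by
    intro c
    ext i
    rw [Finsupp.tsub_apply, Finsupp.single_apply]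
    simp only [Finsupp.equivFunOnFinite_symm_apply_apply]
    by_cases hc : c = i
    · subst hc; simp
    · rw [if_neg hc, Function.update_of_ne (Ne.symm hc)]; simp
  have h3 : ∀ M : unitaryGroup (Fin n) ℂ,
      coeff (Finsupp.equivFunOnFinite.symm m) (opL N k t (qPol k M.1)) *
        Complex.exp (t * (M.1ᴴ).trace) =
      (∑ c, ((m c : ℂ) ^ 2 - (N + k) * m c) -
        ∑ c : Fin k, (((c : ℕ) : ℂ) ^ 2 - (N + k) * (c : ℕ))) *
        (coeff (Finsupp.equivFunOnFinite.symm m) (qPol k M.1) * Complex.exp (t * (M.1ᴴ).trace)) +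
      t * ∑ c, (if m c = 0 then 0 else ((N : ℂ) + 1 - m c)) *
        (coeff (Finsupp.equivFunOnFinite.symm (Function.update m c (m c - 1))) (qPol k M.1) *
          Complex.exp (t * (M.1ᴴ).trace)) := by
    intro M
    rw [coeff_opL]
    simp only [hs, Finsupp.equivFunOnFinite_symm_apply_apply]
    rw [add_mul, mul_assoc, mul_assoc, Finset.sum_mul]
    congr 2
    refine Finset.sum_congr rfl fun c _ => ?_
    split_ifs <;> ring
  simp only [h3] at h
  rw [integral_add ((hI _).const_mul _) ((integrable_finsetSum _ fun c _ =>
    (hI _).const_mul _).const_mul _), integral_const_mul, integral_const_mul, integral_finsetSum _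
    fun c _ => (hI _).const_mul _] at h
  simp only [integral_const_mul] at h
  refine Eq.trans ?_ h
  rw [pMom]
  congr 2
  refine Finset.sum_congr rfl fun c _ => ?_
  rw [pMom]
  split_ifs <;> simp

theorem pMom_anti {n k : ℕ} (μ : Measure (unitaryGroup (Fin n) ℂ)) (t : ℂ) (m : Fin k → ℕ)
    (σ : Equiv.Perm (Fin k)) :
    pMom k μ t (m ∘ σ) = (Equiv.Perm.sign σ : ℤ) * pMom k μ t m := by
  rw [pMom, pMom, ← integral_const_mul]
  refine integral_congr_ae (Filter.Eventually.of_forall fun M => ?_)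
  simp only [qPol, coeff_slaterPoly, ← mul_assoc]
  rw [← det_permute]
  rfl

theorem det_triangular {k : ℕ} (d : Polynomial ℂ) :
    (Matrix.of fun i j : Fin k => (Polynomial.X ^ (j : ℕ) * d).coeff (i : ℕ)).det =
      d.coeff 0 ^ k := by
  rw [det_of_isLowerTriangular]
  · simp [Polynomial.coeff_X_pow_mul']
  · intro i j hij
    rw [of_apply, Polynomial.coeff_X_pow_mul', if_neg]
    exact not_le.2 hij

theorem pMom_delta {n k : ℕ} (μ : Measure (unitaryGroup (Fin n) ℂ)) [IsProbabilityMeasure μ]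
    [μ.IsMulLeftInvariant] (t : ℂ) :
    pMom k μ t (fun i : Fin k => (i : ℕ)) = 1 := by
  rw [pMom, ← integral_exp_trace μ t]
  refine integral_congr_ae (Filter.Eventually.of_forall fun M => ?_)
  simp only [qPol, coeff_slaterPoly, Finsupp.equivFunOnFinite_symm_apply_apply]
  rw [det_triangular, coeff_zero_dpol, one_pow, one_mul]

theorem pMom_eq_slater {n N k : ℕ} (hN : N + 1 = n + k)
    (μ : Measure (unitaryGroup (Fin n) ℂ)) [IsProbabilityMeasure μ] [μ.IsMulLeftInvariant]
    (t : ℂ) (m : Fin k → ℕ) : pMom k μ t m = slater N k t m := by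
  have := coeff_unique (N := N) t (fun m => pMom k μ t m - slater N k t m) ?_ ?_ ?_ ?_ m
  · exact sub_eq_zero.1 this
  · intro m σ
    rw [pMom_anti, slater_anti, mul_sub]
  · intro m i hm
    rw [slater_deg N k t m i hm, sub_zero, pMom]
    have : ∀ M : unitaryGroup (Fin n) ℂ, coeff (Finsupp.equivFunOnFinite.symm m) (qPol k M.1) = 0 :=
      fun M => coeff_qPol_eq_zero hN M.1 _ i (by simpa using hm)
    simp [this]
  · intro m
    have h1 := pMom_rec hN μ t m
    have h2 := slater_rec N k t m
    have h3 : ∀ c, (if m c = 0 then 0 else ((N : ℂ) + 1 - m c) *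
        (pMom k μ t (Function.update m c (m c - 1)) - slater N k t (Function.update m c (m c - 1)))) =
        (if m c = 0 then 0 else ((N : ℂ) + 1 - m c) * pMom k μ t (Function.update m c (m c - 1))) -
        (if m c = 0 then 0 else ((N : ℂ) + 1 - m c) * slater N k t (Function.update m c (m c - 1))) := by
      intro c
      split_ifs <;> ring
    simp only [h3, Finset.sum_sub_distrib] at *
    linear_combination h1 - h2
  · rw [pMom_delta, slater_delta N k t (by omega), sub_self]

end Moments

/-! ### The confluent limit -/

section Confluence
open MvPolynomial

/-- Multilinearity in the rows. The left side is the confluent limit at `x = (1, …, 1)` in terms of the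
coefficients, as `C(m, i)` is the `i`-th Taylor coefficient of `xᵐ` at `1`. -/
theorem sum_det_mul_choose {k : ℕ} (N : ℕ) (f : Fin k → ℕ → ℂ) :
    ∑ m ∈ Fintype.piFinset (fun _ : Fin k => Finset.range (N + 1)),
      (Matrix.of fun i j : Fin k => f j (m i)).det * ∏ i, ((m i).choose (i : ℕ) : ℂ) =
    (Matrix.of fun i j : Fin k => ∑ m ∈ Finset.range (N + 1), (m.choose (i : ℕ) : ℂ) * f j m).det := by
  simp only [← det_transpose (Matrix.of _), det_apply, transpose_apply, of_apply]
  simp only [Finset.prod_univ_sum, Finset.sum_mul, Finset.smul_sum]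
  rw [Finset.sum_comm]
  refine Finset.sum_congr rfl fun σ _ => Finset.sum_congr rfl fun m _ => ?_
  rw [smul_mul_assoc, Finset.prod_mul_distrib, mul_comm (∏ i, f _ _)]

theorem eval_tauPol (N k : ℕ) (t : ℂ) :
    (tauPol N k).eval t =
      (Matrix.of fun i j : Fin k => ∑ m ∈ Finset.range (N + 1),
        (m.choose (i : ℕ) : ℂ) * fCoeff N t j m).det := by
  rw [tauPol, ← Polynomial.coe_evalRingHom, RingHom.map_det]
  congr 1
  ext i j
  simp only [RingHom.mapMatrix_apply, map_apply, of_apply, Polynomial.coe_evalRingHom,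
    Polynomial.eval_finsetSum]
  refine Finset.sum_congr rfl fun m hm => ?_
  rw [fCoeff]
  have := Finset.mem_range.1 hm
  split_ifs <;> first | omega | simp
  ring

theorem vdm_shift {k : ℕ} :
    slaterPoly (fun j : Fin k => ((Polynomial.X + 1 : Polynomial ℂ)) ^ (j : ℕ)) = vdm k := by
  rw [vdm_eq, slaterPoly, ← det_vandermonde_add X 1]
  congr 1
  ext1 i j
  simp [vandermonde_apply]

/-- Translation by `1` does not change the Vandermonde factor, so only the constant term of the
translate of `d` remains on the diagonal of a triangular determinant. -/
theorem det_taylor {k : ℕ} (d : Polynomial ℂ) :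
    (Matrix.of fun i j : Fin k =>
      (Polynomial.taylor 1 (Polynomial.X ^ (j : ℕ) * d)).coeff (i : ℕ)).det = d.eval 1 ^ k := by
  have h1 : slaterPoly (fun j : Fin k => Polynomial.taylor 1 (Polynomial.X ^ (j : ℕ) * d)) =
      slaterPoly (fun j : Fin k => Polynomial.X ^ (j : ℕ) * Polynomial.taylor 1 d) := by
    rw [slaterPoly_mul, ← vdm, ← vdm_shift, ← slaterPoly_mul]
    simp [Polynomial.taylor_mul, Polynomial.taylor_pow]
  have h2 := congrArg (coeff (Finsupp.equivFunOnFinite.symm fun i : Fin k => (i : ℕ))) h1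
  rw [coeff_slaterPoly, coeff_slaterPoly] at h2
  simp only [Finsupp.equivFunOnFinite_symm_apply_apply] at h2
  rw [h2, det_triangular, Polynomial.taylor_coeff_zero]

theorem taylor_one_coeff (f : Polynomial ℂ) (N i : ℕ) (hf : ∀ m, N < m → f.coeff m = 0) :
    (Polynomial.taylor 1 f).coeff i =
      ∑ m ∈ Finset.range (N + 1), (m.choose i : ℂ) * f.coeff m := by
  have hdeg : f.natDegree < N + 1 := by
    have := (Polynomial.natDegree_le_iff_coeff_eq_zero (p := f) (n := N)).2 hf
    omega
  rw [Polynomial.taylor_coeff, Polynomial.hasseDeriv_apply, Polynomial.sum_over_range' _ _ _ hdeg]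
  · rw [Polynomial.eval_finsetSum]
    simp
  · simp

theorem det_one_add_pow {n N k : ℕ} (hN : N + 1 = n + k) (M : Matrix (Fin n) (Fin n) ℂ) :
    ∑ m ∈ Fintype.piFinset (fun _ : Fin k => Finset.range (N + 1)),
      coeff (Finsupp.equivFunOnFinite.symm m) (qPol k M) * ∏ i, ((m i).choose (i : ℕ) : ℂ) =
    (1 + M).det ^ k := by
  obtain ⟨f, hf⟩ : ∃ f : Fin k → ℕ → ℂ,
      ∀ j m, (Polynomial.X ^ (j : ℕ) * dpol M).coeff m = f j m := ⟨_, fun _ _ => rfl⟩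
  simp only [qPol, coeff_slaterPoly, Finsupp.equivFunOnFinite_symm_apply_apply, hf]
  rw [sum_det_mul_choose N f]
  have h := det_taylor (k := k) (dpol M)
  rw [eval_dpol, one_smul] at h
  rw [← h]
  congr 1
  ext i j
  rw [of_apply, of_apply, taylor_one_coeff _ N _ fun m hm => coeff_factor_eq_zero hN M j m hm]
  simp only [hf]

theorem integral_det_pow {n N k : ℕ} (hN : N + 1 = n + k)
    (μ : Measure (unitaryGroup (Fin n) ℂ)) [IsProbabilityMeasure μ] [μ.IsMulLeftInvariant]
    (t : ℂ) :
    ∫ M : unitaryGroup (Fin n) ℂ, (1 + M.1).det ^ k * Complex.exp (t * (M.1ᴴ).trace) ∂μ =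
      (tauPol N k).eval t := by
  rw [eval_tauPol, ← sum_det_mul_choose (k := k) N (fun j m => fCoeff N t j m)]
  have h : ∀ m : Fin k → ℕ, (Matrix.of fun i j : Fin k => fCoeff N t j (m i)).det =
      pMom k μ t m := fun m => (pMom_eq_slater hN μ t m).symm
  simp only [h, pMom, ← integral_mul_const]
  rw [← integral_finsetSum]
  · refine integral_congr_ae (Filter.Eventually.of_forall fun M => ?_)
    simp only
    rw [← det_one_add_pow hN M.1, Finset.sum_mul]
    exact Finset.sum_congr rfl fun m _ => by ring
  · exact fun m _ => integrable_unitary μ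
      (((continuous_coeff_qPol _).mul (continuous_exp_trace n t)).mul continuous_const)

end Confluence

/-! ### Passage to the function `h` -/

section Final

/-- The third order equation is a linear combination of the two equations of `tauPol_odes` at
`t = -x`. Here `H`, `h2`, `h3` are the derivatives of `h`, while `a`, `a1`, `a2` are the Euler
derivatives of `y = (n + k) h + n x`. -/
theorem ode_algebra (x n k y a a1 a2 h H h2 h3 : ℂ) (hx : x ≠ 0) (hs : n + k ≠ 0)
    (hh : y = (n + k) * h + n * x) (hH : a = x * ((n + k) * H + n))
    (hh2 : a1 = a + (n + k) * x ^ 2 * h2) (hh3 : a2 = (n + k) * x ^ 3 * h3 + 3 * a1 - 2 * a)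
    (e2 : (a1 - a) ^ 2 = (a * (-x + n) + -x * (y - k * n)) ^ 2 -
      4 * a * ((a - k * -x) * (a + n * -x) + -x * (-x + k) * y - a * y))
    (e3 : a2 = 2 * a1 - a + (-x + n) * (a * (-x + n) + -x * (y - k * n))
      - 2 * (a - k * -x) * (a + n * -x) - 2 * -x * (-x + k) * y
      + 4 * a * y - 2 * (n - k) * -x * a - 4 * a ^ 2) (hne : H * (H + 1) ≠ 0) :
    h3 - (h2 ^ 2 / 2) * (1 / (H + 1) + 1 / H) + h2 / x + (2 * (n + k) / x) * H * (H + 1)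
      - (1 / (2 * x ^ 2 * H * (H + 1))) * ((x - n) * H - h - n) * ((2 * h + x + n) * H + h + n)
      = 0 := by
  have hH0 : H ≠ 0 := left_ne_zero_of_mul hne
  have hH1 : H + 1 ≠ 0 := right_ne_zero_of_mul hne
  have key : 2 * x ^ 2 * H * (H + 1) * h3 - x ^ 2 * h2 ^ 2 * (2 * H + 1) +
      2 * x * H * (H + 1) * h2 + 4 * (n + k) * x * H ^ 2 * (H + 1) ^ 2 -
      ((x - n) * H - h - n) * ((2 * h + x + n) * H + h + n) = 0 := by
    apply mul_left_cancel₀ (mul_ne_zero (pow_ne_zero 2 hs) (pow_ne_zero 2 hx))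
    subst hh3
    subst hh2
    subst hH
    subst hh
    linear_combination 2 * (n + k) * x * H * (H + 1) * e3 - (2 * H + 1) * e2
  rw [← mul_right_inj' (mul_ne_zero (mul_ne_zero two_ne_zero (pow_ne_zero 2 hx)) hne), mul_zero,
    ← key]
  field_simp
  ring

open Polynomial

theorem hasDerivAt_eval_neg (Q : ℂ[X]) (x : ℝ) :
    HasDerivAt (fun x : ℝ => Q.eval (-(x : ℂ))) (-(derivative Q).eval (-(x : ℂ))) x := by
  have h1 : HasDerivAt (fun z : ℂ => Q.eval (-z)) ((derivative Q).eval (-(x : ℂ)) * (-1)) (x : ℂ) :=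
    (Q.hasDerivAt (-(x : ℂ))).comp (x : ℂ) (hasDerivAt_neg (x : ℂ))
  simpa using h1.comp_ofReal

theorem hasDerivAt_eval_div (U Q : ℂ[X]) (m : ℕ) (x : ℝ) (hx : x ≠ 0)
    (hU : U.eval (-(x : ℂ)) ≠ 0) :
    HasDerivAt (fun x : ℝ => Q.eval (-(x : ℂ)) / U.eval (-(x : ℂ)) ^ (m + 1))
      ((U * polEuler Q - (m + 1) * Q * polEuler U).eval (-(x : ℂ)) /
        U.eval (-(x : ℂ)) ^ (m + 2) / x) x := by
  have hx' : (x : ℂ) ≠ 0 := by exact_mod_cast hx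
  have := (hasDerivAt_eval_neg Q x).div ((hasDerivAt_eval_neg U x).pow (m + 1)) (pow_ne_zero _ hU)
  refine this.congr_deriv ?_
  change (_ * U.eval (-(x : ℂ)) ^ (m + 1) - _) / (U.eval (-(x : ℂ)) ^ (m + 1)) ^ 2 = _
  simp only [polEuler_apply, eval_sub, eval_mul, eval_add, eval_X, eval_natCast, eval_one]
  push_cast
  field_simp
  ring

theorem painleve_of_eval (n k : ℕ) (hn : 1 ≤ n) (hk : 1 ≤ k) (τ : ℝ → ℂ)
    (hτ : ∀ x : ℝ, τ x = (tauPol (n + k - 1) k).eval (-(x : ℂ))) (h : ℝ → ℂ)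
    (hh : ∀ x, h x = (1 / ((n : ℂ) + (k : ℂ))) * ((x : ℂ) * deriv τ x / τ x - (n : ℂ) * (x : ℂ)))
    (x : ℝ) (hx : x ≠ 0) (hτx : τ x ≠ 0) (hne : deriv h x * (deriv h x + 1) ≠ 0) :
      iteratedDeriv 3 h x
        - ((iteratedDeriv 2 h x) ^ 2 / 2) * (1 / (deriv h x + 1) + 1 / deriv h x)
        + iteratedDeriv 2 h x / (x : ℂ)
        + (2 * ((n : ℂ) + (k : ℂ)) / (x : ℂ)) * deriv h x * (deriv h x + 1)
        - (1 / (2 * (x : ℂ) ^ 2 * deriv h x * (deriv h x + 1))) *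
            (((x : ℂ) - (n : ℂ)) * deriv h x - h x - (n : ℂ)) *
            ((2 * h x + (x : ℂ) + (n : ℂ)) * deriv h x + h x + (n : ℂ)) = 0 := by
  obtain ⟨U, hU⟩ : ∃ Q, Q = tauPol (n + k - 1) k := ⟨_, rfl⟩
  rw [← hU] at hτ
  obtain ⟨Y, hY⟩ : ∃ Q, Q = polEuler U := ⟨_, rfl⟩
  obtain ⟨A, hA⟩ : ∃ Q, Q = U * polEuler Y - Y ^ 2 := ⟨_, rfl⟩
  obtain ⟨A1, hA1⟩ : ∃ Q, Q = U * polEuler A - 2 * A * Y := ⟨_, rfl⟩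
  obtain ⟨A2, hA2⟩ : ∃ Q, Q = U * polEuler A1 - 3 * A1 * Y := ⟨_, rfl⟩
  obtain ⟨e2, e3⟩ := tauPol_odes n k (n + k - 1) hn hk (by omega) X U Y A A1 A2 rfl hU hY hA hA1 hA2
  have hs : (n : ℂ) + (k : ℂ) ≠ 0 := by
    have : n + k ≠ 0 := by omega
    exact_mod_cast this
  set c : ℂ := 1 / ((n : ℂ) + k) with hc
  have hcs : (n + k : ℂ) * c = 1 := by rw [hc]; field_simp
  have h0 : h = fun x : ℝ => c * (Y.eval (-(x : ℂ)) / U.eval (-(x : ℂ)) ^ 1 - n * x) := by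
    funext x
    have hd : deriv τ x = -(derivative U).eval (-(x : ℂ)) := by
      rw [show τ = fun x : ℝ => U.eval (-(x : ℂ)) from funext hτ]
      exact (hasDerivAt_eval_neg U x).deriv
    rw [hh, hd, hτ, hY, polEuler_apply, eval_mul, eval_X, pow_one]
    congr 3
    ring
  have hopen : ∀ x : ℝ, x ≠ 0 → U.eval (-(x : ℂ)) ≠ 0 →
      ∀ᶠ z : ℝ in nhds x, z ≠ 0 ∧ U.eval (-(z : ℂ)) ≠ 0 := by
    intro x hx hU
    exact (eventually_ne_nhds hx).and
      ((hasDerivAt_eval_neg U x).continuousAt.eventually_ne hU)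
  have hid : ∀ x : ℝ, HasDerivAt (fun x : ℝ => (x : ℂ)) 1 x := fun x => Complex.ofRealCLM.hasDerivAt
  have h1 : ∀ x : ℝ, x ≠ 0 → U.eval (-(x : ℂ)) ≠ 0 →
      deriv h x = c * (A.eval (-(x : ℂ)) / U.eval (-(x : ℂ)) ^ 2 / x - n) := by
    intro x hx hUx
    rw [h0]
    have := (((hasDerivAt_eval_div U Y 0 x hx hUx)).sub ((hid x).const_mul (n : ℂ))).const_mul c
    refine (HasDerivAt.deriv this).trans ?_
    rw [← hY, show U * polEuler Y - (((0 : ℕ) : ℂ[X]) + 1) * Y * Y = A by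
      rw [hA]; push_cast; ring, mul_one]
  have h2 : ∀ x : ℝ, x ≠ 0 → U.eval (-(x : ℂ)) ≠ 0 → deriv (deriv h) x =
      c * ((A1.eval (-(x : ℂ)) / U.eval (-(x : ℂ)) ^ 3
        - A.eval (-(x : ℂ)) / U.eval (-(x : ℂ)) ^ 2) / x ^ 2) := by
    intro x hx hUx
    have hev : deriv h =ᶠ[nhds x]
        fun x : ℝ => c * (A.eval (-(x : ℂ)) / U.eval (-(x : ℂ)) ^ 2 / x - n) := by
      filter_upwards [hopen x hx hUx] with z hz using h1 z hz.1 hz.2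
    rw [hev.deriv_eq]
    have hx' : (x : ℂ) ≠ 0 := by exact_mod_cast hx
    have := ((((hasDerivAt_eval_div U A 1 x hx hUx)).div (hid x) hx').sub_const (n : ℂ)).const_mul c
    refine (HasDerivAt.deriv this).trans ?_
    rw [← hY, show U * polEuler A - (((1 : ℕ) : ℂ[X]) + 1) * A * Y = A1 by
      rw [hA1]; push_cast; ring]
    field_simp
    norm_num
    ring
  have h3 : ∀ x : ℝ, x ≠ 0 → U.eval (-(x : ℂ)) ≠ 0 → deriv (deriv (deriv h)) x =
      c * ((A2.eval (-(x : ℂ)) / U.eval (-(x : ℂ)) ^ 4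
        - 3 * (A1.eval (-(x : ℂ)) / U.eval (-(x : ℂ)) ^ 3)
        + 2 * (A.eval (-(x : ℂ)) / U.eval (-(x : ℂ)) ^ 2)) / x ^ 3) := by
    intro x hx hUx
    have hev : deriv (deriv h) =ᶠ[nhds x] fun x : ℝ =>
        c * ((A1.eval (-(x : ℂ)) / U.eval (-(x : ℂ)) ^ 3
        - A.eval (-(x : ℂ)) / U.eval (-(x : ℂ)) ^ 2) / x ^ 2) := by
      filter_upwards [hopen x hx hUx] with z hz using h2 z hz.1 hz.2
    rw [hev.deriv_eq]
    have hx' : (x : ℂ) ≠ 0 := by exact_mod_cast hx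
    have := (((hasDerivAt_eval_div U A1 2 x hx hUx).sub (hasDerivAt_eval_div U A 1 x hx hUx)).div
      ((hid x).pow 2) (pow_ne_zero 2 hx')).const_mul c
    refine (HasDerivAt.deriv this).trans ?_
    rw [← hY, show U * polEuler A - (((1 : ℕ) : ℂ[X]) + 1) * A * Y = A1 by
      rw [hA1]; push_cast; ring, show U * polEuler A1 - (((2 : ℕ) : ℂ[X]) + 1) * A1 * Y = A2 by
      rw [hA2]; push_cast; ring]
    simp only [Pi.pow_apply, Pi.sub_apply]
    field_simp
    ring
  have hUx : U.eval (-(x : ℂ)) ≠ 0 := by rw [← hτ]; exact hτx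
  have hx' : (x : ℂ) ≠ 0 := by exact_mod_cast hx
  have i2 : iteratedDeriv 2 h x = deriv (deriv h) x := by
    rw [iteratedDeriv_succ, iteratedDeriv_one]
  have i3 : iteratedDeriv 3 h x = deriv (deriv (deriv h)) x := by
    rw [iteratedDeriv_succ, iteratedDeriv_succ, iteratedDeriv_one]
  have E2 := congrArg (eval (-(x : ℂ))) e2
  have E3 := congrArg (eval (-(x : ℂ))) e3
  simp only [eval_sub, eval_add, eval_mul, eval_pow, eval_X, eval_natCast, eval_ofNat] at E2 E3
  rw [i2, i3]
  have q0 : h x = c * (Y.eval (-(x : ℂ)) / U.eval (-(x : ℂ)) ^ 1 - n * x) := congrFun h0 x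
  have q1 := h1 x hx hUx
  have q2 := h2 x hx hUx
  have q3 := h3 x hx hUx
  generalize U.eval (-(x : ℂ)) = u at *
  generalize Y.eval (-(x : ℂ)) = Yv at *
  generalize A.eval (-(x : ℂ)) = Av at *
  generalize A1.eval (-(x : ℂ)) = A1v at *
  generalize A2.eval (-(x : ℂ)) = A2v at *
  refine ode_algebra x n k (Yv / u) (Av / u ^ 2) (A1v / u ^ 3) (A2v / u ^ 4) (h x) (deriv h x) _ _
    hx' hs ?_ ?_ ?_ ?_ ?_ ?_ hne
  · rw [q0, ← mul_assoc, hcs]; ring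
  · rw [q1, ← mul_assoc, hcs]; field_simp; ring
  · rw [q2]
    rw [hc]; field_simp; ring
  · rw [q3]
    rw [hc]; field_simp; ring
  · field_simp
    linear_combination E2
  · field_simp
    linear_combination E3
end Final

theorem unitary_integral_det_painleveV (n k : ℕ) (hn : 1 ≤ n) (hk : 1 ≤ k)
    (μ : Measure (Matrix.unitaryGroup (Fin n) ℂ)) [IsProbabilityMeasure μ]
    [μ.IsMulLeftInvariant]
    (τ : ℝ → ℂ)
    (hτ : ∀ x, τ x = ∫ M : Matrix.unitaryGroup (Fin n) ℂ,
      ((1 : Matrix (Fin n) (Fin n) ℂ) + (M : Matrix (Fin n) (Fin n) ℂ)).det ^ k *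
        Complex.exp (-(x : ℂ) * (starRingEnd ℂ)
          (Matrix.trace (M : Matrix (Fin n) (Fin n) ℂ))) ∂μ)
    (h : ℝ → ℂ)
    (hh : ∀ x, h x = (1 / ((n : ℂ) + (k : ℂ))) * ((x : ℂ) * deriv τ x / τ x - (n : ℂ) * (x : ℂ))) :
    ∀ x : ℝ, x ≠ 0 → τ x ≠ 0 → deriv h x * (deriv h x + 1) ≠ 0 →
      iteratedDeriv 3 h x
        - ((iteratedDeriv 2 h x) ^ 2 / 2) * (1 / (deriv h x + 1) + 1 / deriv h x)
        + iteratedDeriv 2 h x / (x : ℂ)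
        + (2 * ((n : ℂ) + (k : ℂ)) / (x : ℂ)) * deriv h x * (deriv h x + 1)
        - (1 / (2 * (x : ℂ) ^ 2 * deriv h x * (deriv h x + 1))) *
            (((x : ℂ) - (n : ℂ)) * deriv h x - h x - (n : ℂ)) *
            ((2 * h x + (x : ℂ) + (n : ℂ)) * deriv h x + h x + (n : ℂ)) = 0 := by
  refine painleve_of_eval n k hn hk τ (fun x => ?_) h hh
  rw [hτ x, ← integral_det_pow (show n + k - 1 + 1 = n + k by omega) μ]
  simp only [trace_conjTranspose]
  rfl
end
end

section
/- For every integer n ≥ 1 and every natural number k, the following normalization identities hold for Haar integrals over the unitary group: E_{U(n)}[ det(I + M)^k ] = 1 and E_{U(n)}[ (tr M) · det(I + M)^k ] = 0. -/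
/-!
Scalar unitary matrices act on `U(n)` by left translation, so the Haar integral of a function `f`
equals that of `M ↦ f (z M)` for every `z` on the unit circle. When `f (z M)` is, for each fixed
`M`, a polynomial in `z` of degree less than `N`, averaging `z` over the `N`-th roots of unity
extracts the constant term of that polynomial (`sum_eval_rootsOfUnity`). If the constant term is
the same number `c` for all `M`, then `∫ f = c` (`integral_eq_of_eval`).

Both integrands are of this form: `det (I + zM) ^ k` has degree at most `nk` in `z` and constant
term `1`, and `tr (zM) * det (I + zM) ^ k` has degree at most `nk + 1` and constant term `0`.
Integrability is automatic since `U(n)` is compact and the integrands are continuous.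
-/

open MeasureTheory Matrix

noncomputable section

instance unitaryBorelSpace (n : ℕ) : BorelSpace (Matrix.unitaryGroup (Fin n) ℂ) := ⟨rfl⟩

/-- `U(n)` is closed in the matrix space, and its entries lie in the closed unit disc. -/
instance unitaryCompactSpace (n : ℕ) : CompactSpace (Matrix.unitaryGroup (Fin n) ℂ) := by
  refine (isCompact_iff_compactSpace
    (s := ((Matrix.unitaryGroup (Fin n) ℂ : Submonoid _) : Set (Matrix (Fin n) (Fin n) ℂ)))).mp ?_
  have hK : IsCompact (Set.univ.pi fun _ : Fin n => Set.univ.pi fun _ : Fin n =>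
      Metric.closedBall (0 : ℂ) 1) :=
    isCompact_univ_pi fun _ => isCompact_univ_pi fun _ => isCompact_closedBall _ _
  refine IsCompact.of_isClosed_subset hK ?_ ?_
  · have h : ((Matrix.unitaryGroup (Fin n) ℂ : Submonoid _) : Set (Matrix (Fin n) (Fin n) ℂ))
        = {A | A * star A = 1} := by
      ext A
      exact Matrix.mem_unitaryGroup_iff
    rw [h]
    exact isClosed_eq (by fun_prop) continuous_const
  · intro U hU i _ j _
    simpa using entry_norm_bound_of_unitary hU i j

/-- The sum of a polynomial over the `N`-th roots of unity sees only its constant term, provided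
its degree is less than `N`. -/
lemma sum_eval_rootsOfUnity {N : ℕ} {ζ : ℂ} (hζ : IsPrimitiveRoot ζ N) (p : Polynomial ℂ)
    (hp : p.natDegree < N) :
    ∑ j ∈ Finset.range N, p.eval (ζ ^ j) = N * p.eval 0 := by
  simp_rw [Polynomial.eval_eq_sum_range' hp (_ ^ _)]
  rw [Finset.sum_comm, Finset.sum_eq_single_of_mem 0 (Finset.mem_range.2 (by omega))]
  · simp [Polynomial.coeff_zero_eq_eval_zero]
  · intro i hi hi0
    rw [← Finset.mul_sum]
    have hne : ζ ^ i ≠ 1 := hζ.pow_ne_one_of_pos_of_lt hi0 (Finset.mem_range.1 hi)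
    have hsum : ∑ j ∈ Finset.range N, (ζ ^ i) ^ j = 0 := by
      rw [geom_sum_eq hne, ← pow_mul, mul_comm, pow_mul, hζ.pow_eq_one]
      simp
    have hswap : ∀ j, (ζ ^ j) ^ i = (ζ ^ i) ^ j := fun j => pow_right_comm ζ j i
    simp_rw [hswap, hsum, mul_zero]

lemma smul_one_mem_unitaryGroup (n : ℕ) {z : ℂ} (hz : ‖z‖ = 1) :
    z • (1 : Matrix (Fin n) (Fin n) ℂ) ∈ Matrix.unitaryGroup (Fin n) ℂ := by
  rw [Matrix.mem_unitaryGroup_iff]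
  have h : z * star z = 1 := by
    simp [Complex.mul_conj, Complex.normSq_eq_norm_sq, hz]
  rw [star_smul, star_one, smul_mul_smul_comm, h, one_mul, one_smul]

/-- If `f (z M)` is a polynomial in `z` of bounded degree whose constant term `c` does not depend
on `M`, then `f` integrates to `c`. -/
lemma integral_eq_of_eval {n : ℕ} (μ : Measure (Matrix.unitaryGroup (Fin n) ℂ))
    [IsProbabilityMeasure μ] [μ.IsMulLeftInvariant] (f : Matrix (Fin n) (Fin n) ℂ → ℂ)
    (hf : Continuous f) (c : ℂ) (N : ℕ) (p : Matrix (Fin n) (Fin n) ℂ → Polynomial ℂ)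
    (hdeg : ∀ M, (p M).natDegree < N) (heval : ∀ M z, (p M).eval z = f (z • M))
    (hc : f 0 = c) :
    ∫ M : Matrix.unitaryGroup (Fin n) ℂ, f M ∂μ = c := by
  have hN : N ≠ 0 := by
    have := hdeg 0
    omega
  obtain ⟨ζ, hζ⟩ : ∃ ζ : ℂ, IsPrimitiveRoot ζ N := ⟨_, Complex.isPrimitiveRoot_exp N hN⟩
  have hnorm : ∀ j, ‖ζ ^ j‖ = 1 := fun j => by
    rw [norm_pow, hζ.norm'_eq_one hN, one_pow]
  have hinv : ∀ j, ∫ M : Matrix.unitaryGroup (Fin n) ℂ, f (ζ ^ j • (M : Matrix _ _ ℂ)) ∂μ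
      = ∫ M : Matrix.unitaryGroup (Fin n) ℂ, f M ∂μ := fun j => by
    rw [← integral_mul_left_eq_self (μ := μ)
      (fun M : Matrix.unitaryGroup (Fin n) ℂ => f (M : Matrix _ _ ℂ))
      ⟨_, smul_one_mem_unitaryGroup n (hnorm j)⟩]
    simp
  have hint : ∀ j, Integrable
      (fun M : Matrix.unitaryGroup (Fin n) ℂ => f (ζ ^ j • (M : Matrix _ _ ℂ))) μ := fun j =>
    Continuous.integrable_of_hasCompactSupport
      (hf.comp (by fun_prop)) (HasCompactSupport.of_compactSpace _)
  have hsum : ∑ j ∈ Finset.range N,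
      ∫ M : Matrix.unitaryGroup (Fin n) ℂ, f (ζ ^ j • (M : Matrix _ _ ℂ)) ∂μ = N * c := by
    rw [← integral_finsetSum _ fun j _ => hint j]
    have h : ∀ M : Matrix.unitaryGroup (Fin n) ℂ,
        ∑ j ∈ Finset.range N, f (ζ ^ j • (M : Matrix _ _ ℂ)) = N * c := fun M => by
      simp_rw [← heval, sum_eval_rootsOfUnity hζ _ (hdeg M), heval, zero_smul, hc]
    simp [h]
  simp_rw [hinv] at hsum
  simpa [hN] using hsum

/-- The polynomial `det (I + zM) ^ k` in the variable `z`. -/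
def detPoly {n : ℕ} (k : ℕ) (M : Matrix (Fin n) (Fin n) ℂ) : Polynomial ℂ :=
  (det ((Polynomial.X : Polynomial ℂ) • M.map Polynomial.C +
    (1 : Matrix (Fin n) (Fin n) ℂ).map Polynomial.C)) ^ k

lemma natDegree_detPoly_le {n : ℕ} (k : ℕ) (M : Matrix (Fin n) (Fin n) ℂ) :
    (detPoly k M).natDegree ≤ k * n := by
  refine Polynomial.natDegree_pow_le_of_le k ?_
  simpa using Polynomial.natDegree_det_X_add_C_le M 1

lemma eval_detPoly {n : ℕ} (k : ℕ) (M : Matrix (Fin n) (Fin n) ℂ) (z : ℂ) :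
    (detPoly k M).eval z = (1 + z • M).det ^ k := by
  rw [detPoly, Polynomial.eval_pow, ← Polynomial.coe_evalRingHom, RingHom.map_det]
  congr 2
  ext i j
  by_cases h : i = j <;> simp [h] <;> ring

theorem unitary_det_normalization (n : ℕ) (hn : 1 ≤ n) (k : ℕ)
    (μ : Measure (Matrix.unitaryGroup (Fin n) ℂ)) [IsProbabilityMeasure μ]
    [μ.IsMulLeftInvariant] :
    (∫ M : Matrix.unitaryGroup (Fin n) ℂ,
        ((1 : Matrix (Fin n) (Fin n) ℂ) + (M : Matrix (Fin n) (Fin n) ℂ)).det ^ k ∂μ) = 1 ∧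
    (∫ M : Matrix.unitaryGroup (Fin n) ℂ,
        Matrix.trace (M : Matrix (Fin n) (Fin n) ℂ) *
          ((1 : Matrix (Fin n) (Fin n) ℂ) + (M : Matrix (Fin n) (Fin n) ℂ)).det ^ k ∂μ) = 0 := by
  have hdet : Continuous fun M : Matrix (Fin n) (Fin n) ℂ => (1 + M).det ^ k :=
    (Continuous.matrix_det (by fun_prop)).pow k
  constructor
  · exact integral_eq_of_eval μ (fun M => (1 + M).det ^ k) hdet 1 (k * n + 1) (detPoly k)
      (fun M => Nat.lt_succ_of_le (natDegree_detPoly_le k M)) (eval_detPoly k) (by simp)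
  · refine integral_eq_of_eval μ (fun M => M.trace * (1 + M).det ^ k)
      ((Continuous.matrix_trace continuous_id).mul hdet) 0 (1 + k * n + 1)
      (fun M => (Polynomial.C M.trace * Polynomial.X) * detPoly k M) (fun M => ?_)
      (fun M z => ?_) (by simp)
    · exact Nat.lt_succ_of_le (Polynomial.natDegree_mul_le_of_le
        ((Polynomial.natDegree_C_mul_le _ _).trans Polynomial.natDegree_X_le) (natDegree_detPoly_le k M))
    · simp [eval_detPoly, mul_comm z]
end
end

section
/- Let ℓ ≥ 0 be an integer. Then, as x → 0, log E_{O₊(ℓ+1)}[ e^{x·tr M} ] − ( x²/2 + x^{ℓ+1}/(ℓ+1)! ) = O(x^{ℓ+2}) and log E_{O₋(ℓ+1)}[ e^{x·tr M} ] − ( x²/2 − x^{ℓ+1}/(ℓ+1)! ) = O(x^{ℓ+2}); in particular E_{O₊(ℓ+1)}[e^{x·tr M}] + E_{O₋(ℓ+1)}[e^{x·tr M}] = 2·exp( x²/2 + O(x^{ℓ+2}) ) as x → 0. -/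
/-!
Put `m = ℓ + 1`. Since the indicator of `det M = ε` is `(1 + ε det M) / 2` for `ε = ±1`, everything
reduces to `detExp μ ε x = ∫ (1 + ε det M) exp (x tr M) dμ`, and modulo `O(x ^ (m + 1))` only the
moments `∫ (tr M) ^ k` and `∫ det M (tr M) ^ k` with `k ≤ m` matter. They are computed from left
invariance alone.

* `moment_eq`: for `k ≤ m` the moments of `tr M` are Gaussian. Expand `(tr M) ^ (k + 2)` into
  monomials `M t t * ∏ j, M (d j) (d j)`. Invariance under a one-parameter family of reflections
  in the plane of `e_b` and `e_t`, where row `b` does not occur in the monomial, gives after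
  differentiation (`integral_fresh_row`)
  `E[M t t ∏ j, M (d j) (d j)] = ∑_{j : d j = t} E[(M b t) ^ 2 ∏_{i ≠ j} M (d i) (d i)]`.
  Which unused row `b` is chosen is irrelevant by permutation invariance, so summing over `t` and
  using `∑ t, (M b t) ^ 2 = 1` leaves
  `E[(tr M) ^ (k + 2)] = (k + 1) E[(tr M) ^ k]` (`moment_rec`).
* `det_moment_lt`, `det_moment_eq`: `E[det M (tr M) ^ k]` is `0` for `k < m`, because negating a row
  absent from a monomial changes the sign of the determinant only; for `k = m` the surviving
  monomials give `m! E[det M ∏ i, M i i] = E[(det M) ^ 2] = 1`.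

Hence `detExp μ ε x = exp (x ^ 2 / 2 + ε x ^ m / m!) + O(x ^ (m + 1))`
(`detExp_isBigO_exp`), and taking logarithms gives the two estimates for `ε = ±1`; the estimate for
the sum of the two expectations is the case `ε = 0`.
-/

open MeasureTheory Matrix

noncomputable section

instance (m : ℕ) : MeasurableSpace (Matrix.orthogonalGroup (Fin m) ℝ) := borel _

/-- Expectation over the component of the orthogonal group `O(m)` where the determinant
equals `e` (with `e = ±1`): `E_{O_ε(m)} f = 2 ∫_{O(m)} f(M)·𝟙[det M = e] dμ(M)`, where `μ`
is the normalized Haar probability measure on `O(m)`. -/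
noncomputable def expO (m : ℕ) (μ : Measure (Matrix.orthogonalGroup (Fin m) ℝ)) (e : ℝ)
    (f : Matrix.orthogonalGroup (Fin m) ℝ → ℝ) : ℝ :=
  2 * ∫ M, (if (M : Matrix (Fin m) (Fin m) ℝ).det = e then f M else 0) ∂μ

namespace OrthogonalMoments

set_option linter.unusedSectionVars false

variable {m : ℕ}

/-! ### The compact group `O(m)` -/

instance : BorelSpace (orthogonalGroup (Fin m) ℝ) := ⟨rfl⟩

lemma abs_entry_le (M : orthogonalGroup (Fin m) ℝ) (i j : Fin m) : |M.1 i j| ≤ 1 :=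
  entry_norm_bound_of_unitary M.2 i j

instance : CompactSpace (orthogonalGroup (Fin m) ℝ) := by
  refine isCompact_iff_compactSpace.mp ?_
  have hK : IsCompact (Set.pi Set.univ (fun _ : Fin m => Set.pi Set.univ
      (fun _ : Fin m => Set.Icc (-1 : ℝ) 1))) :=
    isCompact_univ_pi fun _ => isCompact_univ_pi fun _ => isCompact_Icc
  refine hK.of_isClosed_subset (t := (orthogonalGroup (Fin m) ℝ : Set (Matrix _ _ ℝ))) ?_ ?_
  · have : (orthogonalGroup (Fin m) ℝ : Set (Matrix (Fin m) (Fin m) ℝ))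
        = {A | A * Aᵀ = 1} := by
      ext A
      exact mem_orthogonalGroup_iff _ _
    rw [this]
    exact isClosed_eq (by fun_prop) continuous_const
  · intro A hA i _ j _
    exact abs_le.mp (abs_entry_le ⟨A, hA⟩ i j)

@[fun_prop]
lemma continuous_entry (i j : Fin m) :
    Continuous fun M : orthogonalGroup (Fin m) ℝ => M.1 i j :=
  continuous_subtype_val.matrix_elem i j

@[fun_prop]
lemma continuous_detO :
    Continuous fun M : orthogonalGroup (Fin m) ℝ => M.1.det :=
  continuous_subtype_val.matrix_det

@[fun_prop]
lemma continuous_traceO :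
    Continuous fun M : orthogonalGroup (Fin m) ℝ => M.1.trace :=
  continuous_subtype_val.matrix_trace

lemma row_sq_sum (M : orthogonalGroup (Fin m) ℝ) (b : Fin m) : ∑ t, M.1 b t ^ 2 = 1 := by
  have h := congrFun (congrFun ((mem_orthogonalGroup_iff _ _).mp M.2) b) b
  simpa [mul_apply, sq] using h

lemma det_eq_or (M : orthogonalGroup (Fin m) ℝ) : M.1.det = 1 ∨ M.1.det = -1 := by
  have h := congrArg det ((mem_orthogonalGroup_iff _ _).mp M.2)
  rw [det_mul, det_transpose, det_one] at h
  exact mul_self_eq_one_iff.mp h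

/-! ### Explicit orthogonal matrices -/

/-- The permutation matrix of `σ`; left multiplication by it moves row `σ i` to row `i`. -/
def permO (σ : Equiv.Perm (Fin m)) : orthogonalGroup (Fin m) ℝ :=
  ⟨σ.permMatrix ℝ, by
    rw [mem_orthogonalGroup_iff, transpose_permMatrix, ← permMatrix_mul]
    simp⟩

lemma permO_mul_apply (σ : Equiv.Perm (Fin m)) (M : orthogonalGroup (Fin m) ℝ) (i j : Fin m) :
    (permO σ * M).1 i j = M.1 (σ i) j := by
  change (σ.permMatrix ℝ * M.1) i j = _
  rw [Equiv.Perm.permMatrix, PEquiv.toMatrix_toPEquiv_mul]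
  rfl

lemma det_permO_mul (σ : Equiv.Perm (Fin m)) (M : orthogonalGroup (Fin m) ℝ) :
    (permO σ * M).1.det = (Equiv.Perm.sign σ : ℤ) * M.1.det := by
  change (σ.permMatrix ℝ * M.1).det = _
  rw [det_mul, det_permutation]

/-- The diagonal matrix with entry `-1` in position `c` and `1` elsewhere; left multiplication
by it negates row `c`. -/
def flipO (c : Fin m) : orthogonalGroup (Fin m) ℝ :=
  ⟨diagonal (Function.update 1 c (-1)), by
    rw [mem_orthogonalGroup_iff, diagonal_transpose, diagonal_mul_diagonal, ← diagonal_one]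
    congr 1
    ext i
    by_cases h : i = c <;> simp [h]⟩

lemma flipO_mul_apply (c : Fin m) (M : orthogonalGroup (Fin m) ℝ) {i : Fin m} (hi : i ≠ c)
    (j : Fin m) : (flipO c * M).1 i j = M.1 i j := by
  change (diagonal (Function.update 1 c (-1)) * M.1 : Matrix _ _ ℝ) i j = _
  simp [hi]

lemma flipO_mul_apply_self (c : Fin m) (M : orthogonalGroup (Fin m) ℝ) (j : Fin m) :
    (flipO c * M).1 c j = - M.1 c j := by
  change (diagonal (Function.update 1 c (-1)) * M.1 : Matrix _ _ ℝ) c j = _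
  simp

lemma det_flipO_mul (c : Fin m) (M : orthogonalGroup (Fin m) ℝ) :
    (flipO c * M).1.det = - M.1.det := by
  change (diagonal _ * M.1).det = _
  rw [det_mul, det_diagonal, Finset.prod_update_of_mem (Finset.mem_univ c)]
  simp

/-- The unit vector `cos φ e_b + sin φ e_t` (for `b ≠ t`). -/
def planeVec (b t : Fin m) (φ : ℝ) (i : Fin m) : ℝ :=
  if i = b then Real.cos φ else if i = t then Real.sin φ else 0

lemma sum_planeVec_mul {b t : Fin m} (hbt : b ≠ t) (φ : ℝ) (f : Fin m → ℝ) :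
    ∑ i, planeVec b t φ i * f i = Real.cos φ * f b + Real.sin φ * f t := by
  have h : ∀ i, planeVec b t φ i * f i =
      (if i = b then Real.cos φ * f i else 0) + (if i = t then Real.sin φ * f i else 0) := by
    intro i
    unfold planeVec
    by_cases h1 : i = b
    · have h2 : i ≠ t := fun h => hbt (h1.symm.trans h)
      simp [h1, hbt]
    · by_cases h2 : i = t <;> simp [h1, h2, hbt.symm]
  simp [h, Finset.sum_add_distrib]

/-- The reflection in the hyperplane orthogonal to `cos φ e_b + sin φ e_t`. -/
def reflO {b t : Fin m} (hbt : b ≠ t) (φ : ℝ) : orthogonalGroup (Fin m) ℝ :=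
  ⟨1 - (2 : ℝ) • vecMulVec (planeVec b t φ) (planeVec b t φ), by
    have hv : planeVec b t φ ⬝ᵥ planeVec b t φ = 1 := by
      rw [dotProduct, sum_planeVec_mul hbt]
      simp only [planeVec, if_true, hbt.symm, if_false]
      nlinarith [Real.sin_sq_add_cos_sq φ]
    rw [mem_orthogonalGroup_iff]
    simp only [transpose_sub, transpose_one, transpose_smul, transpose_vecMulVec, sub_mul, mul_sub,
      one_mul, mul_one, smul_mul_smul_comm, vecMulVec_mul_vecMulVec, hv, one_smul]
    module⟩

lemma reflO_mul_apply {b t : Fin m} (hbt : b ≠ t) (φ : ℝ) (M : orthogonalGroup (Fin m) ℝ)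
    (i j : Fin m) :
    (reflO hbt φ * M).1 i j =
      M.1 i j - 2 * planeVec b t φ i * (Real.cos φ * M.1 b j + Real.sin φ * M.1 t j) := by
  change ((1 - (2 : ℝ) • vecMulVec (planeVec b t φ) (planeVec b t φ)) * M.1) i j = _
  rw [sub_mul, one_mul, Matrix.sub_apply, smul_mul_assoc, Matrix.smul_apply, mul_apply,
    ← sum_planeVec_mul hbt φ (fun k => M.1 k j), Finset.mul_sum, smul_eq_mul, Finset.mul_sum]
  simp only [vecMulVec_apply]
  congr 1
  exact Finset.sum_congr rfl fun k _ => by ring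

variable (μ : Measure (orthogonalGroup (Fin m) ℝ)) [IsProbabilityMeasure μ]

lemma integrable_of_cont {f : orthogonalGroup (Fin m) ℝ → ℝ} (hf : Continuous f) :
    Integrable f μ :=
  hf.integrable_of_hasCompactSupport (HasCompactSupport.of_compactSpace f)

variable [μ.IsMulLeftInvariant]

/-! ### Moments of the trace, with and without the determinant -/

/-- Invariance under the reflections `reflO`, differentiated at `φ = 0`: if row `b` occurs
neither among the rows `d j` nor as `t`, one factor from row `t` is traded for a pair of factors
from the fresh row `b`. -/
lemma integral_fresh_row {k : ℕ} {b t : Fin m} (hbt : b ≠ t) (d : Fin k → Fin m)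
    (hd : ∀ j, d j ≠ b) :
    ∫ M, M.1 t t * ∏ j, M.1 (d j) (d j) ∂μ =
      ∑ j, if d j = t then
        ∫ M, M.1 b t ^ 2 * ∏ i ∈ Finset.univ.erase j, M.1 (d i) (d i) ∂μ else 0 := by
  -- the factors of the integrand moved by the reflection, and their derivatives in `φ`
  let u : ℝ → orthogonalGroup (Fin m) ℝ → ℝ := fun φ M =>
    M.1 b t - 2 * Real.cos φ * (Real.cos φ * M.1 b t + Real.sin φ * M.1 t t)
  let u' : ℝ → orthogonalGroup (Fin m) ℝ → ℝ := fun φ M =>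
    2 * Real.sin φ * (Real.cos φ * M.1 b t + Real.sin φ * M.1 t t)
      - 2 * Real.cos φ * (-Real.sin φ * M.1 b t + Real.cos φ * M.1 t t)
  let w : Fin k → ℝ → orthogonalGroup (Fin m) ℝ → ℝ := fun j φ M =>
    M.1 (d j) (d j) - 2 * ((if d j = t then 1 else 0) * Real.sin φ) *
      (Real.cos φ * M.1 b (d j) + Real.sin φ * M.1 t (d j))
  let w' : Fin k → ℝ → orthogonalGroup (Fin m) ℝ → ℝ := fun j φ M =>
    - (2 * ((if d j = t then 1 else 0) * Real.cos φ) *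
        (Real.cos φ * M.1 b (d j) + Real.sin φ * M.1 t (d j))
      + 2 * ((if d j = t then 1 else 0) * Real.sin φ) *
        (-Real.sin φ * M.1 b (d j) + Real.cos φ * M.1 t (d j)))
  have hu : ∀ φ M, HasDerivAt (fun x => u x M) (u' φ M) φ := by
    intro φ M
    have hc := Real.hasDerivAt_cos φ
    have hs := Real.hasDerivAt_sin φ
    have := ((hc.const_mul 2).mul ((hc.mul_const (M.1 b t)).add (hs.mul_const (M.1 t t)))).const_sub
      (M.1 b t)
    convert! this using 1
    simp only [u', Pi.add_apply]
    ring
  have hw : ∀ j φ M, HasDerivAt (fun x => w j x M) (w' j φ M) φ := by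
    intro j φ M
    have hc := Real.hasDerivAt_cos φ
    have hs := Real.hasDerivAt_sin φ
    have := (((hs.const_mul (if d j = t then (1 : ℝ) else 0)).const_mul 2).mul
      ((hc.mul_const (M.1 b (d j))).add (hs.mul_const (M.1 t (d j))))).const_sub
      (M.1 (d j) (d j))
    convert! this using 1
  let F : ℝ → orthogonalGroup (Fin m) ℝ → ℝ := fun φ M => u φ M * ∏ j, w j φ M
  let F' : ℝ → orthogonalGroup (Fin m) ℝ → ℝ := fun φ M =>
    u' φ M * ∏ j, w j φ M + u φ M * ∑ j, (∏ i ∈ Finset.univ.erase j, w i φ M) • w' j φ M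
  have hF : ∀ φ M, HasDerivAt (fun x => F x M) (F' φ M) φ := fun φ M =>
    (hu φ M).mul (HasDerivAt.fun_finsetProd fun j _ => hw j φ M)
  have hFc : ∀ φ, Continuous (F φ) := by
    intro φ
    simp only [F, u, w]
    fun_prop
  have hF'c : Continuous (fun p : ℝ × orthogonalGroup (Fin m) ℝ => F' p.1 p.2) := by
    have he : ∀ i j, Continuous fun p : ℝ × orthogonalGroup (Fin m) ℝ => p.2.1 i j :=
      fun i j => (continuous_entry i j).comp continuous_snd
    have hE : ∀ (f g : ℝ → ℝ) (i j i' j' : Fin m), Continuous f → Continuous g →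
        Continuous fun p : ℝ × orthogonalGroup (Fin m) ℝ => f p.1 * p.2.1 i j + g p.1 * p.2.1 i' j' :=
      fun f g i j i' j' hf hg => ((hf.comp continuous_fst).mul (he i j)).add
        ((hg.comp continuous_fst).mul (he i' j'))
    have hcos : Continuous fun p : ℝ × orthogonalGroup (Fin m) ℝ => Real.cos p.1 := by fun_prop
    have hsin : Continuous fun p : ℝ × orthogonalGroup (Fin m) ℝ => Real.sin p.1 := by fun_prop
    have h1 : ∀ s, Continuous fun p : ℝ × orthogonalGroup (Fin m) ℝ =>
        Real.cos p.1 * p.2.1 b s + Real.sin p.1 * p.2.1 t s :=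
      fun s => hE _ _ _ _ _ _ Real.continuous_cos Real.continuous_sin
    have h2 : ∀ s, Continuous fun p : ℝ × orthogonalGroup (Fin m) ℝ =>
        -Real.sin p.1 * p.2.1 b s + Real.cos p.1 * p.2.1 t s :=
      fun s => hE (fun x => -Real.sin x) _ _ _ _ _ Real.continuous_sin.neg Real.continuous_cos
    have huc : Continuous fun p : ℝ × orthogonalGroup (Fin m) ℝ => u p.1 p.2 :=
      (he b t).sub ((continuous_const.mul hcos).mul (h1 t))
    have hu'c : Continuous fun p : ℝ × orthogonalGroup (Fin m) ℝ => u' p.1 p.2 :=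
      ((continuous_const.mul hsin).mul (h1 t)).sub ((continuous_const.mul hcos).mul (h2 t))
    have hwc : ∀ j, Continuous fun p : ℝ × orthogonalGroup (Fin m) ℝ => w j p.1 p.2 := fun j =>
      (he _ _).sub ((continuous_const.mul (continuous_const.mul hsin)).mul (h1 _))
    have hw'c : ∀ j, Continuous fun p : ℝ × orthogonalGroup (Fin m) ℝ => w' j p.1 p.2 := fun j =>
      (((continuous_const.mul (continuous_const.mul hcos)).mul (h1 _)).add
        ((continuous_const.mul (continuous_const.mul hsin)).mul (h2 _))).neg
    exact (hu'c.mul (continuous_finsetProd _ fun j _ => hwc j)).add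
      (huc.mul (continuous_finsetSum _ fun j _ =>
        (continuous_finsetProd _ fun i _ => hwc i).smul (hw'c j)))
  have hinv : ∀ φ, ∫ M, F φ M ∂μ = ∫ M, M.1 b t * ∏ j, M.1 (d j) (d j) ∂μ := by
    intro φ
    rw [← integral_mul_left_eq_self (μ := μ)
      (fun M : orthogonalGroup (Fin m) ℝ => M.1 b t * ∏ j, M.1 (d j) (d j)) (reflO hbt φ)]
    congr 1
    ext M
    simp only [reflO_mul_apply, F, u, w, planeVec, if_true, hd, if_false, ite_mul, one_mul,
      zero_mul]
  obtain ⟨C, hC⟩ := ((isCompact_Icc (a := (-1 : ℝ)) (b := 1)).prod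
    (isCompact_univ (X := orthogonalGroup (Fin m) ℝ))).exists_bound_of_continuousOn
      hF'c.continuousOn
  have hder := (hasDerivAt_integral_of_dominated_loc_of_deriv_le (μ := μ) (F := F) (F' := F')
    (x₀ := 0) (s := Set.Icc (-1) 1) (bound := fun _ => C) (Icc_mem_nhds (by norm_num) (by norm_num))
    (.of_forall fun φ => (hFc φ).aestronglyMeasurable) (integrable_of_cont μ (hFc 0))
    (hF'c.comp (by fun_prop : Continuous fun M : orthogonalGroup (Fin m) ℝ =>
      ((0 : ℝ), M))).aestronglyMeasurable
    (.of_forall fun M φ hφ => hC (φ, M) ⟨hφ, Set.mem_univ _⟩) (integrable_const C)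
    (.of_forall fun M φ _ => hF φ M)).2
  simp only [hinv] at hder
  have h0 : ∫ M, F' 0 M ∂μ = 0 := hder.unique (hasDerivAt_const _ _)
  have hF'0 : ∀ M, F' 0 M = -2 * (M.1 t t * ∏ j, M.1 (d j) (d j)) + 2 * ∑ j, if d j = t then
        M.1 b t ^ 2 * ∏ i ∈ Finset.univ.erase j, M.1 (d i) (d i) else 0 := by
    intro M
    simp only [F', u, u', w, w', Real.cos_zero, Real.sin_zero, Finset.mul_sum]
    congr 1
    · simp
      ring
    · refine Finset.sum_congr rfl fun j _ => ?_
      split_ifs with h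
      · simp [h]
        ring
      · simp
  have hInt : ∀ j, Integrable (fun M : orthogonalGroup (Fin m) ℝ => if d j = t then
      M.1 b t ^ 2 * ∏ i ∈ Finset.univ.erase j, M.1 (d i) (d i) else 0) μ := by
    intro j
    apply integrable_of_cont
    split_ifs <;> fun_prop
  simp only [hF'0] at h0
  rw [integral_add (integrable_of_cont μ (by fun_prop))
    ((integrable_finsetSum _ fun j _ => hInt j).const_mul 2), integral_const_mul,
    integral_const_mul, integral_finsetSum _ fun j _ => hInt j] at h0
  have h1 : ∀ j, ∫ M : orthogonalGroup (Fin m) ℝ, (if d j = t then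
      M.1 b t ^ 2 * ∏ i ∈ Finset.univ.erase j, M.1 (d i) (d i) else 0) ∂μ =
      if d j = t then
        ∫ M, M.1 b t ^ 2 * ∏ i ∈ Finset.univ.erase j, M.1 (d i) (d i) ∂μ else 0 := by
    intro j
    split_ifs <;> simp
  simp only [h1] at h0
  linarith

lemma trace_pow_eq (k : ℕ) (M : orthogonalGroup (Fin m) ℝ) :
    M.1.trace ^ k = ∑ a : Fin k → Fin m, ∏ j, M.1 (a j) (a j) := by
  simp [trace, Finset.sum_pow']

/-- Which row outside the rows `c i` is used does not matter. -/
lemma integral_swap_row {k : ℕ} {b b' t : Fin m} (c : Fin k → Fin m) (hb : ∀ i, c i ≠ b)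
    (hb' : ∀ i, c i ≠ b') :
    ∫ M, M.1 b t ^ 2 * ∏ i, M.1 (c i) (c i) ∂μ = ∫ M, M.1 b' t ^ 2 * ∏ i, M.1 (c i) (c i) ∂μ := by
  rw [← integral_mul_left_eq_self (μ := μ) _ (permO (Equiv.swap b b'))]
  simp only [permO_mul_apply, Equiv.swap_apply_left]
  congr 1
  ext M
  congr 1
  exact Finset.prod_congr rfl fun i _ => by rw [Equiv.swap_apply_of_ne_of_ne (hb i) (hb' i)]

lemma exists_fresh {k : ℕ} (hk : k < m) (c : Fin k → Fin m) : ∃ b, ∀ i, c i ≠ b := by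
  by_contra! h
  have := Fintype.card_le_of_surjective c h
  simp at this
  omega

/-- Gaussian recursion of the moments of the trace, valid as long as the number of factors does
not exceed the dimension. -/
lemma moment_rec (k : ℕ) (hk : k + 2 ≤ m) :
    ∫ M, M.1.trace ^ (k + 2) ∂μ = (k + 1 : ℝ) * ∫ M, M.1.trace ^ k ∂μ := by
  choose fr hfr using fun c : Fin k → Fin m => exists_fresh (by omega) c
  have herase : ∀ (j : Fin (k + 1)) (f : Fin (k + 1) → ℝ),
      ∏ i ∈ Finset.univ.erase j, f i = ∏ i : Fin k, f (j.succAbove i) := by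
    intro j f
    rw [Fin.univ_succAbove k j]
    simp
  have hstep : ∀ (t : Fin m) (d : Fin (k + 1) → Fin m),
      ∫ M, M.1 t t * ∏ j, M.1 (d j) (d j) ∂μ = ∑ j, if d j = t then
        ∫ M, M.1 (fr (j.removeNth d)) t ^ 2 *
          ∏ i, M.1 (j.removeNth d i) (j.removeNth d i) ∂μ else 0 := by
    intro t d
    obtain ⟨b, hd⟩ := exists_fresh (by omega) d
    by_cases ht : ∃ j, d j = t
    swap
    · -- row `t` occurs once on the left, so negating it shows that both sides vanish
      push Not at ht
      rw [Finset.sum_eq_zero fun j _ => if_neg (ht j)]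
      have h := integral_mul_left_eq_self (μ := μ)
        (fun M : orthogonalGroup (Fin m) ℝ => M.1 t t * ∏ j, M.1 (d j) (d j)) (flipO t)
      simp only [flipO_mul_apply_self, flipO_mul_apply t _ (ht _), neg_mul, integral_neg] at h
      linarith
    have hbt : b ≠ t := by
      rintro rfl
      obtain ⟨j, hj⟩ := ht
      exact hd j hj
    rw [integral_fresh_row μ hbt d hd]
    refine Finset.sum_congr rfl fun j _ => ?_
    congr 1
    simp only [herase]
    exact integral_swap_row μ (j.removeNth d) (fun i => hd _) (hfr _)
  have hins : ∀ j : Fin (k + 1), ∑ t, ∑ d : Fin (k + 1) → Fin m, (if d j = t then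
        ∫ M, M.1 (fr (j.removeNth d)) t ^ 2 *
          ∏ i, M.1 (j.removeNth d i) (j.removeNth d i) ∂μ else 0) = ∫ M, M.1.trace ^ k ∂μ := by
    intro j
    have hd : ∀ (g : Fin m → (Fin k → Fin m) → ℝ), ∑ t, ∑ d : Fin (k + 1) → Fin m,
        (if d j = t then g t (j.removeNth d) else 0) = ∑ c, ∑ t, g t c := by
      intro g
      rw [Finset.sum_comm]
      simp only [Finset.sum_ite_eq, Finset.mem_univ, if_true]
      rw [← (Fin.insertNthEquiv (fun _ => Fin m) j).sum_comp, Fintype.sum_prod_type,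
        Finset.sum_comm]
      simp [Fin.insertNthEquiv]
    rw [hd (fun t c => ∫ M, M.1 (fr c) t ^ 2 * ∏ i, M.1 (c i) (c i) ∂μ)]
    simp only [trace_pow_eq]
    rw [integral_finsetSum _ fun c _ => integrable_of_cont μ (by fun_prop)]
    refine Finset.sum_congr rfl fun c _ => ?_
    rw [← integral_finsetSum _ fun t _ => integrable_of_cont μ (by fun_prop)]
    simp only [← Finset.sum_mul, row_sq_sum, one_mul]
  have hexp : ∀ M : orthogonalGroup (Fin m) ℝ, M.1.trace ^ (k + 2) =
      ∑ t, ∑ d : Fin (k + 1) → Fin m, M.1 t t * ∏ j, M.1 (d j) (d j) := by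
    intro M
    rw [pow_succ', trace_pow_eq, trace, Finset.sum_mul]
    simp only [Finset.mul_sum, diag_apply]
  simp only [hexp]
  rw [integral_finsetSum _ fun t _ => integrable_of_cont μ (by fun_prop)]
  have hInt : ∀ t, ∫ M : orthogonalGroup (Fin m) ℝ,
      ∑ d : Fin (k + 1) → Fin m, M.1 t t * ∏ j, M.1 (d j) (d j) ∂μ =
      ∑ d : Fin (k + 1) → Fin m, ∫ M, M.1 t t * ∏ j, M.1 (d j) (d j) ∂μ := fun t =>
    integral_finsetSum _ fun d _ => integrable_of_cont μ (by fun_prop)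
  simp only [hInt, hstep]
  have hcomm : ∀ t, ∑ d : Fin (k + 1) → Fin m, ∑ j, (if d j = t then
        ∫ M, M.1 (fr (j.removeNth d)) t ^ 2 *
          ∏ i, M.1 (j.removeNth d i) (j.removeNth d i) ∂μ else 0) =
      ∑ j, ∑ d : Fin (k + 1) → Fin m, (if d j = t then
        ∫ M, M.1 (fr (j.removeNth d)) t ^ 2 *
          ∏ i, M.1 (j.removeNth d i) (j.removeNth d i) ∂μ else 0) := fun t => Finset.sum_comm
  simp only [hcomm]
  rw [Finset.sum_comm]
  simp only [hins]
  simp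

lemma moment_one : ∫ M, M.1.trace ∂μ = 0 := by
  have h := integral_mul_left_eq_self (μ := μ)
    (fun M : orthogonalGroup (Fin m) ℝ => M.1.trace) (-1)
  have hneg : ∀ M : orthogonalGroup (Fin m) ℝ, ((-1) * M).1.trace = - M.1.trace := by
    intro M
    rw [neg_one_mul]
    exact trace_neg _
  simp only [hneg, integral_neg] at h
  linarith

/-- Below degree `m`, some row is absent from each monomial of `tr M ^ k`; negating it changes
the sign of the determinant only. -/
lemma det_moment_lt {k : ℕ} (hk : k < m) : ∫ M, M.1.det * M.1.trace ^ k ∂μ = 0 := by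
  simp only [trace_pow_eq, Finset.mul_sum]
  rw [integral_finsetSum _ fun c _ => integrable_of_cont μ (by fun_prop)]
  refine Finset.sum_eq_zero fun c _ => ?_
  obtain ⟨b, hb⟩ := exists_fresh hk c
  have h := integral_mul_left_eq_self (μ := μ)
    (fun M : orthogonalGroup (Fin m) ℝ => M.1.det * ∏ j, M.1 (c j) (c j)) (flipO b)
  simp only [det_flipO_mul, flipO_mul_apply b _ (hb _), neg_mul, integral_neg] at h
  linarith

/-- In degree `m` only the monomials using every row survive; they are all equal to
`∏ i, M i i`, and invariance under row permutations compares their sum with the Leibniz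
expansion of `det M ^ 2 = 1`. -/
lemma det_moment_eq : ∫ M, M.1.det * M.1.trace ^ m ∂μ = 1 := by
  have hperm : ∀ σ : Equiv.Perm (Fin m), ∫ M, M.1.det * ∏ i, M.1 (σ i) i ∂μ =
      (Equiv.Perm.sign σ : ℤ) * ∫ M, M.1.det * ∏ i, M.1 i i ∂μ := by
    intro σ
    have h := integral_mul_left_eq_self (μ := μ)
      (fun M : orthogonalGroup (Fin m) ℝ => M.1.det * ∏ i, M.1 i i) (permO σ)
    simp only [det_permO_mul, permO_mul_apply, mul_assoc, integral_const_mul] at h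
    rw [← h, ← mul_assoc, ← Int.cast_mul]
    simp
  have hdet : ∑ σ : Equiv.Perm (Fin m), ∫ M, M.1.det * ∏ i, M.1 i i ∂μ = 1 := by
    have h1 : ∀ M : orthogonalGroup (Fin m) ℝ, ∑ σ : Equiv.Perm (Fin m),
        ((Equiv.Perm.sign σ : ℤ) : ℝ) * (M.1.det * ∏ i, M.1 (σ i) i) = 1 := by
      intro M
      have h2 : M.1.det * M.1.det = 1 := by rcases det_eq_or M with h | h <;> simp [h]
      rw [← h2]
      nth_rewrite 3 [det_apply']
      rw [Finset.mul_sum]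
      exact Finset.sum_congr rfl fun σ _ => by ring
    have h3 : ∫ M : orthogonalGroup (Fin m) ℝ, ∑ σ : Equiv.Perm (Fin m),
        ((Equiv.Perm.sign σ : ℤ) : ℝ) * (M.1.det * ∏ i, M.1 (σ i) i) ∂μ = 1 := by
      simp [h1]
    rw [integral_finsetSum _ fun c _ => integrable_of_cont μ (by fun_prop)] at h3
    rw [← h3]
    refine Finset.sum_congr rfl fun σ _ => ?_
    rw [integral_const_mul, hperm, ← mul_assoc, ← Int.cast_mul]
    simp
  have hfun : ∀ c : Fin m → Fin m, ¬ Function.Bijective c →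
      ∫ M, M.1.det * ∏ j, M.1 (c j) (c j) ∂μ = 0 := by
    intro c hc
    have : ∃ b, ∀ j, c j ≠ b := by
      by_contra! h
      exact hc (Finite.surjective_iff_bijective.mp h)
    obtain ⟨b, hb⟩ := this
    have h := integral_mul_left_eq_self (μ := μ)
      (fun M : orthogonalGroup (Fin m) ℝ => M.1.det * ∏ j, M.1 (c j) (c j)) (flipO b)
    simp only [det_flipO_mul, flipO_mul_apply b _ (hb _), neg_mul, integral_neg] at h
    linarith
  simp only [trace_pow_eq, Finset.mul_sum]
  rw [integral_finsetSum _ fun c _ => integrable_of_cont μ (by fun_prop), ← hdet]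
  symm
  refine Finset.sum_of_injOn (fun σ : Equiv.Perm (Fin m) => (σ : Fin m → Fin m))
    (DFunLike.coe_injective.injOn) (by simp) ?_ ?_
  · intro c _ hc
    refine hfun c fun hbij => hc ?_
    exact ⟨Equiv.ofBijective c hbij, by simp, rfl⟩
  · intro σ _
    congr 1
    ext M
    congr 1
    exact (Equiv.prod_comp σ fun i => M.1 i i).symm


/-! ### Passing from moments to asymptotics -/

/-- The power series coefficients of `exp (x ^ 2 / 2)`. -/
def gaussCoeff : ℕ → ℝ
  | 0 => 1
  | 1 => 0
  | k + 2 => gaussCoeff k / (k + 2)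

/-- The moments of the trace up to order `m` are those of a standard Gaussian. -/
lemma moment_eq (k : ℕ) (hk : k ≤ m) :
    ∫ M, M.1.trace ^ k ∂μ = k.factorial * gaussCoeff k := by
  induction k using Nat.strong_induction_on with
  | _ k ih =>
    match k with
    | 0 => simp [gaussCoeff]
    | 1 => simpa [gaussCoeff] using moment_one μ
    | k + 2 =>
      rw [moment_rec μ k hk, ih k (by omega) (by omega), gaussCoeff, Nat.factorial_succ,
        Nat.factorial_succ]
      push_cast
      field_simp
      ring

lemma gaussCoeff_pair (p : ℕ) :
    gaussCoeff (2 * p) = (1 / 2) ^ p / p.factorial ∧ gaussCoeff (2 * p + 1) = 0 := by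
  induction p with
  | zero => simp [gaussCoeff]
  | succ p ih =>
    rw [show 2 * (p + 1) = 2 * p + 2 by ring, show 2 * p + 2 + 1 = (2 * p + 1) + 2 by ring]
    simp only [gaussCoeff, ih]
    refine ⟨?_, by simp⟩
    rw [Nat.factorial_succ]
    push_cast
    field_simp
    ring

lemma sum_gaussCoeff (n : ℕ) (x : ℝ) : ∑ k ∈ Finset.range (2 * n), gaussCoeff k * x ^ k =
    ∑ j ∈ Finset.range n, (x ^ 2 / 2) ^ j / j.factorial := by
  induction n with
  | zero => simp
  | succ n ih =>
    rw [show 2 * (n + 1) = 2 * n + 1 + 1 by ring, Finset.sum_range_succ, Finset.sum_range_succ,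
      Finset.sum_range_succ, ih, (gaussCoeff_pair n).1, (gaussCoeff_pair n).2, zero_mul, add_zero,
      pow_mul]
    congr 1
    rw [div_pow, div_pow]
    field_simp
    simp

open Asymptotics Topology Filter

lemma pow_isBigO {a b : ℕ} (h : b ≤ a) : (fun x : ℝ => x ^ a) =O[𝓝 0] (fun x : ℝ => x ^ b) := by
  refine IsBigO.of_bound 1 ?_
  filter_upwards [Metric.ball_mem_nhds (0 : ℝ) one_pos] with x hx
  have hx' : ‖x‖ ≤ 1 := by simpa using (mem_ball_zero_iff.mp hx).le
  rw [norm_pow, norm_pow, one_mul]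
  exact pow_le_pow_of_le_one (norm_nonneg x) hx' h

lemma exp_taylor_isBigO (n : ℕ) (hn : 0 < n) :
    (fun y : ℝ => Real.exp y - ∑ j ∈ Finset.range n, y ^ j / j.factorial)
      =O[𝓝 0] (fun y => y ^ n) := by
  refine IsBigO.of_bound (n.succ / (n.factorial * n)) ?_
  have : ∀ᶠ y : ℝ in 𝓝 0, |y| < 1 := by
    have := Metric.ball_mem_nhds (0 : ℝ) one_pos
    filter_upwards [this] with y hy
    simpa using hy
  filter_upwards [this] with y hy
  rw [norm_pow, mul_comm, Real.norm_eq_abs, Real.norm_eq_abs]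
  exact Real.exp_bound hy.le hn

lemma exp_sq_isBigO (n : ℕ) (hn : 0 < n) :
    (fun x : ℝ => Real.exp (x ^ 2 / 2) - ∑ k ∈ Finset.range n, gaussCoeff k * x ^ k)
      =O[𝓝 0] (fun x => x ^ n) := by
  have ht : Tendsto (fun x : ℝ => x ^ 2 / 2) (𝓝 0) (𝓝 0) := by
    have : Continuous (fun x : ℝ => x ^ 2 / 2) := by fun_prop
    simpa using this.tendsto 0
  have h1 := (exp_taylor_isBigO n hn).comp_tendsto ht
  have h2 : ((fun y : ℝ => y ^ n) ∘ fun x : ℝ => x ^ 2 / 2) =O[𝓝 0] (fun x : ℝ => x ^ n) := by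
    have : ((fun y : ℝ => y ^ n) ∘ fun x : ℝ => x ^ 2 / 2) =
        fun x : ℝ => (1 / 2) ^ n * x ^ (2 * n) := by
      ext x
      simp only [Function.comp, div_pow, ← pow_mul]
      simp
      ring
    rw [this]
    exact (pow_isBigO (by omega)).const_mul_left _
  have h3 : (fun x : ℝ => ∑ k ∈ Finset.Ico n (2 * n), gaussCoeff k * x ^ k)
      =O[𝓝 0] (fun x => x ^ n) :=
    IsBigO.fun_sum fun k hk => (pow_isBigO (Finset.mem_Ico.mp hk).1).const_mul_left _
  refine ((h1.trans h2).add h3).congr_left fun x => ?_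
  simp only [Function.comp]
  rw [← sum_gaussCoeff, ← Finset.sum_range_add_sum_Ico _ (by omega : n ≤ 2 * n)]
  ring

lemma abs_trace_le (M : orthogonalGroup (Fin m) ℝ) : |M.1.trace| ≤ m := by
  refine (Finset.abs_sum_le_sum_abs _ _).trans ?_
  refine (Finset.sum_le_sum fun i _ => abs_entry_le M i i).trans ?_
  simp

/-- The integral of `exp (x tr M)` against `1 + ε det M`: twice the integral over the component
`det M = ε` when `ε = ±1`, and the integral over the whole group when `ε = 0`. -/
def detExp (ε x : ℝ) : ℝ := ∫ M, (1 + ε * M.1.det) * Real.exp (x * M.1.trace) ∂μ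

/-- The degree `m` Taylor polynomial of `exp (x tr M)` integrates to that of `exp (x ^ 2 / 2)`,
corrected in degree `m` only. -/
lemma detExp_poly (ε x : ℝ) :
    ∫ M, (1 + ε * M.1.det) * ∑ k ∈ Finset.range (m + 1), (x * M.1.trace) ^ k / k.factorial ∂μ =
      ∑ k ∈ Finset.range (m + 1), gaussCoeff k * x ^ k + ε * (x ^ m / m.factorial) := by
  have hk : ∀ k ∈ Finset.range (m + 1), ∫ M, (1 + ε * M.1.det) *
      ((x * M.1.trace) ^ k / k.factorial) ∂μ =
      gaussCoeff k * x ^ k + if k = m then ε * (x ^ m / m.factorial) else 0 := by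
    intro k hk
    have h1 : ∀ M : orthogonalGroup (Fin m) ℝ, (1 + ε * M.1.det) *
        ((x * M.1.trace) ^ k / k.factorial) = x ^ k / k.factorial * M.1.trace ^ k +
          ε * (x ^ k / k.factorial) * (M.1.det * M.1.trace ^ k) := by
      intro M
      rw [mul_pow]
      ring
    simp only [h1]
    have hkm : k ≤ m := by simpa [Nat.lt_succ_iff] using hk
    rw [integral_add (integrable_of_cont μ (by fun_prop)) (integrable_of_cont μ (by fun_prop)),
      integral_const_mul, integral_const_mul, moment_eq μ k hkm]
    have hf : (k.factorial : ℝ) ≠ 0 := by positivity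
    congr 1
    · field_simp
    · rcases hkm.lt_or_eq with h | rfl
      · rw [det_moment_lt μ h, if_neg h.ne, mul_zero]
      · rw [det_moment_eq, if_pos rfl, mul_one]
  simp only [Finset.mul_sum]
  rw [integral_finsetSum _ fun k _ => integrable_of_cont μ (by fun_prop), Finset.sum_congr rfl hk,
    Finset.sum_add_distrib]
  simp

lemma detExp_isBigO_poly {ε : ℝ} (hε : |ε| ≤ 1) :
    (fun x => detExp μ ε x -
      (∑ k ∈ Finset.range (m + 1), gaussCoeff k * x ^ k + ε * (x ^ m / m.factorial)))
      =O[𝓝 0] (fun x => x ^ (m + 1)) := by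
  have ht : ∀ᶠ x : ℝ in 𝓝 0, |x| * m < 1 := by
    have : Continuous fun x : ℝ => |x| * m := by fun_prop
    exact (this.tendsto 0).eventually (Iio_mem_nhds (by simp))
  set K : ℝ := (m + 1).succ / ((m + 1).factorial * (m + 1 : ℕ)) with hK
  have hK0 : 0 ≤ K := by positivity
  refine IsBigO.of_bound (2 * (m ^ (m + 1) * K)) ?_
  filter_upwards [ht] with x hx
  rw [← detExp_poly μ, detExp, ← integral_sub (integrable_of_cont μ (by fun_prop))
    (integrable_of_cont μ (by fun_prop))]
  have hb : ∀ M : orthogonalGroup (Fin m) ℝ, ‖(1 + ε * M.1.det) * Real.exp (x * M.1.trace) -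
      (1 + ε * M.1.det) * ∑ k ∈ Finset.range (m + 1), (x * M.1.trace) ^ k / k.factorial‖ ≤
      2 * (m ^ (m + 1) * K) * ‖x ^ (m + 1)‖ := by
    intro M
    rw [← mul_sub, norm_mul, norm_pow]
    have h1 : ‖1 + ε * M.1.det‖ ≤ 2 := by
      rw [Real.norm_eq_abs]
      rcases abs_le.mp hε with ⟨h1, h2⟩
      rcases det_eq_or M with h | h <;> rw [h, abs_le] <;> constructor <;> linarith
    have hxt : |x * M.1.trace| ≤ |x| * m := by
      rw [abs_mul]
      exact mul_le_mul_of_nonneg_left (abs_trace_le M) (abs_nonneg x)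
    have h2 := Real.exp_bound (hxt.trans hx.le) (Nat.succ_pos m)
    have h3 : |x * M.1.trace| ^ (m + 1) ≤ |x| ^ (m + 1) * m ^ (m + 1) := by
      rw [← mul_pow]
      exact pow_le_pow_left₀ (abs_nonneg _) hxt _
    calc _ ≤ 2 * (|x * M.1.trace| ^ (m + 1) * K) :=
          mul_le_mul h1 h2 (abs_nonneg _) (by norm_num)
      _ ≤ 2 * (|x| ^ (m + 1) * m ^ (m + 1) * K) := by gcongr
      _ = _ := by rw [Real.norm_eq_abs]; ring
  simpa using norm_integral_le_of_norm_le_const (μ := μ) (.of_forall hb)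

/-- Replacing the Taylor polynomial by `exp (x ^ 2 / 2)` and moving the `x ^ m` term into the
exponent both cost only `O(x ^ (m + 1))`, the latter because `2 * m ≥ m + 1`. -/
lemma detExp_isBigO_exp (hm : 1 ≤ m) {ε : ℝ} (hε : |ε| ≤ 1) :
    (fun x => detExp μ ε x - Real.exp (x ^ 2 / 2 + ε * (x ^ m / m.factorial)))
      =O[𝓝 0] (fun x => x ^ (m + 1)) := by
  have hexp1 : (fun x : ℝ => Real.exp (x ^ 2 / 2) - 1) =O[𝓝 0] (fun x => x ^ 1) := by
    simpa [gaussCoeff] using exp_sq_isBigO 1 one_pos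
  have hy : (fun x : ℝ => ε * (x ^ m / m.factorial)) =O[𝓝 0] (fun x => x ^ m) := by
    have := (isBigO_refl (fun x : ℝ => x ^ m) (𝓝 0)).const_mul_left (ε / m.factorial)
    refine this.congr_left fun x => by ring
  have hyt : Tendsto (fun x : ℝ => ε * (x ^ m / m.factorial)) (𝓝 0) (𝓝 0) := by
    have : Continuous (fun x : ℝ => ε * (x ^ m / m.factorial)) := by fun_prop
    have h := this.tendsto 0
    rwa [zero_pow (by omega), zero_div, mul_zero] at h
  have h2 : (fun x : ℝ => Real.exp (ε * (x ^ m / m.factorial)) - 1 - ε * (x ^ m / m.factorial))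
      =O[𝓝 0] (fun x => x ^ (m + 1)) := by
    have h := (exp_taylor_isBigO 2 two_pos).comp_tendsto hyt
    have h' : ((fun y : ℝ => y ^ 2) ∘ fun x : ℝ => ε * (x ^ m / m.factorial))
        =O[𝓝 0] (fun x : ℝ => x ^ (m * 2)) := by
      simpa only [Function.comp_def, pow_mul] using hy.pow 2
    refine (((h.trans h').trans (pow_isBigO (by omega)))).congr_left fun x => ?_
    simp [Finset.sum_range_succ]
    ring
  have hbdd : (fun x : ℝ => Real.exp (x ^ 2 / 2)) =O[𝓝 0] (fun _ => (1 : ℝ)) := by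
    have : Continuous (fun x : ℝ => Real.exp (x ^ 2 / 2)) := by fun_prop
    exact (this.tendsto 0).isBigO_one ℝ
  have h3 := hbdd.mul h2
  have h4 : (fun x : ℝ => (Real.exp (x ^ 2 / 2) - 1) * (ε * (x ^ m / m.factorial)))
      =O[𝓝 0] (fun x => x ^ (m + 1)) :=
    (hexp1.mul hy).congr_right fun x => by ring
  simp only [one_mul] at h3
  refine (((detExp_isBigO_poly μ hε).sub (exp_sq_isBigO (m + 1) (by omega))).sub
    (h3.add h4)).congr_left fun x => ?_
  rw [Real.exp_add]
  ring

/-- Both arguments of the logarithm tend to `1`, near which `log` is Lipschitz. -/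
lemma log_detExp_isBigO (hm : 1 ≤ m) {ε : ℝ} (hε : |ε| ≤ 1) :
    (fun x => Real.log (detExp μ ε x) - (x ^ 2 / 2 + ε * (x ^ m / m.factorial)))
      =O[𝓝 0] (fun x => x ^ (m + 1)) := by
  have h := detExp_isBigO_exp μ hm hε
  have hB : Tendsto (fun x : ℝ => Real.exp (x ^ 2 / 2 + ε * (x ^ m / m.factorial))) (𝓝 0)
      (𝓝 1) := by
    have : Continuous (fun x : ℝ => Real.exp (x ^ 2 / 2 + ε * (x ^ m / m.factorial))) := by
      fun_prop
    have h := this.tendsto 0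
    rwa [zero_pow (by omega), zero_pow (by omega), zero_div, zero_div, mul_zero, zero_add,
      Real.exp_zero] at h
  have hA : Tendsto (fun x => detExp μ ε x) (𝓝 0) (𝓝 1) := by
    have h0 : Tendsto (fun x : ℝ => x ^ (m + 1)) (𝓝 0) (𝓝 0) := by
      simpa using (continuous_pow (M := ℝ) (m + 1)).tendsto 0
    simpa using (h.trans_tendsto h0).add hB
  have hlog := (Real.hasStrictDerivAt_log one_ne_zero).hasStrictFDerivAt.isBigO_sub.comp_tendsto
    (hA.prodMk_nhds hB)
  refine (hlog.trans h).congr_left fun x => ?_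
  simp [Function.comp]

lemma expO_eq_detExp {ε : ℝ} (hε : ε = 1 ∨ ε = -1) (x : ℝ) :
    expO m μ ε (fun M => Real.exp (x * M.1.trace)) = detExp μ ε x := by
  rw [expO, detExp, ← integral_const_mul]
  congr 1
  ext M
  rcases hε with rfl | rfl <;> rcases det_eq_or M with h | h <;> rw [h] <;> norm_num

lemma exists_bound_of_isBigO {f : ℝ → ℝ} {n : ℕ} (h : f =O[𝓝 0] (fun x => x ^ n)) :
    ∃ C > (0 : ℝ), ∃ δ > (0 : ℝ), ∀ x : ℝ, |x| < δ → |f x| ≤ C * |x| ^ n := by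
  obtain ⟨C, hC, hb⟩ := h.exists_pos
  obtain ⟨δ, hδ, hx⟩ := Metric.eventually_nhds_iff.mp hb.bound
  refine ⟨C, hC, δ, hδ, fun x h => ?_⟩
  simpa using hx (y := x) (by simpa using h)

end OrthogonalMoments

theorem orthogonal_integral_estimate_near_zero (ℓ : ℕ)
    (μ : Measure (Matrix.orthogonalGroup (Fin (ℓ + 1)) ℝ)) [IsProbabilityMeasure μ]
    [μ.IsMulLeftInvariant]
    (Ep Em : ℝ → ℝ)
    (hEp : ∀ x, Ep x = expO (ℓ + 1) μ 1
      (fun M => Real.exp (x * Matrix.trace (M : Matrix (Fin (ℓ + 1)) (Fin (ℓ + 1)) ℝ))))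
    (hEm : ∀ x, Em x = expO (ℓ + 1) μ (-1)
      (fun M => Real.exp (x * Matrix.trace (M : Matrix (Fin (ℓ + 1)) (Fin (ℓ + 1)) ℝ)))) :
    (∃ C > (0 : ℝ), ∃ δ > (0 : ℝ), ∀ x : ℝ, |x| < δ →
      |Real.log (Ep x) - (x ^ 2 / 2 + x ^ (ℓ + 1) / (Nat.factorial (ℓ + 1) : ℝ))|
        ≤ C * |x| ^ (ℓ + 2)) ∧
    (∃ C > (0 : ℝ), ∃ δ > (0 : ℝ), ∀ x : ℝ, |x| < δ →
      |Real.log (Em x) - (x ^ 2 / 2 - x ^ (ℓ + 1) / (Nat.factorial (ℓ + 1) : ℝ))|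
        ≤ C * |x| ^ (ℓ + 2)) ∧
    (∃ C > (0 : ℝ), ∃ δ > (0 : ℝ), ∀ x : ℝ, |x| < δ → ∃ r : ℝ,
      |r| ≤ C * |x| ^ (ℓ + 2) ∧ Ep x + Em x = 2 * Real.exp (x ^ 2 / 2 + r)) := by
  have ep : ∀ x, Ep x = OrthogonalMoments.detExp μ 1 x := fun x =>
    (hEp x).trans (OrthogonalMoments.expO_eq_detExp μ (Or.inl rfl) x)
  have em : ∀ x, Em x = OrthogonalMoments.detExp μ (-1) x := fun x =>
    (hEm x).trans (OrthogonalMoments.expO_eq_detExp μ (Or.inr rfl) x)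
  have hm : 1 ≤ ℓ + 1 := by omega
  refine ⟨?_, ?_, ?_⟩
  · refine OrthogonalMoments.exists_bound_of_isBigO
      ((OrthogonalMoments.log_detExp_isBigO μ hm (ε := 1) (by simp)).congr_left fun x => ?_)
    rw [ep, one_mul]
  · refine OrthogonalMoments.exists_bound_of_isBigO
      ((OrthogonalMoments.log_detExp_isBigO μ hm (ε := -1) (by simp)).congr_left fun x => ?_)
    rw [em]
    ring
  · obtain ⟨C, hC, δ, hδ, h⟩ := OrthogonalMoments.exists_bound_of_isBigO
      (OrthogonalMoments.log_detExp_isBigO μ hm (ε := 0) (by simp))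
    refine ⟨C, hC, δ, hδ, fun x hx => ⟨_, h x hx, ?_⟩⟩
    have hpos : 0 < OrthogonalMoments.detExp μ 0 x := by
      simp only [OrthogonalMoments.detExp, zero_mul, add_zero, one_mul]
      exact integral_exp_pos (OrthogonalMoments.integrable_of_cont μ (by fun_prop))
    rw [zero_mul, add_zero, add_sub_cancel, Real.exp_log hpos, ep, em]
    simp only [OrthogonalMoments.detExp]
    rw [← integral_add (OrthogonalMoments.integrable_of_cont μ (by fun_prop))
      (OrthogonalMoments.integrable_of_cont μ (by fun_prop)), ← integral_const_mul]
    congr 1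
    ext M
    ring
end
end
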